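/- (Saturation for Littlewood–Richardson coefficients) Let λ, μ, ν be partitions with at most n parts such that |λ| + |μ| = |ν|. If for some positive integer m the Littlewood–Richardson coefficient c^{mν}_{mλ, mμ} is nonzero, then c^{ν}_{λμ} is nonzero. -/

import Mathlib

/-!
(Saturation for Littlewood–Richardson coefficients.)  Let `λ, μ, ν` be partitions with at most
`n` parts such that `|λ| + |μ| = |ν|`.  If for some positive integer `m` the Littlewood–Richardson
coefficient `c^{mν}_{mλ, mμ}` is nonzero, then `c^ν_{λμ}` is nonzero.

The Littlewood–Richardson coefficient `c^ν_{λμ}` is the multiplicity of `V(ν)` in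
`V(λ) ⊗ V(μ)`; under the hypothesis `|λ| + |μ| = |ν|` this multiplicity is the same for
`GL(n)` and for `SL(n)`.  Nonvanishing of the multiplicity of `V(a)` in a (completely reducible)
representation is equivalent to the existence of a highest weight vector of weight `a`
(the predicate `Occurs` below), where partitions are viewed as characters of the diagonal torus.
-/

open scoped TensorProduct
abbrev SL (n : ℕ) := Matrix.SpecialLinearGroup (Fin n) ℂ

section Defs

variable {n : ℕ} {V W : Type*} [AddCommGroup V] [Module ℂ V] [AddCommGroup W] [Module ℂ W]

/-- A matrix in `SL(n)` lying in the standard maximal torus (diagonal matrices). -/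
def SLIsDiag (g : SL n) : Prop := ∀ i j, i ≠ j → g.val i j = 0

/-- A matrix in `SL(n)` lying in the unipotent radical of the standard Borel
(upper triangular, 1's on the diagonal). -/
def SLIsUniUpper (g : SL n) : Prop :=
  (∀ i, g.val i i = 1) ∧ ∀ i j : Fin n, j < i → g.val i j = 0

/-- `v` is a highest weight vector of weight `a` (a character of the diagonal torus,
`diag d ↦ ∏ dᵢ^{aᵢ}`): it is nonzero, fixed by the unipotent radical of the Borel, and the
torus acts on it through the character `a`. -/
def IsHWVector (ρ : Representation ℂ (SL n) V) (a : Fin n → ℤ) (v : V) : Prop :=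
  v ≠ 0 ∧ (∀ g, SLIsUniUpper g → ρ g v = v) ∧
    ∀ g, SLIsDiag g → ρ g v = (∏ i, g.val i i ^ a i) • v

/-- The irreducible representation `V(a)` of highest weight `a` occurs in `ρ`:
equivalently (for completely reducible `ρ`), `ρ` has a highest weight vector of weight `a`. -/
def Occurs (ρ : Representation ℂ (SL n) V) (a : Fin n → ℤ) : Prop := ∃ v, IsHWVector ρ a v

/-- `ρ` is irreducible: `V ≠ 0` and the only invariant subspaces are `⊥` and `⊤`. -/
def RepIsIrreducible (ρ : Representation ℂ (SL n) V) : Prop :=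
  (∃ v : V, v ≠ 0) ∧ ∀ p : Submodule ℂ V, (∀ g, ∀ x ∈ p, ρ g x ∈ p) → p = ⊥ ∨ p = ⊤

/-- The space of invariants `V^G` is nonzero. -/
def HasInvariant (ρ : Representation ℂ (SL n) V) : Prop := ∃ v : V, v ≠ 0 ∧ ∀ g, ρ g v = v

/-- Dominance of the weight `a` (for the standard choice of positive roots). -/
def SLDominant (a : Fin n → ℤ) : Prop := ∀ i j : Fin n, i ≤ j → a j ≤ a i

/-- The tensor product of a finite family of representations of `SL(n)`,
with the diagonal action. -/
noncomputable def piTensorRep {r : ℕ} {V : Fin r → Type*} [∀ i, AddCommGroup (V i)]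
    [∀ i, Module ℂ (V i)] (ρ : ∀ i, Representation ℂ (SL n) (V i)) :
    Representation ℂ (SL n) (⨂[ℂ] i, V i) where
  toFun g := PiTensorProduct.map fun i => ρ i g
  map_one' := by simp
  map_mul' g h := by
    simpa using PiTensorProduct.map_mul (fun i => ρ i g) (fun i => ρ i h)

/-- The tensor product of two representations of `SL(n)` with the diagonal action. -/
noncomputable def tensorRep2 (ρ : Representation ℂ (SL n) V) (σ : Representation ℂ (SL n) W) :
    Representation ℂ (SL n) (V ⊗[ℂ] W) := ρ.tprod σ

end Defs

/-- A partition with at most `n` parts: a non-increasing vector of naturals. -/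
def IsPartition {n : ℕ} (a : Fin n → ℕ) : Prop := ∀ i j : Fin n, i ≤ j → a j ≤ a i

/-!
A highest weight vector of weight `mν` in `V(mλ) ⊗ V(mμ)` amounts to a function `F` of two matrices
that transforms by the characters `mλ` and `mμ` of the upper triangular group under separate
translations, and by `mν` under simultaneous translation. Degenerating `F` along one-parameter
subgroups at a pair where it does not vanish shows that three flags satisfy the semistability
(Horn-type) inequalities for `mλ`, `mμ` and the complement of `mν`. These inequalities are
homogeneous in the weights, so the factor `m` cancels.

Following Belkale, consider the linear conditions on maps `Z : ℂⁿ → ℂʳ` requiring that the `j`-th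
vector of the `i`-th flag go into a prescribed step of the `i`-th flag of the target. At a generic
choice of flags with a solution `Z` of maximal rank, every first-order deformation of the flags
lifts to a deformation of `Z`; comparing ranks reduces the independence of the conditions to the
same question on the kernel of `Z`, where semistability persists and the dimension is smaller. If
`Z = 0`, the conditions have no nonzero solution, and semistability bounds their number by that
of the unknowns. So the conditions are generically independent. When `|λ| + |μ| = |ν|` there are as
many of them as unknowns, and their determinant is a nonzero polynomial in two matrices with the
covariance attached to `λ`, `μ`, `ν`. Paired through the apolar form with the matrix coefficients of
`V(λ)` and `V(μ)`, it gives a highest weight vector of weight `ν` in `V(λ) ⊗ V(μ)`.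
-/

namespace LittlewoodRichardson

open Filter Module Submodule Topology

/-! ### Generic rank -/

section GenericRank

variable {P E F : Type*} [NormedAddCommGroup P] [NormedSpace ℂ P]
  [NormedAddCommGroup E] [NormedSpace ℂ E] [NormedAddCommGroup F] [NormedSpace ℂ F]

theorem dense_setOf_ne_zero {f : P → ℂ} (hf : Differentiable ℂ f) {p₁ : P} (h : f p₁ ≠ 0) :
    Dense {p | f p ≠ 0} := by
  rw [dense_iff_inter_open]
  rintro U hU ⟨p, hp⟩
  by_contra! hdisj
  have hzero : ∀ q ∈ U, f q = 0 := fun q hq => by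
    by_contra hne
    exact (Set.eq_empty_iff_forall_notMem.1 hdisj) q ⟨hq, hne⟩
  let γ : ℂ → P := fun t => p + t • (p₁ - p)
  have hγ : Differentiable ℂ γ := by fun_prop
  have hfγ : AnalyticOnNhd ℂ (f ∘ γ) Set.univ :=
    (hf.comp hγ).differentiableOn.analyticOnNhd isOpen_univ
  have hnear : f ∘ γ =ᶠ[𝓝 0] (0 : ℂ → ℂ) := by
    have : ∀ᶠ t in 𝓝 (0 : ℂ), γ t ∈ U :=
      hγ.continuous.continuousAt.eventually (hU.mem_nhds (by simpa [γ] using hp))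
    exact this.mono fun t ht => hzero _ ht
  have hline := hfγ.eqOn_of_preconnected_of_eventuallyEq
    (analyticOnNhd_const (v := (0 : ℂ))) isPreconnected_univ (Set.mem_univ 0) hnear
  exact h (by simpa [γ] using hline (Set.mem_univ (1 : ℂ)))

theorem dense_setOf_linearIndependent [FiniteDimensional ℂ F] {ι : Type*} [Finite ι]
    {w : P → ι → F} (hw : ∀ i, Differentiable ℂ fun p => w p i) {p₁ : P}
    (h : LinearIndependent ℂ (w p₁)) : Dense {p | LinearIndependent ℂ (w p)} := by
  classical
  have := Fintype.ofFinite ι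
  obtain ⟨β, hβ⟩ := (Fintype.linearCombination ℂ (w p₁)).exists_leftInverse_of_injective
    (LinearMap.ker_eq_bot.2 (linearIndependent_iff_injective_fintypeLinearCombination.1 h))
  let B : P → Matrix ι ι ℂ := fun p => Matrix.of fun i j => β (w p i) j
  have hB : ∀ i j, Differentiable ℂ fun p => B p i j := fun i j =>
    differentiable_pi.1 (β.toContinuousLinearMap.differentiable.comp (hw i)) j
  have hdet : Differentiable ℂ fun p => (B p).det := by
    simp only [Matrix.det_apply]
    fun_prop
  have hB₁ : B p₁ = 1 := by
    ext i j
    have hi := congrFun (LinearMap.congr_fun hβ (Pi.single i 1)) j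
    simpa [B, Matrix.one_apply, Pi.single_apply, eq_comm,
      Fintype.linearCombination_apply_single] using hi
  refine (dense_setOf_ne_zero hdet (p₁ := p₁) (by simp [hB₁])).mono fun p hp => ?_
  refine LinearIndependent.of_comp β ?_
  change LinearIndependent ℂ (B p).row
  rw [Matrix.linearIndependent_rows_iff_isUnit, Matrix.isUnit_iff_isUnit_det]
  exact isUnit_iff_ne_zero.2 hp

theorem isOpen_setOf_le_finrank_range [FiniteDimensional ℂ E] {X : Type*} [TopologicalSpace X]
    {N : X → E →L[ℂ] F} (hN : Continuous N) (k : ℕ) :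
    IsOpen {p | k ≤ finrank ℂ (N p).range} := by
  convert (isOpen_setOfPred_nat_le_rank (𝕜 := ℂ) (E := E) (F := F) k).preimage hN using 1
  ext p
  simp [LinearMap.rank, ← finrank_eq_rank]

variable [FiniteDimensional ℂ F]

theorem dense_setOf_le_finrank_range {N : P → E →L[ℂ] F} (hN : Differentiable ℂ N) {p₁ : P}
    {k : ℕ} (hk : k ≤ finrank ℂ (N p₁).range) : Dense {p | k ≤ finrank ℂ (N p).range} := by
  let b := finBasis ℂ (N p₁).range
  choose x hx using fun i => (b i).2
  have hx₁ : LinearIndependent ℂ fun i => N p₁ (x i) := by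
    have hb : (fun i => N p₁ (x i)) = (N p₁).range.subtype ∘ b := funext hx
    exact hb ▸ b.linearIndependent.map' _ (Submodule.ker_subtype _)
  refine (dense_setOf_linearIndependent (w := fun p i => N p (x i)) (fun i => by fun_prop)
    hx₁).mono fun p hp => hk.trans ?_
  rw [← Fintype.card_fin (finrank ℂ (N p₁).range), ← finrank_span_eq_card hp]
  refine Submodule.finrank_mono (Submodule.span_le.2 ?_)
  rintro _ ⟨i, rfl⟩
  exact ⟨x i, rfl⟩

theorem surjective_iff_finrank_le_finrank_range (f : E →L[ℂ] F) :
    Function.Surjective f ↔ finrank ℂ F ≤ finrank ℂ f.range := by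
  rw [← ContinuousLinearMap.coe_coe, ← LinearMap.range_eq_top]
  exact ⟨fun h => by rw [h, finrank_top],
    fun h => Submodule.eq_top_of_finrank_eq (le_antisymm (Submodule.finrank_le _) h)⟩

theorem dense_setOf_surjective {N : P → E →L[ℂ] F} (hN : Differentiable ℂ N) {p₁ : P}
    (h : Function.Surjective (N p₁)) : Dense {p | Function.Surjective (N p)} := by
  simp only [surjective_iff_finrank_le_finrank_range] at h ⊢
  exact dense_setOf_le_finrank_range hN h

theorem isOpen_setOf_surjective [FiniteDimensional ℂ E] {X : Type*} [TopologicalSpace X]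
    {N : X → E →L[ℂ] F} (hN : Continuous N) : IsOpen {p | Function.Surjective (N p)} := by
  simp only [surjective_iff_finrank_le_finrank_range]
  exact isOpen_setOf_le_finrank_range hN _

end GenericRank

section KernelCurve

theorem exists_generalized_inverse {K E F : Type*} [Field K] [AddCommGroup E] [Module K E]
    [AddCommGroup F] [Module K F] (N : E →ₗ[K] F) : ∃ R : F →ₗ[K] E, ∀ x, N (R (N x)) = N x := by
  obtain ⟨s, hs⟩ := N.rangeRestrict.exists_rightInverse_of_surjective N.range_rangeRestrict
  obtain ⟨p, hp⟩ := N.range.subtype.exists_leftInverse_of_injective (Submodule.ker_subtype _)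
  refine ⟨s ∘ₗ p, fun x => ?_⟩
  have hpx : p (N x) = N.rangeRestrict x := LinearMap.congr_fun hp (N.rangeRestrict x)
  have hsx : N.rangeRestrict (s (N.rangeRestrict x)) = N.rangeRestrict x :=
    LinearMap.congr_fun hs (N.rangeRestrict x)
  simpa [hpx] using congrArg Subtype.val hsx

theorem comap_ker_le_ker {K E F : Type*} [Field K] [AddCommGroup E] [Module K E]
    [FiniteDimensional K E] [AddCommGroup F] [Module K F] {N₀ N : E →ₗ[K] F} {R : F →ₗ[K] E}
    (hR : ∀ x, N₀ (R (N₀ x)) = N₀ x) (hinj : Function.Injective (1 + R ∘ₗ (N - N₀) : E →ₗ[K] E))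
    (hrank : finrank K N.range ≤ finrank K N₀.range) :
    N₀.ker.comap (1 + R ∘ₗ (N - N₀)) ≤ N.ker := by
  set Θ := 1 + R ∘ₗ (N - N₀) with hΘ
  have hker : N.ker ≤ N₀.ker.comap Θ := fun x hx => by
    simp_all [Submodule.mem_comap]
  have hdim : finrank K (N₀.ker.comap Θ) ≤ finrank K N₀.ker :=
    LinearMap.finrank_le_finrank_of_injective (f := Θ.restrict fun _ hx => hx)
      fun x y hxy => Subtype.ext (hinj (congrArg Subtype.val hxy))
  have hN := N.finrank_range_add_finrank_ker
  have hN₀ := N₀.finrank_range_add_finrank_ker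
  exact (Submodule.eq_of_le_of_finrank_le hker (by omega)).ge

variable {E F : Type*} [NormedAddCommGroup E] [NormedSpace ℂ E] [FiniteDimensional ℂ E]
  [NormedAddCommGroup F] [NormedSpace ℂ F] [FiniteDimensional ℂ F]

theorem exists_kernel_curve {N : ℂ → E →L[ℂ] F} (hN : DifferentiableAt ℂ N 0)
    (hrank : ∀ᶠ t in 𝓝 (0 : ℂ), finrank ℂ (N t).range ≤ finrank ℂ (N 0).range)
    {z₀ : E} (hz₀ : N 0 z₀ = 0) :
    ∃ z : ℂ → E, DifferentiableAt ℂ z 0 ∧ z 0 = z₀ ∧ ∀ᶠ t in 𝓝 (0 : ℂ), N t (z t) = 0 := by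
  obtain ⟨R', hR⟩ := exists_generalized_inverse (N 0).toLinearMap
  let R : F →L[ℂ] E := R'.toContinuousLinearMap
  have : CompleteSpace E := FiniteDimensional.complete ℂ E
  let Θ : ℂ → E →L[ℂ] E := fun t => 1 + R.comp (N t - N 0)
  have hΘ₀ : Θ 0 = 1 := by simp [Θ]
  have hΘunit : IsUnit (Θ 0) := by simp [hΘ₀]
  have hΘ : DifferentiableAt ℂ Θ 0 :=
    (differentiableAt_const _).add
      ((differentiableAt_const _).clm_comp (hN.sub (differentiableAt_const _)))
  refine ⟨fun t => Ring.inverse (Θ t) z₀,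
    (DifferentiableAt.inverse hΘ hΘunit).clm_apply (differentiableAt_const _), by simp [hΘ₀], ?_⟩
  filter_upwards [hrank, hΘ.continuousAt.eventually (Units.isOpen.mem_nhds hΘunit)] with t ht hut
  have hleft (x : E) : Ring.inverse (Θ t) (Θ t x) = x :=
    congrArg (fun f : E →L[ℂ] E => f x) (Ring.inverse_mul_cancel _ hut)
  have hright : Θ t (Ring.inverse (Θ t) z₀) = z₀ :=
    congrArg (fun f : E →L[ℂ] E => f z₀) (Ring.mul_inverse_cancel _ hut)
  refine comap_ker_le_ker hR (Function.LeftInverse.injective hleft) ht ?_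
  change N 0 (Θ t (Ring.inverse (Θ t) z₀)) = 0
  rw [hright, hz₀]

theorem deriv_apply_mem_range {Z : ℂ → E →L[ℂ] F} (hZ : DifferentiableAt ℂ Z 0)
    (hrank : ∀ᶠ t in 𝓝 (0 : ℂ), finrank ℂ (Z t).range ≤ finrank ℂ (Z 0).range)
    {w : E} (hw : Z 0 w = 0) : deriv Z 0 w ∈ (Z 0).range := by
  obtain ⟨z, hz, rfl, hzero⟩ := exists_kernel_curve hZ hrank hw
  have hprod : HasDerivAt (fun t => Z t (z t)) (deriv Z 0 (z 0) + Z 0 (deriv z 0)) 0 :=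
    hZ.hasDerivAt.clm_apply hz.hasDerivAt
  have hconst : HasDerivAt (fun t => Z t (z t)) 0 0 :=
    (hasDerivAt_const (0 : ℂ) (0 : F)).congr_of_eventuallyEq hzero
  refine ⟨-deriv z 0, ?_⟩
  rw [map_neg]
  exact (eq_neg_of_add_eq_zero_left (hprod.unique hconst)).symm

end KernelCurve

/-! ### Semistable systems of flags -/

section AdaptedBasis

variable {K W : Type*} [Field K] [AddCommGroup W] [Module K W]

theorem apply_mem_span_image_Iic {α : Type*} [Preorder α] (u : α → W) {i j : α} (h : i ≤ j) :
    u i ∈ span K (u '' Set.Iic j) := subset_span ⟨i, h, rfl⟩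

theorem span_image_Iic_mono {α : Type*} [Preorder α] (u : α → W) :
    Monotone fun j => span K (u '' Set.Iic j) :=
  fun _ _ hij => span_mono (Set.image_mono (Set.Iic_subset_Iic.2 hij))

theorem span_image_Iic_congr {α : Type*} [LinearOrder α] [WellFoundedLT α] {b u : α → W}
    (h : ∀ j, b j - u j ∈ span K (u '' Set.Iio j)) (j : α) :
    span K (b '' Set.Iic j) = span K (u '' Set.Iic j) := by
  refine le_antisymm (span_le.2 ?_) (span_le.2 ?_)
  · rintro _ ⟨i, hi, rfl⟩
    refine span_image_Iic_mono u hi ?_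
    rw [← sub_add_cancel (b i) (u i)]
    exact add_mem (span_mono (Set.image_mono Set.Iio_subset_Iic_self) (h i))
      (apply_mem_span_image_Iic u le_rfl)
  · suffices ∀ i, u i ∈ span K (b '' Set.Iic i) by
      rintro _ ⟨i, hi, rfl⟩
      exact span_image_Iic_mono b hi (this i)
    intro i
    induction i using WellFoundedLT.induction with
    | ind i ih =>
      have hlt : span K (u '' Set.Iio i) ≤ span K (b '' Set.Iic i) := by
        rw [span_le]
        rintro _ ⟨l, hl, rfl⟩
        exact span_image_Iic_mono b (le_of_lt hl) (ih l hl)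
      rw [← sub_sub_cancel (b i) (u i)]
      exact sub_mem (apply_mem_span_image_Iic b le_rfl) (hlt (h i))

theorem span_image_setOf_mem_eq {n : ℕ} {b : Fin n → W} (hb : span K (Set.range b) = ⊤)
    {S : Submodule K W} (hS : ∀ j, ∀ w ∈ S, w - b j ∈ span K (b '' Set.Iio j) → b j ∈ S) :
    span K (b '' {j | b j ∈ S}) = S := by
  refine le_antisymm (span_le.2 (Set.image_subset_iff.2 fun _ => id)) fun w hw => ?_
  suffices ∀ m ≤ n, ∀ w ∈ S, w ∈ span K (b '' {j | (j : ℕ) < m}) →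
      w ∈ span K (b '' {j | b j ∈ S}) from
    this n le_rfl w hw (by simp [hb])
  intro m
  induction m with
  | zero => intro _ w _ hw; simp_all
  | succ m ih =>
    intro hm w hwS hw
    have hset : {j : Fin n | (j : ℕ) < m + 1} = insert ⟨m, hm⟩ (Set.Iio ⟨m, hm⟩) := by
      ext j
      simp only [Set.mem_ofPred_eq, Set.mem_insert_iff, Set.mem_Iio, Fin.ext_iff, Fin.lt_def]
      omega
    have hIio : Set.Iio ⟨m, hm⟩ = {j : Fin n | (j : ℕ) < m} := rfl
    rw [hset, Set.image_insert_eq, mem_span_insert] at hw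
    obtain ⟨c, z, hz, rfl⟩ := hw
    by_cases hc : c = 0
    · exact ih (by omega) _ hwS (by simpa [hc, hIio] using hz)
    have hpivot : b ⟨m, hm⟩ ∈ S := by
      refine hS _ _ (S.smul_mem c⁻¹ hwS) ?_
      rw [smul_add, inv_smul_smul₀ hc, add_sub_cancel_left]
      exact smul_mem _ _ hz
    have hzS : z ∈ S := (add_mem_cancel_left (S.smul_mem c hpivot)).1 hwS
    exact add_mem (smul_mem _ _ (subset_span ⟨_, hpivot, rfl⟩)) (ih (by omega) z hzS hz)

theorem exists_adapted_basis [FiniteDimensional K W] {n : ℕ} {u : Fin n → W}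
    (hu : LinearIndependent K u) (hn : finrank K W = n) (S : Submodule K W) :
    ∃ (b : Fin n → W) (J : Fin (finrank K S) ↪o Fin n), LinearIndependent K b ∧
      (∀ j, span K (b '' Set.Iic j) = span K (u '' Set.Iic j)) ∧
      span K (Set.range (b ∘ J)) = S := by
  classical
  have hpivot : ∀ j, ∃ v, v - u j ∈ span K (u '' Set.Iio j) ∧
      ((∃ w ∈ S, w - u j ∈ span K (u '' Set.Iio j)) → v ∈ S) := fun j => by
    by_cases h : ∃ w ∈ S, w - u j ∈ span K (u '' Set.Iio j)
    · obtain ⟨w, hwS, hw⟩ := h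
      exact ⟨w, hw, fun _ => hwS⟩
    · exact ⟨u j, by simp, fun h' => absurd h' h⟩
  choose b hbu hbS using hpivot
  have hflag := span_image_Iic_congr hbu
  have hspan : span K (Set.range b) = ⊤ := by
    rw [eq_top_iff, ← hu.span_eq_top_of_card_eq_finrank' (by simp [hn]), span_le]
    rintro _ ⟨j, rfl⟩
    exact span_mono (Set.image_subset_range _ _)
      ((hflag j).ge (apply_mem_span_image_Iic u le_rfl))
  have hli : LinearIndependent K b :=
    linearIndependent_of_top_le_span_of_card_eq_finrank hspan.ge (by simp [hn])
  have hIio (j : Fin n) : span K (b '' Set.Iio j) ≤ span K (u '' Set.Iio j) := by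
    rw [span_le]
    rintro _ ⟨l, hl, rfl⟩
    exact span_mono (Set.image_mono (Set.Iic_subset_Iio.2 hl))
      ((hflag l).le (apply_mem_span_image_Iic b le_rfl))
  let P : Finset (Fin n) := {j | b j ∈ S}
  have hP : span K (b '' P) = S := by
    rw [show (P : Set (Fin n)) = {j | b j ∈ S} by simp [P]]
    refine span_image_setOf_mem_eq hspan fun j w hw hwj => hbS j ⟨w, hw, ?_⟩
    rw [← sub_add_sub_cancel]
    exact add_mem (hIio j hwj) (hbu j)
  have hcard : P.card = finrank K S := by
    rw [← congrArg (fun T : Submodule K W => finrank K T) hP, Set.image_eq_range]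
    simpa [Function.comp_def] using
      (finrank_span_eq_card (hli.comp ((↑) : P → Fin n) Subtype.val_injective)).symm
  refine ⟨b, P.orderEmbOfFin hcard, hli, hflag, ?_⟩
  rw [Set.range_comp, P.range_orderEmbOfFin hcard, hP]

end AdaptedBasis

section Semistability

variable {ι W X : Type*} [AddCommGroup W] [Module ℂ W] [AddCommGroup X] [Module ℂ X] {n d e : ℕ}

/-- The families `s i` are bases of one and the same subspace, and the `k`-th member of `s i` lies
in the step `J i k` of the flag spanned by `u i`; equivalently, this subspace belongs to the
Schubert varieties of positions `J i`. -/
structure InSchubertPosition (u : ι → Fin n → W) (J : ι → Fin d ↪o Fin n)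
    (s : ι → Fin d → W) : Prop where
  linearIndependent : ∀ i, LinearIndependent ℂ (s i)
  mem_span_range : ∀ i i' k, s i k ∈ span ℂ (Set.range (s i'))
  mem_flag : ∀ i k, s i k ∈ span ℂ (u i '' Set.Iic (J i k))

theorem InSchubertPosition.trans {u : ι → Fin n → W} {J : ι → Fin d ↪o Fin n} {f : X →ₗ[ℂ] W}
    (hf : Function.Injective f) {b : ι → Fin d → X}
    (hb : ∀ i k, f (b i k) ∈ span ℂ (u i '' Set.Iic (J i k))) {J' : ι → Fin e ↪o Fin d}
    {s : ι → Fin e → X} (hs : InSchubertPosition b J' s) :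
    InSchubertPosition u (fun i => (J' i).trans (J i)) (fun i k => f (s i k)) where
  linearIndependent i := (hs.linearIndependent i).map' f (LinearMap.ker_eq_bot.2 hf)
  mem_span_range i i' k := by
    have := mem_map_of_mem (f := f) (hs.mem_span_range i i' k)
    rwa [map_span, ← Set.range_comp] at this
  mem_flag i k := by
    have := mem_map_of_mem (f := f) (hs.mem_flag i k)
    rw [map_span] at this
    refine span_le.2 ?_ this
    rintro _ ⟨_, ⟨l, hl, rfl⟩, rfl⟩
    exact span_image_Iic_mono (u i) ((J i).monotone hl) (hb i l)

variable [Fintype ι]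

/-- Semistability of the flags spanned by the `u i` with respect to the weights `a i`, at slope
`r`: the Horn inequality holds for every subspace and every Schubert position it occupies. -/
def IsSemistable (a : ι → Fin n → ℕ) (r : ℕ) (u : ι → Fin n → W) : Prop :=
  ∀ ⦃d : ℕ⦄ ⦃J : ι → Fin d ↪o Fin n⦄ ⦃s : ι → Fin d → W⦄,
    InSchubertPosition u J s → ∑ i, ∑ k, a i (J i k) ≤ d * r

theorem IsSemistable.of_subspace {a : ι → Fin n → ℕ} {r : ℕ} {u : ι → Fin n → W}
    (h : IsSemistable a r u) {f : X →ₗ[ℂ] W} (hf : Function.Injective f) {b : ι → Fin d → X}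
    {J : ι → Fin d ↪o Fin n} (hb : ∀ i k, f (b i k) ∈ span ℂ (u i '' Set.Iic (J i k))) :
    IsSemistable (fun i k => a i (J i k)) r b :=
  fun _ _ _ hs => h (hs.trans hf hb)

theorem IsSemistable.sum_le [FiniteDimensional ℂ W] {a : ι → Fin n → ℕ} {r : ℕ}
    {u : ι → Fin n → W} (h : IsSemistable a r u) (hn : finrank ℂ W = n)
    (hu : ∀ i, LinearIndependent ℂ (u i)) : ∑ i, ∑ j, a i j ≤ n * r :=
  h (J := fun _ => RelEmbedding.refl _) (s := u)
    { linearIndependent := hu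
      mem_span_range := fun i i' k => by
        rw [(hu i').span_eq_top_of_card_eq_finrank' (by simp [hn])]
        trivial
      mem_flag := fun i k => apply_mem_span_image_Iic (u i) le_rfl }

end Semistability

section Openness

theorem mem_span_image_iff_det_update_eq_zero {K V α : Type*} [Field K] [AddCommGroup V]
    [Module K V] [Fintype α] [DecidableEq α] (e : Basis α K V) {u : α → V}
    (hu : LinearIndependent K u) {T : Set α} {s : V} :
    s ∈ span K (u '' T) ↔ ∀ l ∉ T, e.det (Function.update u l s) = 0 := by
  have := Module.Finite.of_basis e
  have hspan : ⊤ ≤ span K (Set.range u) :=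
    (hu.span_eq_top_of_card_eq_finrank' (finrank_eq_card_basis e).symm).ge
  have hdet : e.det u ≠ 0 := (e.is_basis_iff_det.1 ⟨hu, top_le_iff.1 hspan⟩).ne_zero
  let B := Basis.mk hu hspan
  have hrepr (l : α) : e.det (Function.update u l s) = e.det u * B.repr s l :=
    (LinearMap.congr_fun (e.det_smul_mk_coord_eq_det_update hu hspan l) s).symm
  have hmem := B.mem_span_image (m := s) (s := T)
  rw [Basis.coe_mk] at hmem
  simp only [hmem, hrepr, mul_eq_zero, hdet, false_or]
  refine ⟨fun h l hl => ?_, fun h l hl => ?_⟩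
  · by_contra hne
    exact hl (h (Finsupp.mem_support_iff.2 hne))
  · by_contra hl'
    exact Finsupp.mem_support_iff.1 hl (h l hl')

variable {ι : Type*} {E : Type*} [NormedAddCommGroup E] [InnerProductSpace ℂ E] {n d : ℕ}

theorem mem_span_range_iff_eq_sum_inner {α : Type*} [Fintype α] {t : α → E} (ht : Orthonormal ℂ t)
    {x : E} : x ∈ span ℂ (Set.range t) ↔ x = ∑ l, inner ℂ (t l) x • t l := by
  refine ⟨fun hx => ?_, fun hx => ?_⟩
  · obtain ⟨c, rfl⟩ := (mem_span_range_iff_exists_fun ℂ).1 hx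
    simp only [ht.inner_right_fintype]
  · rw [hx]
    exact sum_mem fun l _ => smul_mem _ _ (subset_span ⟨l, rfl⟩)

theorem exists_orthonormal_span_image_Iic {d : ℕ} {s : Fin d → E} (hs : LinearIndependent ℂ s) :
    ∃ t : Fin d → E, Orthonormal ℂ t ∧ span ℂ (Set.range t) = span ℂ (Set.range s) ∧
      ∀ k, t k ∈ span ℂ (s '' Set.Iic k) := by
  refine ⟨InnerProductSpace.gramSchmidtNormed ℂ s,
    InnerProductSpace.gramSchmidtNormed_orthonormal hs, ?_, fun k => ?_⟩
  · rw [InnerProductSpace.span_gramSchmidtNormed_range, InnerProductSpace.span_gramSchmidt]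
  · rw [← InnerProductSpace.span_gramSchmidt_Iic, ← InnerProductSpace.span_gramSchmidtNormed]
    exact apply_mem_span_image_Iic _ le_rfl

theorem InSchubertPosition.exists_orthonormal {u : ι → Fin n → E} {J : ι → Fin d ↪o Fin n}
    {s : ι → Fin d → E} (hs : InSchubertPosition u J s) :
    ∃ t, InSchubertPosition u J t ∧ ∀ i, Orthonormal ℂ (t i) := by
  choose t ht hspan hflag using fun i => exists_orthonormal_span_image_Iic (hs.linearIndependent i)
  refine ⟨t, ⟨fun i => (ht i).linearIndependent, fun i i' k => ?_, fun i k => ?_⟩, ht⟩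
  · have hle : span ℂ (Set.range (s i)) ≤ span ℂ (Set.range (s i')) := by
      rw [span_le]
      rintro _ ⟨l, rfl⟩
      exact hs.mem_span_range i i' l
    rw [hspan]
    exact hle (hspan i ▸ subset_span ⟨k, rfl⟩)
  · refine span_le.2 ?_ (hflag i k)
    rintro _ ⟨l, hl, rfl⟩
    exact span_image_Iic_mono (u i) ((J i).monotone hl) (hs.mem_flag i l)

theorem isOpen_setOf_forall_linearIndependent [Finite ι] :
    IsOpen {u : ι → Fin n → E | ∀ i, LinearIndependent ℂ (u i)} := by
  simp only [Set.ofPred_forall]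
  exact isOpen_iInter_of_finite fun i =>
    isOpen_setOfPred_linearIndependent.preimage (continuous_apply (A := fun _ => Fin n → E) i)

variable [FiniteDimensional ℂ E]

theorem continuous_basisDet {α : Type*} [Fintype α] [DecidableEq α] (e : Basis α ℂ E) :
    Continuous e.det := by
  simp only [funext e.det_apply]
  exact Continuous.matrix_det (continuous_matrix fun i j =>
    (LinearMap.continuous_of_finiteDimensional (e.coord i)).comp (continuous_apply j))

theorem isCompact_setOf_orthonormal_same_span [Finite ι] :
    IsCompact {s : ι → Fin d → E | (∀ i, Orthonormal ℂ (s i)) ∧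
      ∀ i i' k, s i k ∈ span ℂ (Set.range (s i'))} := by
  have := Fintype.ofFinite ι
  have hset : {s : ι → Fin d → E | (∀ i, Orthonormal ℂ (s i)) ∧
      ∀ i i' k, s i k ∈ span ℂ (Set.range (s i'))} =
      {s | (∀ i k l, inner ℂ (s i k) (s i l) = if k = l then (1 : ℂ) else 0) ∧
        ∀ i i' k, s i k = ∑ l, inner ℂ (s i' l) (s i k) • s i' l} := by
    ext s
    refine (and_congr_right fun hs => ?_).trans
      (and_congr_left' (forall_congr' fun i => orthonormal_iff_ite))
    exact forall_congr' fun i => forall_congr' fun i' => forall_congr' fun k =>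
      mem_span_range_iff_eq_sum_inner (hs i')
  have hcont (i : ι) (k : Fin d) : Continuous fun s : ι → Fin d → E => s i k := by fun_prop
  refine (isCompact_closedBall (0 : ι → Fin d → E) 1).of_isClosed_subset ?_ ?_
  · rw [hset]
    simp only [Set.ofPred_and, Set.ofPred_forall]
    refine IsClosed.inter ?_ ?_
    · exact isClosed_iInter fun i => isClosed_iInter fun k => isClosed_iInter fun l =>
        isClosed_eq ((hcont i k).inner (hcont i l)) continuous_const
    · exact isClosed_iInter fun i => isClosed_iInter fun i' => isClosed_iInter fun k =>
        isClosed_eq (hcont i k) (continuous_finsetSum _ fun l _ =>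
          ((hcont i' l).inner (hcont i k)).fun_smul (hcont i' l))
  · rintro s ⟨hs, -⟩
    simp only [mem_closedBall_zero_iff, pi_norm_le_iff_of_nonneg zero_le_one]
    exact fun i k => ((hs i).1 k).le

theorem isClosed_setOf_exists_orthonormal_det_update [Finite ι] (e : Basis (Fin n) ℂ E)
    (J : ι → Fin d ↪o Fin n) :
    IsClosed {u : ι → Fin n → E | ∃ s : ι → Fin d → E, ((∀ i, Orthonormal ℂ (s i)) ∧
      ∀ i i' k, s i k ∈ span ℂ (Set.range (s i'))) ∧
      ∀ i k l, J i k < l → e.det (Function.update (u i) l (s i k)) = 0} := by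
  set C := {s : ι → Fin d → E | (∀ i, Orthonormal ℂ (s i)) ∧
    ∀ i i' k, s i k ∈ span ℂ (Set.range (s i'))} with hC
  have : CompactSpace C := isCompact_iff_compactSpace.1 isCompact_setOf_orthonormal_same_span
  let R : Set ((ι → Fin n → E) × C) :=
    {p | ∀ i k l, J i k < l → e.det (Function.update (p.1 i) l (p.2.1 i k)) = 0}
  have hR : IsClosed R := by
    simp only [R, Set.ofPred_forall]
    refine isClosed_iInter fun i => isClosed_iInter fun k => isClosed_iInter fun l =>
      isClosed_iInter fun _ => isClosed_eq ((continuous_basisDet e).comp ?_) continuous_const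
    exact Continuous.update (by fun_prop) l
      ((continuous_apply_apply i k).comp (continuous_subtype_val.comp continuous_snd))
  convert isClosedMap_fst_of_compactSpace _ hR using 1
  ext u
  simp [R, hC]

theorem isOpen_setOf_isSemistable [Fintype ι] (hE : finrank ℂ E = n) (a : ι → Fin n → ℕ)
    (r : ℕ) :
    IsOpen {u : ι → Fin n → E | (∀ i, LinearIndependent ℂ (u i)) ∧ IsSemistable a r u} := by
  let e := finBasisOfFinrankEq ℂ E hE
  let C (d : Fin (n + 1)) (J : ι → Fin d ↪o Fin n) := {u : ι → Fin n → E | ∃ s : ι → Fin d → E,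
    ((∀ i, Orthonormal ℂ (s i)) ∧ ∀ i i' k, s i k ∈ span ℂ (Set.range (s i'))) ∧
    ∀ i k l, J i k < l → e.det (Function.update (u i) l (s i k)) = 0}
  have hC {d J u} (hu : ∀ i, LinearIndependent ℂ (u i)) :
      u ∈ C d J ↔ ∃ s, InSchubertPosition u J s := by
    have hflag (s : ι → Fin d → E) : (∀ i k, s i k ∈ span ℂ (u i '' Set.Iic (J i k))) ↔
        ∀ i k l, J i k < l → e.det (Function.update (u i) l (s i k)) = 0 := by
      simp only [mem_span_image_iff_det_update_eq_zero e (hu _), Set.mem_Iic, not_le]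
    refine ⟨fun ⟨s, ⟨hs, hss⟩, hdet⟩ => ⟨s, fun i => (hs i).linearIndependent, hss,
      (hflag s).2 hdet⟩, fun ⟨s, hs⟩ => ?_⟩
    obtain ⟨t, ht, hto⟩ := hs.exists_orthonormal
    exact ⟨t, ⟨hto, ht.mem_span_range⟩, (hflag t).1 ht.mem_flag⟩
  have hclosed : IsClosed (⋃ d : Fin (n + 1), ⋃ J : {J : ι → Fin d ↪o Fin n //
      (d : ℕ) * r < ∑ i, ∑ k, a i (J i k)}, C d J) :=
    isClosed_iUnion_of_finite fun d => isClosed_iUnion_of_finite fun J =>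
      isClosed_setOf_exists_orthonormal_det_update e J.1
  convert isOpen_setOf_forall_linearIndependent.sdiff hclosed using 1
  ext u
  refine and_congr_right fun hu => ⟨fun hss hmem => ?_, fun hmem d J s hs => ?_⟩
  · simp only [Set.mem_iUnion] at hmem
    obtain ⟨d, ⟨J, hJ⟩, hmem⟩ := hmem
    obtain ⟨s, hs⟩ := (hC hu).1 hmem
    exact hJ.not_ge (hss hs)
  · rcases isEmpty_or_nonempty ι with hι | ⟨⟨i⟩⟩
    · simp
    by_contra! hlt
    have hd : d ≤ n := by simpa using Fintype.card_le_of_embedding (J i).toEmbedding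
    exact hmem (Set.mem_iUnion.2 ⟨⟨d, by omega⟩, Set.mem_iUnion.2 ⟨⟨J, hlt⟩, (hC hu).2 ⟨s, hs⟩⟩⟩)

end Openness

section Evaluation

variable {K A B V W κ : Type*} [Field K] [AddCommGroup A] [Module K A] [AddCommGroup B] [Module K B]
  [AddCommGroup V] [Module K V] [AddCommGroup W] [Module K W]

/-- Evaluation of linear maps at the vectors `s x`, the value at `s x` being taken modulo `G x`. -/
def evalMod (s : κ → W) (G : κ → Submodule K V) : (W →ₗ[K] V) →ₗ[K] ∀ x, V ⧸ G x :=
  LinearMap.pi fun x => (G x).mkQ ∘ₗ LinearMap.applyₗ (s x)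

theorem evalMod_eq_zero_iff {s : κ → W} {G : κ → Submodule K V} {f : W →ₗ[K] V} :
    evalMod s G f = 0 ↔ ∀ x, f (s x) ∈ G x := by
  simp [evalMod, funext_iff, Quotient.mk_eq_zero]

theorem surjective_evalMod_iff {s : κ → W} {G : κ → Submodule K V} :
    Function.Surjective (evalMod s G) ↔
      ∀ y : κ → V, ∃ f : W →ₗ[K] V, ∀ x, f (s x) - y x ∈ G x := by
  refine ⟨fun h y => ?_, fun h y => ?_⟩
  · obtain ⟨f, hf⟩ := h fun x => (G x).mkQ (y x)
    exact ⟨f, fun x => (Submodule.Quotient.eq (G x)).1 (congrFun hf x)⟩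
  · choose v hv using fun x => (G x).mkQ_surjective (y x)
    obtain ⟨f, hf⟩ := h v
    exact ⟨f, funext fun x => ((Submodule.Quotient.eq (G x)).2 (hf x)).trans (hv x)⟩

theorem surjective_evalMod_map_mkQ {s : κ → W} {G : κ → Submodule K V}
    (h : Function.Surjective (evalMod s G)) (I : Submodule K V) :
    Function.Surjective (evalMod s fun x => (G x).map I.mkQ) := by
  rw [surjective_evalMod_iff] at h ⊢
  intro y
  choose v hv using fun x => I.mkQ_surjective (y x)
  obtain ⟨f, hf⟩ := h v
  refine ⟨I.mkQ ∘ₗ f, fun x => ?_⟩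
  rw [← hv x, LinearMap.comp_apply, ← map_sub]
  exact mem_map_of_mem (hf x)

theorem surjective_evalMod_of_injective [FiniteDimensional K A] [FiniteDimensional K B]
    [FiniteDimensional K V] [Finite κ] (hAB : finrank K A = finrank K B) {s : κ → A} {t : κ → B}
    {G : κ → Submodule K V} (hs : Function.Injective (evalMod s G))
    (ht : Function.Surjective (evalMod t G)) : Function.Surjective (evalMod s G) := by
  have hle := LinearMap.finrank_le_finrank_of_injective hs
  have hge := LinearMap.finrank_le_finrank_of_surjective ht
  have hHom : finrank K (A →ₗ[K] V) = finrank K (B →ₗ[K] V) := by simp only [finrank_linearMap, hAB]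
  exact (LinearMap.injective_iff_surjective_of_finrank_eq_finrank
    (hle.antisymm (hHom ▸ hge))).1 hs

theorem exists_mkQ_apply_eq (S : Submodule K W) (I : Submodule K V) (m : S →ₗ[K] V ⧸ I) :
    ∃ f : W →ₗ[K] V, ∀ w : S, I.mkQ (f w) = m w := by
  obtain ⟨s, hs⟩ := I.mkQ.exists_rightInverse_of_surjective I.range_mkQ
  obtain ⟨e, he⟩ := S.subtype.exists_leftInverse_of_injective (ker_subtype _)
  refine ⟨s ∘ₗ m ∘ₗ e, fun w => (LinearMap.congr_fun hs _).trans ?_⟩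
  exact congrArg m (LinearMap.congr_fun he w)

variable {n d : ℕ}

theorem exists_flag_hom {b u : Fin n → W} (hb : LinearIndependent K b)
    (hspan : ⊤ ≤ span K (Set.range b))
    (hflag : ∀ j, span K (b '' Set.Iic j) = span K (u '' Set.Iic j)) {G : Fin n → Submodule K V}
    (hG : Monotone G) (I : Submodule K V) (J : Fin d ↪o Fin n) {m : W →ₗ[K] V}
    (hm : ∀ k, m (b (J k)) ∈ G (J k) ⊔ I) :
    ∃ h : W →ₗ[K] V, (∀ j, h (u j) ∈ G j) ∧
      Set.MapsTo (m - h) (span K (Set.range (b ∘ J)) : Submodule K W) I := by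
  choose g hg v hv hgv using fun k => mem_sup.1 (hm k)
  let h := (Basis.mk hb hspan).constr K (Function.extend J g 0)
  have hh (j : Fin n) : h (b j) = Function.extend J g 0 j := by
    simpa [h] using (Basis.mk hb hspan).constr_basis K (Function.extend J g 0) j
  have hhG (j : Fin n) : h (b j) ∈ G j := by
    rw [hh]
    by_cases hj : ∃ k, J k = j
    · obtain ⟨k, rfl⟩ := hj
      rw [J.injective.extend_apply]
      exact hg k
    · rw [Function.extend_apply' _ _ _ hj]
      exact zero_mem _
  refine ⟨h, fun j => ?_, ?_⟩
  · suffices span K (b '' Set.Iic j) ≤ (G j).comap h from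
      this (hflag j ▸ apply_mem_span_image_Iic u le_rfl)
    rw [span_le]
    rintro _ ⟨l, hl, rfl⟩
    exact hG (Set.mem_Iic.1 hl) (hhG l)
  · change span K (Set.range (b ∘ J)) ≤ I.comap (m - h)
    rw [span_le]
    rintro _ ⟨k, rfl⟩
    simp [hh, J.injective.extend_apply, ← hgv, hv]

end Evaluation

section Reduction

variable {K B V W ι : Type*} [Field K] [AddCommGroup B] [Module K B] [AddCommGroup V] [Module K V]
  [AddCommGroup W] [Module K W] {n d : ℕ} {u : ι → Fin n → W} {G : ι → Fin n → Submodule K V}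
  {S : Submodule K W} {I : Submodule K V}

theorem exists_add_sub_apply_mem (hG : ∀ i, Monotone (G i))
    (hmove : ∀ q : ι → W →ₗ[K] V, (∀ i, Set.MapsTo (q i) S I) →
      ∃ δ : W →ₗ[K] V, Set.MapsTo δ S I ∧ ∀ i j, δ (u i j) + q i (u i j) ∈ G i j)
    {b : ι → Fin n → W} {J : ι → Fin d ↪o Fin n} (hb : ∀ i, LinearIndependent K (b i))
    (htop : ∀ i, ⊤ ≤ span K (Set.range (b i)))
    (hflag : ∀ i j, span K (b i '' Set.Iic j) = span K (u i '' Set.Iic j))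
    (hbS : ∀ i, span K (Set.range (b i ∘ J i)) = S) {m : W →ₗ[K] V} {q : ι → W →ₗ[K] V}
    (hmq : ∀ i k, (m - q i) (b i (J i k)) ∈ G i (J i k) ⊔ I) :
    ∃ δ : W →ₗ[K] V, Set.MapsTo δ S I ∧ ∀ i j, (m + δ) (u i j) - q i (u i j) ∈ G i j := by
  choose h hh hhS using fun i =>
    exists_flag_hom (hb i) (htop i) (hflag i) (hG i) I (J i) (hmq i)
  obtain ⟨δ, hδ, hδG⟩ := hmove (fun i => m - q i - h i) fun i => hbS i ▸ hhS i
  refine ⟨δ, hδ, fun i j => ?_⟩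
  convert add_mem (hh i j) (hδG i j) using 1
  simp only [LinearMap.sub_apply, LinearMap.add_apply]
  abel

/- Both injectivity on `S →ₗ V ⧸ I` and the final surjectivity come from correcting a map that is
right modulo `I` on `S` by one of the maps `δ` carrying `S` into `I`. -/
theorem surjective_evalMod_of_reduction [FiniteDimensional K V] [FiniteDimensional K W]
    [FiniteDimensional K B] [Finite ι] (hu : ∀ i, LinearIndependent K (u i))
    (hn : finrank K W = n) (hG : ∀ i, Monotone (G i))
    (hmove : ∀ q : ι → W →ₗ[K] V, (∀ i, Set.MapsTo (q i) S I) →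
      ∃ δ : W →ₗ[K] V, Set.MapsTo δ S I ∧ ∀ i j, δ (u i j) + q i (u i j) ∈ G i j)
    (hker : ∀ ψ : W →ₗ[K] V, (∀ i j, ψ (u i j) ∈ G i j) → Set.MapsTo ψ S I)
    {b : ι → Fin n → W} {J : ι → Fin d ↪o Fin n} (hb : ∀ i, LinearIndependent K (b i))
    (hflag : ∀ i j, span K (b i '' Set.Iic j) = span K (u i '' Set.Iic j))
    (hbS : ∀ i, span K (Set.range (b i ∘ J i)) = S) (hB : finrank K B = finrank K S)
    {t : ι × Fin d → B}
    (ht : Function.Surjective (evalMod t fun x => G x.1 (J x.1 x.2))) :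
    Function.Surjective (evalMod (fun x : ι × Fin n => u x.1 x.2) fun x => G x.1 x.2) := by
  have htop {f : Fin n → W} (hf : LinearIndependent K f) : ⊤ ≤ span K (Set.range f) :=
    (hf.span_eq_top_of_card_eq_finrank' (by simp [hn])).ge
  have hcorrect {m : W →ₗ[K] V} {q : ι → W →ₗ[K] V} := exists_add_sub_apply_mem hG hmove hb
    (fun i => htop (hb i)) hflag hbS (m := m) (q := q)
  have hmem (i k) : b i (J i k) ∈ S := hbS i ▸ subset_span ⟨k, rfl⟩
  let s : ι × Fin d → S := fun x => ⟨b x.1 (J x.1 x.2), hmem x.1 x.2⟩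
  let GI : ι × Fin d → Submodule K (V ⧸ I) := fun x => (G x.1 (J x.1 x.2)).map I.mkQ
  have hGI (x v) : I.mkQ v ∈ GI x ↔ v ∈ G x.1 (J x.1 x.2) ⊔ I := by
    rw [sup_comm, ← comap_map_mkQ, Submodule.mem_comap]
  have hinj : Function.Injective (evalMod s GI) := by
    refine (injective_iff_map_eq_zero _).2 fun m hm => ?_
    obtain ⟨f, hf⟩ := exists_mkQ_apply_eq S I m
    rw [evalMod_eq_zero_iff] at hm
    obtain ⟨δ, hδ, hδG⟩ := hcorrect (m := f) (q := 0) fun i k => by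
      simpa [← hGI (i, k), s, hf ⟨_, hmem i k⟩] using hm (i, k)
    ext w
    have hw := sub_mem (hker (f + δ) (by simpa using hδG) w.2) (hδ w.2)
    rw [← hf, LinearMap.zero_apply, mkQ_apply, Quotient.mk_eq_zero]
    simpa using hw
  have hsurj := surjective_evalMod_of_injective hB.symm hinj (surjective_evalMod_map_mkQ ht I)
  rw [surjective_evalMod_iff] at hsurj ⊢
  intro y
  let q i := (Basis.mk (hu i) (htop (hu i))).constr K fun j => y (i, j)
  have hq (i j) : q i (u i j) = y (i, j) := by
    simpa [q] using (Basis.mk (hu i) (htop (hu i))).constr_basis K (fun j => y (i, j)) j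
  obtain ⟨m, hm⟩ := hsurj fun x => I.mkQ (q x.1 (b x.1 (J x.1 x.2)))
  obtain ⟨f, hf⟩ := exists_mkQ_apply_eq S I m
  obtain ⟨δ, -, hδG⟩ := hcorrect (m := f) (q := q) fun i k => by
    rw [← hGI (i, k), LinearMap.sub_apply, map_sub, hf ⟨_, hmem i k⟩]
    exact hm (i, k)
  exact ⟨f + δ, fun x => hq x.1 x.2 ▸ hδG x.1 x.2⟩

end Reduction

/-! ### Conditions imposed by flags and their deformations -/

section Conditions

variable {ι : Type*} {n r : ℕ}

/-- The step of codimension `m` of the flag of the space `V` obtained by pulling back the standard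
coordinate flag along `B`. -/
def coflag {V : Type*} [AddCommGroup V] [Module ℂ V] (B : V →ₗ[ℂ] Fin r → ℂ) (m : ℕ) :
    Submodule ℂ V :=
  ⨅ c : Fin r, ⨅ _ : (c : ℕ) < m, LinearMap.ker (LinearMap.proj c ∘ₗ B)

theorem mem_coflag {V : Type*} [AddCommGroup V] [Module ℂ V] {B : V →ₗ[ℂ] Fin r → ℂ} {m : ℕ}
    {v : V} : v ∈ coflag B m ↔ ∀ c : Fin r, (c : ℕ) < m → B v c = 0 := by
  simp [coflag]

theorem coflag_antitone {V : Type*} [AddCommGroup V] [Module ℂ V] (B : V →ₗ[ℂ] Fin r → ℂ) :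
    Antitone (coflag B) := fun _ _ hm _ hv =>
  mem_coflag.2 fun c hc => mem_coflag.1 hv c (hc.trans_le hm)

/-- The indices of the scalar conditions imposed by the weights `a`: for every step `j` of the
`i`-th flag there are `a i j` of them (if `a i j ≤ r`). -/
abbrev ConditionIndex (a : ι → Fin n → ℕ) (r : ℕ) : Type _ :=
  {x : ι × Fin n × Fin r // (x.2.2 : ℕ) < a x.1 x.2.1}

/-- Pairs consisting of a family of frames of `ℂⁿ`, spanning the flags of the source, and a family
of endomorphisms of `ℂʳ`, through which the coordinate flag of the target is pulled back. -/
abbrev FlagParam (ι : Type*) (n r : ℕ) : Type _ :=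
  (ι → Fin n → EuclideanSpace ℂ (Fin n)) × (ι → (Fin r → ℂ) →L[ℂ] (Fin r → ℂ))

@[to_additive]
theorem prod_conditionIndex [Fintype ι] {M : Type*} [CommMonoid M] (a : ι → Fin n → ℕ) (r : ℕ)
    (f : ι → Fin n → M) :
    ∏ x : ConditionIndex a r, f x.1.1 x.1.2.1 = ∏ i, ∏ j, f i j ^ min (a i j) r := by
  rw [← Finset.prod_subtype
    (Finset.univ.filter fun x : ι × Fin n × Fin r => (x.2.2 : ℕ) < a x.1 x.2.1)
    (by simp) (fun x => f x.1 x.2.1), Finset.prod_filter, Fintype.prod_prod_type]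
  refine Finset.prod_congr rfl fun i _ => ?_
  rw [Fintype.prod_prod_type]
  refine Finset.prod_congr rfl fun j _ => ?_
  dsimp only
  rw [← Finset.prod_filter, Finset.prod_const, Fin.card_filter_val_lt, min_comm]

theorem card_conditionIndex [Fintype ι] (a : ι → Fin n → ℕ) (r : ℕ) :
    Fintype.card (ConditionIndex a r) = ∑ i, ∑ j, min (a i j) r := by
  simpa [Finset.sum_const] using sum_conditionIndex (M := ℕ) a r fun _ _ => 1

/-- The conditions on `Z : ℂⁿ → ℂʳ` expressing that it maps the `j`-th vector of the `i`-th frame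
into the step of codimension `a i j` of the `i`-th flag of the target. -/
noncomputable def condMap (a : ι → Fin n → ℕ) (r : ℕ) (p : FlagParam ι n r) :
    (EuclideanSpace ℂ (Fin n) →L[ℂ] (Fin r → ℂ)) →L[ℂ] (ConditionIndex a r → ℂ) :=
  ContinuousLinearMap.pi fun x =>
    (ContinuousLinearMap.proj x.1.2.2).comp ((p.2 x.1.1).comp
      (ContinuousLinearMap.apply ℂ (Fin r → ℂ) (p.1 x.1.1 x.1.2.1)))

variable {a : ι → Fin n → ℕ} {p : FlagParam ι n r} {Z : EuclideanSpace ℂ (Fin n) →L[ℂ] (Fin r → ℂ)}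

theorem condMap_apply (x : ConditionIndex a r) :
    condMap a r p Z x = p.2 x.1.1 (Z (p.1 x.1.1 x.1.2.1)) x.1.2.2 := rfl

theorem condMap_eq_zero_iff :
    condMap a r p Z = 0 ↔ ∀ i j, Z (p.1 i j) ∈ coflag (p.2 i).toLinearMap (a i j) := by
  simp only [funext_iff, Subtype.forall, Prod.forall, mem_coflag]
  rfl

theorem surjective_evalMod_coflag_of_surjective_condMap
    (h : Function.Surjective (condMap a r p)) :
    Function.Surjective (evalMod (fun x : ι × Fin n => p.1 x.1 x.2)
      fun x => coflag (p.2 x.1).toLinearMap (a x.1 x.2)) := by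
  rw [surjective_evalMod_iff]
  intro y
  obtain ⟨Z, hZ⟩ := h fun x => p.2 x.1.1 (y (x.1.1, x.1.2.1)) x.1.2.2
  refine ⟨Z.toLinearMap, fun x => mem_coflag.2 fun c hc => ?_⟩
  rw [map_sub]
  exact sub_eq_zero.2 (congrFun hZ ⟨(x.1, x.2, c), hc⟩)

theorem surjective_condMap_of_surjective_evalMod_coflag
    (hp : ∀ i, Function.Surjective (p.2 i))
    (h : Function.Surjective (evalMod (fun x : ι × Fin n => p.1 x.1 x.2)
      fun x => coflag (p.2 x.1).toLinearMap (a x.1 x.2))) :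
    Function.Surjective (condMap a r p) := by
  rw [surjective_evalMod_iff] at h
  intro y
  choose v hv using fun x : ι × Fin n => hp x.1 fun c =>
    if hc : (c : ℕ) < a x.1 x.2 then y ⟨(x.1, x.2, c), hc⟩ else 0
  obtain ⟨Z, hZ⟩ := h v
  refine ⟨LinearMap.toContinuousLinearMap Z, ?_⟩
  funext ⟨⟨i, j, c⟩, hc⟩
  have hmem := mem_coflag.1 (hZ (i, j)) c hc
  rw [map_sub, Pi.sub_apply, sub_eq_zero] at hmem
  rw [condMap_apply]
  refine hmem.trans ((congrFun (hv (i, j)) c).trans (dif_pos hc))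

theorem contDiff_condMap [Fintype ι] (a : ι → Fin n → ℕ) (r : ℕ) :
    ContDiff ℂ 1 (condMap a r) := by
  refine contDiff_clm_apply_iff.2 fun Z => contDiff_pi.2 fun x => ?_
  have hframe : ContDiff ℂ 1 fun p : FlagParam ι n r => Z (p.1 x.1.1 x.1.2.1) := by fun_prop
  have hmap : ContDiff ℂ 1 fun p : FlagParam ι n r => p.2 x.1.1 := by fun_prop
  exact contDiff_pi.1 (hmap.clm_apply hframe) x.1.2.2

theorem finrank_euclideanSpace_clm (n r : ℕ) :
    finrank ℂ (EuclideanSpace ℂ (Fin n) →L[ℂ] (Fin r → ℂ)) = n * r := by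
  rw [← (LinearMap.toContinuousLinearMap (𝕜 := ℂ) (E := EuclideanSpace ℂ (Fin n))
    (F' := Fin r → ℂ)).finrank_eq, finrank_linearMap]
  simp

theorem surjective_condMap_of_injective [Fintype ι] (h : Function.Injective (condMap a r p))
    (ha : ∑ i, ∑ j, a i j ≤ n * r) : Function.Surjective (condMap a r p) := by
  rw [surjective_iff_finrank_le_finrank_range, LinearMap.finrank_range_of_inj h,
    finrank_euclideanSpace_clm, finrank_fintype_fun_eq_card]
  rw [card_conditionIndex]
  exact (Finset.sum_le_sum fun i _ => Finset.sum_le_sum fun j _ => min_le_left _ _).trans ha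

end Conditions

section FirstOrder

theorem exists_eq_comp_add_comp {K W V : Type*} [Field K] [AddCommGroup W] [Module K W]
    [AddCommGroup V] [Module K V] {Z q : W →ₗ[K] V} (hq : Set.MapsTo q Z.ker Z.range) :
    ∃ (α : V →ₗ[K] V) (γ : W →ₗ[K] W), q = α ∘ₗ Z + Z ∘ₗ γ := by
  obtain ⟨R, hR⟩ := exists_generalized_inverse Z
  refine ⟨q ∘ₗ R, R ∘ₗ (q - q ∘ₗ R ∘ₗ Z), LinearMap.ext fun w => ?_⟩
  obtain ⟨x, hx⟩ := hq (show w - R (Z w) ∈ Z.ker by rw [LinearMap.mem_ker, map_sub, hR, sub_self])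
  have hfix : Z (R (q (w - R (Z w)))) = q (w - R (Z w)) := by rw [← hx, hR]
  simp only [LinearMap.add_apply, LinearMap.comp_apply, LinearMap.sub_apply, ← map_sub q]
  rw [hfix, map_sub]
  abel

theorem apply_mem_range_of_finrank_add_smul_le {E F : Type*} [NormedAddCommGroup E]
    [NormedSpace ℂ E] [FiniteDimensional ℂ E] [NormedAddCommGroup F] [NormedSpace ℂ F]
    [FiniteDimensional ℂ F] {Z ψ : E →L[ℂ] F}
    (h : ∀ t : ℂ, finrank ℂ (Z + t • ψ).range ≤ finrank ℂ Z.range) {w : E} (hw : Z w = 0) :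
    ψ w ∈ Z.range := by
  have hd : HasDerivAt (fun t : ℂ => Z + t • ψ) ψ 0 := by
    simpa using ((hasDerivAt_id (0 : ℂ)).smul_const ψ).const_add Z
  have hZ : Z + (0 : ℂ) • ψ = Z := by rw [zero_smul, add_zero]
  have hmem := deriv_apply_mem_range hd.differentiableAt
    (Eventually.of_forall fun t => by rw [hZ]; exact h t) (w := w) (by rw [hZ]; exact hw)
  rwa [hd.deriv, hZ] at hmem

variable {ι : Type*} {n r : ℕ} {a : ι → Fin n → ℕ} {p : FlagParam ι n r}
  {Z : EuclideanSpace ℂ (Fin n) →L[ℂ] (Fin r → ℂ)}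

/-- The line through `p` in the direction of the infinitesimal changes of frame `γ i` of the source
and `α i` of the target. -/
noncomputable def paramLine (p : FlagParam ι n r) (α : ι → (Fin r → ℂ) →L[ℂ] (Fin r → ℂ))
    (γ : ι → EuclideanSpace ℂ (Fin n) →L[ℂ] EuclideanSpace ℂ (Fin n)) (t : ℂ) : FlagParam ι n r :=
  (fun i j => p.1 i j + t • γ i (p.1 i j), fun i => p.2 i + t • (p.2 i).comp (α i))

theorem contDiff_paramLine [Fintype ι] (p : FlagParam ι n r)
    (α : ι → (Fin r → ℂ) →L[ℂ] (Fin r → ℂ))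
    (γ : ι → EuclideanSpace ℂ (Fin n) →L[ℂ] EuclideanSpace ℂ (Fin n)) :
    ContDiff ℂ 1 (paramLine p α γ) :=
  .prodMk (contDiff_pi.2 fun i => contDiff_pi.2 fun j => by fun_prop)
    (contDiff_pi.2 fun i => by fun_prop)

theorem paramLine_zero (p : FlagParam ι n r) (α : ι → (Fin r → ℂ) →L[ℂ] (Fin r → ℂ))
    (γ : ι → EuclideanSpace ℂ (Fin n) →L[ℂ] EuclideanSpace ℂ (Fin n)) :
    paramLine p α γ 0 = p :=
  Prod.ext (by simp [paramLine]) (funext fun i => by ext : 1; simp [paramLine])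

theorem deriv_add_mem_coflag {Y : ℂ → EuclideanSpace ℂ (Fin n) →L[ℂ] (Fin r → ℂ)}
    (hY : DifferentiableAt ℂ Y 0) {α : ι → (Fin r → ℂ) →L[ℂ] (Fin r → ℂ)}
    {γ : ι → EuclideanSpace ℂ (Fin n) →L[ℂ] EuclideanSpace ℂ (Fin n)}
    (h : ∀ᶠ t in 𝓝 (0 : ℂ), condMap a r (paramLine p α γ t) (Y t) = 0) (i : ι) (j : Fin n) :
    deriv Y 0 (p.1 i j) + (α i (Y 0 (p.1 i j)) + Y 0 (γ i (p.1 i j))) ∈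
      coflag (p.2 i).toLinearMap (a i j) := by
  refine mem_coflag.2 fun c hc => ?_
  have hframe : HasDerivAt (fun t : ℂ => p.1 i j + t • γ i (p.1 i j)) (γ i (p.1 i j)) 0 := by
    simpa using ((hasDerivAt_id (0 : ℂ)).smul_const (γ i (p.1 i j))).const_add (p.1 i j)
  have hmap : HasDerivAt (fun t : ℂ => p.2 i + t • (p.2 i).comp (α i)) ((p.2 i).comp (α i)) 0 := by
    simpa using ((hasDerivAt_id (0 : ℂ)).smul_const ((p.2 i).comp (α i))).const_add (p.2 i)
  have hderiv := hasDerivAt_pi.1 (hmap.clm_apply (hY.hasDerivAt.clm_apply hframe)) c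
  have hconst : (fun t : ℂ => (p.2 i + t • (p.2 i).comp (α i))
      (Y t (p.1 i j + t • γ i (p.1 i j))) c) =ᶠ[𝓝 0] fun _ => 0 :=
    h.mono fun t ht => congrFun ht ⟨(i, j, c), hc⟩
  have hzero := hderiv.unique ((hasDerivAt_const (0 : ℂ) (0 : ℂ)).congr_of_eventuallyEq hconst)
  have hp : p.2 i + (0 : ℂ) • (p.2 i).comp (α i) = p.2 i := by ext : 1; simp
  rw [hp, zero_smul, add_zero] at hzero
  simp only [ContinuousLinearMap.comp_apply, ContinuousLinearMap.coe_coe, map_add,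
    Pi.add_apply] at hzero ⊢
  linear_combination hzero

theorem exists_tangent_correction [Finite ι] {O : Set (FlagParam ι n r)} (hO : IsOpen O)
    (hp : p ∈ O)
    (hmax : ∀ p', finrank ℂ (condMap a r p').range ≤ finrank ℂ (condMap a r p).range)
    (hZ : condMap a r p Z = 0)
    (hZmax : ∀ p' ∈ O, ∀ Z', condMap a r p' Z' = 0 → finrank ℂ Z'.range ≤ finrank ℂ Z.range)
    {q : ι → EuclideanSpace ℂ (Fin n) →ₗ[ℂ] (Fin r → ℂ)}
    (hq : ∀ i, Set.MapsTo (q i) Z.ker Z.range) :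
    ∃ δ : EuclideanSpace ℂ (Fin n) →ₗ[ℂ] (Fin r → ℂ), Set.MapsTo δ Z.ker Z.range ∧
      ∀ i j, δ (p.1 i j) + q i (p.1 i j) ∈ coflag (p.2 i).toLinearMap (a i j) := by
  have := Fintype.ofFinite ι
  choose α γ hαγ using fun i => exists_eq_comp_add_comp (Z := Z.toLinearMap) (hq i)
  let pt := paramLine p (fun i => LinearMap.toContinuousLinearMap (α i))
    fun i => LinearMap.toContinuousLinearMap (γ i)
  have hpt : ContDiff ℂ 1 pt := contDiff_paramLine p _ _
  have hpt0 : pt 0 = p := paramLine_zero p _ _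
  have hptO : ∀ᶠ t in 𝓝 (0 : ℂ), pt t ∈ O :=
    hpt.continuous.continuousAt.eventually (hO.mem_nhds (hpt0 ▸ hp))
  have hN : Differentiable ℂ fun t => condMap a r (pt t) :=
    ((contDiff_condMap a r).comp hpt).differentiable one_ne_zero
  obtain ⟨Y, hYd, hY0, hY⟩ := exists_kernel_curve (hN 0)
    (Eventually.of_forall fun t => by rw [hpt0]; exact hmax (pt t)) (z₀ := Z) (by rw [hpt0, hZ])
  have hYrank : ∀ᶠ t in 𝓝 (0 : ℂ), finrank ℂ (Y t).range ≤ finrank ℂ (Y 0).range := by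
    filter_upwards [hptO, hY] with t ht hYt
    rw [hY0]
    exact hZmax _ ht _ hYt
  refine ⟨(deriv Y 0).toLinearMap, fun w hw => ?_, fun i j => ?_⟩
  · have := deriv_apply_mem_range hYd hYrank (w := w) (by rw [hY0]; exact hw)
    rwa [hY0] at this
  · have := deriv_add_mem_coflag hYd hY i j
    rw [hY0] at this
    rw [hαγ i]
    exact this

end FirstOrder

section GenericParam

variable {ι : Type*} {n r : ℕ} {a : ι → Fin n → ℕ}

/-- Genericity of the parameters `p`: whatever holds for some parameters and is used in the
induction on the size of the frames holds for `p`. -/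
structure IsGeneric (a : ι → Fin n → ℕ) (r : ℕ) (p : FlagParam ι n r) : Prop where
  finrank_range_le : ∀ p', finrank ℂ (condMap a r p').range ≤ finrank ℂ (condMap a r p).range
  surjective : ∀ i, Function.Surjective (p.2 i)
  exists_surjective_condMap : ∀ (d : Fin n) (J : ι → Fin d ↪o Fin n),
    (∃ p' : FlagParam ι d r, Function.Surjective (condMap (fun i k => a i (J i k)) r p')) →
      ∃ u, Function.Surjective (condMap (fun i k => a i (J i k)) r (u, p.2))

theorem exists_forall_finrank_range_condMap_le [Finite ι] (a : ι → Fin n → ℕ) (r : ℕ) :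
    ∃ p₁, ∀ p, finrank ℂ (condMap a r p).range ≤ finrank ℂ (condMap a r p₁).range := by
  have := Fintype.ofFinite ι
  obtain ⟨_, ⟨p₁, rfl⟩, hp₁⟩ := BddAbove.exists_isGreatest_of_nonempty
    (S := Set.range fun p => finrank ℂ (condMap a r p).range)
    ⟨finrank ℂ (ConditionIndex a r → ℂ), by rintro _ ⟨p, rfl⟩; exact finrank_le _⟩
    (Set.range_nonempty _)
  exact ⟨p₁, fun p => hp₁ ⟨p, rfl⟩⟩

theorem isOpen_and_dense_setOf_exists_surjective_condMap [Finite ι] {p' : FlagParam ι n r} (N : ℕ)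
    (hp' : Function.Surjective (condMap a r p')) :
    IsOpen {p : FlagParam ι N r | ∃ u, Function.Surjective (condMap a r (u, p.2))} ∧
      Dense {p : FlagParam ι N r | ∃ u, Function.Surjective (condMap a r (u, p.2))} := by
  have := Fintype.ofFinite ι
  have hd (u : ι → Fin n → EuclideanSpace ℂ (Fin n)) :
      ContDiff ℂ 1 fun p : FlagParam ι N r => condMap a r (u, p.2) :=
    (contDiff_condMap a r).comp (contDiff_const.prodMk contDiff_snd)
  constructor
  · rw [Set.ofPred_exists]
    exact isOpen_iUnion fun u => isOpen_setOf_surjective (hd u).continuous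
  · exact (dense_setOf_surjective ((hd p'.1).differentiable one_ne_zero) (p₁ := (0, p'.2))
      hp').mono fun p hp => ⟨p'.1, hp⟩

theorem isOpen_and_dense_setOf_isGeneric [Finite ι] (a : ι → Fin n → ℕ) (r : ℕ) :
    IsOpen {p | IsGeneric a r p} ∧ Dense {p | IsGeneric a r p} := by
  have := Fintype.ofFinite ι
  obtain ⟨p₁, hp₁⟩ := exists_forall_finrank_range_condMap_le a r
  let M : Set (FlagParam ι n r) :=
    {p | finrank ℂ (condMap a r p₁).range ≤ finrank ℂ (condMap a r p).range}
  let A (i : ι) : Set (FlagParam ι n r) := {p | Function.Surjective (p.2 i)}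
  let X (x : Σ d : Fin n, ι → Fin d ↪o Fin n) : Set (FlagParam ι n r) :=
    {p | (∃ p' : FlagParam ι x.1 r, Function.Surjective (condMap (fun i k => a i (x.2 i k)) r p')) →
      ∃ u, Function.Surjective (condMap (fun i k => a i (x.2 i k)) r (u, p.2))}
  have hgeneric : {p | IsGeneric a r p} = M ∩ ((⋂ i, A i) ∩ ⋂ x, X x) := by
    ext p
    simp only [Set.mem_inter_iff, Set.mem_iInter]
    exact ⟨fun h => ⟨h.1 p₁, h.2, fun x => h.3 x.1 x.2⟩,
      fun h => ⟨fun p' => (hp₁ p').trans h.1, h.2.1, fun d J => h.2.2 ⟨d, J⟩⟩⟩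
  have hM : IsOpen M ∧ Dense M :=
    ⟨isOpen_setOf_le_finrank_range (contDiff_condMap a r).continuous _,
      dense_setOf_le_finrank_range ((contDiff_condMap a r).differentiable one_ne_zero) le_rfl⟩
  have hA (i : ι) : IsOpen (A i) ∧ Dense (A i) :=
    ⟨isOpen_setOf_surjective (by fun_prop), dense_setOf_surjective (by fun_prop)
      (p₁ := (0, fun _ => ContinuousLinearMap.id ℂ _)) Function.surjective_id⟩
  have hX (x) : IsOpen (X x) ∧ Dense (X x) := by
    by_cases hx : ∃ p' : FlagParam ι x.1 r,
      Function.Surjective (condMap (fun i k => a i (x.2 i k)) r p')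
    · obtain ⟨p', hp'⟩ := id hx
      simpa only [X, hx, forall_const] using isOpen_and_dense_setOf_exists_surjective_condMap n hp'
    · simp only [X, hx, false_imp_iff, Set.ofPred_true, isOpen_univ, dense_univ, and_self]
  have hAo := isOpen_iInter_of_finite fun i => (hA i).1
  have hXo := isOpen_iInter_of_finite fun x => (hX x).1
  rw [hgeneric]
  exact ⟨hM.1.inter (hAo.inter hXo), hM.2.inter_of_isOpen_left
    ((dense_iInter_of_isOpen (fun i => (hA i).1) fun i => (hA i).2).inter_of_isOpen_left
      (dense_iInter_of_isOpen (fun x => (hX x).1) fun x => (hX x).2) hAo) hM.1⟩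

end GenericParam

section Induction

variable {ι : Type*} {n r : ℕ} {a : ι → Fin n → ℕ} {p : FlagParam ι n r}
  {Z : EuclideanSpace ℂ (Fin n) →L[ℂ] (Fin r → ℂ)} {O : Set (FlagParam ι n r)}

theorem exists_forall_finrank_range_le (hO : O.Nonempty) (a : ι → Fin n → ℕ) :
    ∃ p ∈ O, ∃ Z, condMap a r p Z = 0 ∧ ∀ p' ∈ O, ∀ Z', condMap a r p' Z' = 0 →
      finrank ℂ Z'.range ≤ finrank ℂ Z.range := by
  obtain ⟨p₀, hp₀⟩ := hO
  obtain ⟨_, ⟨p, hp, Z, hZ, rfl⟩, hmax⟩ := BddAbove.exists_isGreatest_of_nonempty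
    (S := {k | ∃ p ∈ O, ∃ Z, condMap a r p Z = 0 ∧ finrank ℂ Z.range = k})
    ⟨finrank ℂ (Fin r → ℂ), by rintro _ ⟨_, _, _, _, rfl⟩; exact finrank_le _⟩
    ⟨_, p₀, hp₀, 0, map_zero _, rfl⟩
  exact ⟨p, hp, Z, hZ, fun p' hp' Z' hZ' => hmax ⟨p', hp', Z', hZ', rfl⟩⟩

theorem injective_condMap_of_forall_finrank_range_le_zero
    (h : ∀ Z, condMap a r p Z = 0 → finrank ℂ Z.range ≤ finrank ℂ
      (0 : EuclideanSpace ℂ (Fin n) →L[ℂ] (Fin r → ℂ)).range) :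
    Function.Injective (condMap a r p) := by
  refine (injective_iff_map_eq_zero _).2 fun Z hZ => ?_
  have hrange := h Z hZ
  rw [ContinuousLinearMap.toLinearMap_zero, LinearMap.range_zero, finrank_bot, Nat.le_zero,
    finrank_eq_zero, LinearMap.range_eq_bot] at hrange
  exact ContinuousLinearMap.coe_injective hrange

theorem mapsTo_ker_range_of_forall_mem_coflag (hp : p ∈ O) (hZ : condMap a r p Z = 0)
    (hZmax : ∀ p' ∈ O, ∀ Z', condMap a r p' Z' = 0 → finrank ℂ Z'.range ≤ finrank ℂ Z.range)
    {ψ : EuclideanSpace ℂ (Fin n) →ₗ[ℂ] (Fin r → ℂ)}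
    (hψ : ∀ i j, ψ (p.1 i j) ∈ coflag (p.2 i).toLinearMap (a i j)) :
    Set.MapsTo ψ Z.ker Z.range := fun w hw =>
  apply_mem_range_of_finrank_add_smul_le (ψ := LinearMap.toContinuousLinearMap ψ) (fun t =>
    hZmax p hp _ (by rw [map_add, map_smul, hZ, condMap_eq_zero_iff.2 hψ, smul_zero, add_zero])) hw

theorem IsGeneric.exists_surjective_evalMod_coflag
    (hp : IsGeneric a r p) {d : Fin n} {J : ι → Fin d ↪o Fin n}
    (h : ∃ p' : FlagParam ι d r, Function.Surjective (condMap (fun i k => a i (J i k)) r p')) :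
    ∃ t : ι × Fin d → EuclideanSpace ℂ (Fin d), Function.Surjective (evalMod t fun x =>
      coflag (p.2 x.1).toLinearMap (a x.1 (J x.1 x.2))) := by
  obtain ⟨u, hu⟩ := hp.exists_surjective_condMap d J h
  exact ⟨fun x => u x.1 x.2, surjective_evalMod_coflag_of_surjective_condMap (p := (u, p.2))
    (a := fun i k => a i (J i k)) hu⟩

theorem IsSemistable.exists_adapted_basis_restrict [Fintype ι]
    {u : ι → Fin n → EuclideanSpace ℂ (Fin n)}
    (h : IsSemistable a r u) (hu : ∀ i, LinearIndependent ℂ (u i))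
    (S : Submodule ℂ (EuclideanSpace ℂ (Fin n))) :
    ∃ (b : ι → Fin n → EuclideanSpace ℂ (Fin n)) (J : ι → Fin (finrank ℂ S) ↪o Fin n),
      (∀ i, LinearIndependent ℂ (b i)) ∧
      (∀ i j, span ℂ (b i '' Set.Iic j) = span ℂ (u i '' Set.Iic j)) ∧
      (∀ i, span ℂ (Set.range (b i ∘ J i)) = S) ∧
      ∃ u' : ι → Fin (finrank ℂ S) → EuclideanSpace ℂ (Fin (finrank ℂ S)),
        (∀ i, LinearIndependent ℂ (u' i)) ∧ IsSemistable (fun i k => a i (J i k)) r u' := by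
  choose b J hb hflag hbS using fun i => exists_adapted_basis (hu i) (by simp) S
  have hbmem (i k) : b i (J i k) ∈ S := (hbS i).le (subset_span ⟨k, rfl⟩)
  let e : S ≃ₗ[ℂ] EuclideanSpace ℂ (Fin (finrank ℂ S)) :=
    LinearEquiv.ofFinrankEq _ _ (by simp)
  let u' (i : ι) (k : Fin (finrank ℂ S)) := e ⟨b i (J i k), hbmem i k⟩
  let f := S.subtype ∘ₗ e.symm.toLinearMap
  have hfu (i) : f ∘ u' i = b i ∘ J i := funext fun k => by simp [f, u']
  have hu' (i) : LinearIndependent ℂ (u' i) :=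
    .of_comp f ((hfu i).symm ▸ (hb i).comp (J i) (J i).injective)
  have hss' : IsSemistable (fun i k => a i (J i k)) r u' :=
    h.of_subspace (f := f) (Subtype.val_injective.comp e.symm.injective) fun i k => by
      rw [← hflag i, show f (u' i k) = b i (J i k) from congrFun (hfu i) k]
      exact apply_mem_span_image_Iic (b i) le_rfl
  exact ⟨b, J, hb, hflag, hbS, u', hu', hss'⟩

theorem exists_surjective_condMap_of_isSemistable [Fintype ι] (r n : ℕ) :
    ∀ {a : ι → Fin n → ℕ}, (∀ i, Antitone (a i)) →
    ∀ {u : ι → Fin n → EuclideanSpace ℂ (Fin n)}, (∀ i, LinearIndependent ℂ (u i)) →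
    IsSemistable a r u →
    ∃ p : FlagParam ι n r, (∀ i, LinearIndependent ℂ (p.1 i)) ∧
      Function.Surjective (condMap a r p) := by
  induction n using Nat.strong_induction_on with
  | _ n ih =>
  intro a ha u hu hss
  let O : Set (FlagParam ι n r) :=
    {p | (∀ i, LinearIndependent ℂ (p.1 i)) ∧ IsSemistable a r p.1} ∩ {p | IsGeneric a r p}
  have hss_open : IsOpen {p : FlagParam ι n r |
      (∀ i, LinearIndependent ℂ (p.1 i)) ∧ IsSemistable a r p.1} :=
    (isOpen_setOf_isSemistable (by simp) a r).preimage continuous_fst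
  obtain ⟨hgen_open, hgen_dense⟩ := isOpen_and_dense_setOf_isGeneric (n := n) a r
  have hO : IsOpen O := hss_open.inter hgen_open
  obtain ⟨p, hp, Z, hZ, hZmax⟩ := exists_forall_finrank_range_le (O := O)
    (hgen_dense.inter_open_nonempty _ hss_open ⟨(u, 0), hu, hss⟩) a
  obtain ⟨⟨hpu, hpss⟩, hpgen⟩ := id hp
  refine ⟨p, hpu, ?_⟩
  obtain rfl | hZ0 := eq_or_ne Z 0
  · exact surjective_condMap_of_injective
      (injective_condMap_of_forall_finrank_range_le_zero (hZmax p hp)) (hpss.sum_le (by simp) hpu)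
  have hker : finrank ℂ Z.ker < n := by
    simpa using finrank_lt (s := Z.ker) fun h =>
      hZ0 (ContinuousLinearMap.coe_injective (LinearMap.ker_eq_top.1 h))
  obtain ⟨b, J, hb, hflag, hbS, u', hu', hss'⟩ := hpss.exists_adapted_basis_restrict hpu Z.ker
  obtain ⟨p', -, hp'⟩ := ih _ hker (fun i => (ha i).comp_monotone (J i).monotone) hu' hss'
  obtain ⟨t, ht⟩ := hpgen.exists_surjective_evalMod_coflag (d := ⟨_, hker⟩) ⟨p', hp'⟩
  exact surjective_condMap_of_surjective_evalMod_coflag hpgen.surjective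
    (surjective_evalMod_of_reduction (G := fun i j => coflag (p.2 i).toLinearMap (a i j))
      hpu (by simp) (fun i => (coflag_antitone _).comp (ha i))
      (fun q hq => exists_tangent_correction hO hp hpgen.finrank_range_le hZ hZmax hq)
      (fun ψ hψ => mapsTo_ker_range_of_forall_mem_coflag hp hZ hZmax hψ) hb hflag hbS (by simp) ht)

end Induction

end LittlewoodRichardson

namespace LittlewoodRichardson

open Matrix Module MvPolynomial
open scoped Kronecker TensorProduct

/-! ### The determinant of the conditions -/

section CondMatrix

variable {ι : Type*} {n r : ℕ} {R : Type*} [CommRing R]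

/-- The matrix of the conditions `condMap`, when the frames are the columns of the matrices `g i`
and the endomorphisms of the target have matrices `A i`. -/
def condMatrix (a : ι → Fin n → ℕ) (A : ι → Matrix (Fin r) (Fin r) R)
    (g : ι → Matrix (Fin n) (Fin n) R) : Matrix (ConditionIndex a r) (Fin r × Fin n) R :=
  of fun x y => A x.1.1 x.1.2.2 y.1 * g x.1.1 y.2 x.1.2.1

/-- The determinant of `condMatrix`, for an identification of its rows with its columns. -/
noncomputable def condDet [Fintype ι] [DecidableEq ι] (a : ι → Fin n → ℕ)
    (e : ConditionIndex a r ≃ Fin r × Fin n) (A : ι → Matrix (Fin r) (Fin r) R)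
    (g : ι → Matrix (Fin n) (Fin n) R) : R :=
  ((condMatrix a A g).submatrix id e).det

theorem condMatrix_mul_left (a : ι → Fin n → ℕ) (A : ι → Matrix (Fin r) (Fin r) R)
    (g : ι → Matrix (Fin n) (Fin n) R) (h : Matrix (Fin n) (Fin n) R) :
    condMatrix a A (fun i => h * g i) =
      condMatrix a A g * kroneckerMap (· * ·) (1 : Matrix (Fin r) (Fin r) R) hᵀ := by
  ext x y
  simp only [condMatrix, of_apply, mul_apply, Fintype.sum_prod_type, kroneckerMap_apply,
    transpose_apply, one_apply]
  rw [Finset.sum_eq_single y.1 (fun c _ hc => by simp [hc]) (by simp), Finset.mul_sum]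
  refine Finset.sum_congr rfl fun k _ => ?_
  rw [if_pos rfl]
  ring

section

variable [DecidableEq ι]

/-- The effect on the rows of `condMatrix` of multiplying the `i`-th frame by `b i` on the right. -/
def rowChange (a : ι → Fin n → ℕ) (r : ℕ) (b : ι → Matrix (Fin n) (Fin n) R) :
    Matrix (ConditionIndex a r) (ConditionIndex a r) R :=
  of fun x y => if x.1.1 = y.1.1 ∧ x.1.2.2 = y.1.2.2 then b x.1.1 y.1.2.1 x.1.2.1 else 0

theorem condMatrix_mul_right [Fintype ι] {a : ι → Fin n → ℕ} (ha : ∀ i, Antitone (a i))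
    (A : ι → Matrix (Fin r) (Fin r) R) (g : ι → Matrix (Fin n) (Fin n) R)
    {b : ι → Matrix (Fin n) (Fin n) R} (hb : ∀ i, (b i).IsUpperTriangular) :
    condMatrix a A (fun i => g i * b i) = rowChange a r b * condMatrix a A g := by
  ext ⟨⟨i, j, c⟩, hx⟩ y
  have hzero : ∀ z : ι × Fin n × Fin r, ¬ (z.2.2 : ℕ) < a z.1 z.2.1 →
      (if i = z.1 ∧ c = z.2.2 then b i z.2.1 j else 0) = 0 := by
    rintro ⟨i', k, c'⟩ hz
    refine ite_eq_right_iff.2 ?_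
    rintro ⟨rfl, rfl⟩
    exact hb _ (lt_of_not_ge fun hk => hz (lt_of_lt_of_le hx (ha _ hk)))
  simp only [condMatrix, of_apply, mul_apply, rowChange]
  rw [← Finset.sum_subtype
    (Finset.univ.filter fun z : ι × Fin n × Fin r => (z.2.2 : ℕ) < a z.1 z.2.1) (by simp)
    (fun z => (if i = z.1 ∧ c = z.2.2 then b i z.2.1 j else 0) *
      (A z.1 z.2.2 y.1 * g z.1 y.2 z.2.1)),
    Finset.sum_filter_of_ne fun z _ hz => by_contra fun hz' => hz (by rw [hzero z hz', zero_mul]),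
    Fintype.sum_prod_type, Finset.sum_eq_single i (fun i' _ hi' => by simp [hi'.symm]) (by simp),
    Fintype.sum_prod_type, Finset.mul_sum]
  refine Finset.sum_congr rfl fun k _ => ?_
  rw [Finset.sum_eq_single c (fun c' _ hc' => by simp [hc'.symm]) (by simp), if_pos ⟨rfl, rfl⟩]
  ring

theorem det_rowChange [Fintype ι] {a : ι → Fin n → ℕ} (ha : ∀ i j, a i j ≤ r)
    {b : ι → Matrix (Fin n) (Fin n) R} (hb : ∀ i, (b i).IsUpperTriangular) :
    (rowChange a r b).det = ∏ i, ∏ j, b i j j ^ a i j := by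
  have htri : (rowChange a r b).BlockTriangular fun x => OrderDual.toDual x.1.2.1 :=
    fun x y hxy => ite_eq_right_iff.2 fun _ => hb _ hxy
  have hblock (k : (Fin n)ᵒᵈ) : (rowChange a r b).toSquareBlock (fun x => .toDual x.1.2.1) k =
      diagonal fun x => b x.1.1.1 x.1.1.2.1 x.1.1.2.1 := by
    ext ⟨⟨⟨i, j, c⟩, hx⟩, hk⟩ ⟨⟨⟨i', j', c'⟩, hx'⟩, hk'⟩
    obtain rfl : j = j' := hk.trans hk'.symm
    simp [toSquareBlock_def, rowChange, diagonal_apply]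
  have hprod := prod_conditionIndex a r fun i j => b i j j
  simp only [min_eq_left (ha _ _)] at hprod
  rw [htri.det_fintype, ← hprod,
    ← Fintype.prod_fiberwise (fun x : ConditionIndex a r => OrderDual.toDual x.1.2.1)]
  exact Finset.prod_congr rfl fun k _ => by rw [hblock, det_diagonal]

variable [Fintype ι] {a : ι → Fin n → ℕ} (e : ConditionIndex a r ≃ Fin r × Fin n)
  (A : ι → Matrix (Fin r) (Fin r) R) (g : ι → Matrix (Fin n) (Fin n) R)

theorem condDet_mul_left (h : Matrix (Fin n) (Fin n) R) :
    condDet a e A (fun i => h * g i) = h.det ^ r * condDet a e A g := by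
  rw [condDet, condMatrix_mul_left, ← submatrix_mul_equiv _ _ id e e, det_mul,
    det_submatrix_equiv_self, det_kronecker, det_one, one_pow, one_mul, det_transpose,
    Fintype.card_fin, mul_comm, condDet]

theorem condDet_mul_right (ha : ∀ i, Antitone (a i)) (har : ∀ i j, a i j ≤ r)
    {b : ι → Matrix (Fin n) (Fin n) R} (hb : ∀ i, (b i).IsUpperTriangular) :
    condDet a e A (fun i => g i * b i) = (∏ i, ∏ j, b i j j ^ a i j) * condDet a e A g := by
  rw [condDet, condMatrix_mul_right ha A g hb, ← submatrix_mul_equiv _ _ id (Equiv.refl _) e,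
    det_mul, Equiv.coe_refl, submatrix_id_id, det_rowChange har hb, condDet]

theorem map_condDet {S : Type*} [CommRing S] (φ : R →+* S) :
    φ (condDet a e A g) = condDet a e (fun i => (A i).map φ) fun i => (g i).map φ := by
  rw [condDet, RingHom.map_det, condDet]
  congr 1
  ext x y
  exact map_mul φ _ _

end

section

variable {a : ι → Fin n → ℕ}

theorem condMatrix_mulVec_single {p : FlagParam ι n r}
    (Z : EuclideanSpace ℂ (Fin n) →L[ℂ] Fin r → ℂ) :
    condMatrix a (fun i => LinearMap.toMatrix' (p.2 i).toLinearMap)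
        (fun i => of fun k j => p.1 i j k) *ᵥ (fun y => Z (EuclideanSpace.single y.2 1) y.1) =
      condMap a r p Z := by
  ext x
  have hZ (v : EuclideanSpace ℂ (Fin n)) :
      Z v = fun c => ∑ k, v k * Z (EuclideanSpace.single k 1) c := by
    have hv : v = ∑ k, v k • EuclideanSpace.single k (1 : ℂ) := by
      ext k
      simp [Finset.sum_apply, Pi.single_apply]
    ext c
    conv_lhs => rw [hv]
    simp only [map_sum, map_smul, Finset.sum_apply, Pi.smul_apply, smul_eq_mul]
  rw [condMap_apply, ← ContinuousLinearMap.coe_coe (p.2 x.1.1), ← LinearMap.toMatrix'_mulVec, hZ]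
  simp only [mulVec, dotProduct, condMatrix, of_apply, Fintype.sum_prod_type, Finset.mul_sum,
    mul_assoc]

theorem condDet_ne_zero_of_surjective [Fintype ι] [DecidableEq ι]
    (e : ConditionIndex a r ≃ Fin r × Fin n) {p : FlagParam ι n r}
    (h : Function.Surjective (condMap a r p)) :
    condDet a e (fun i => LinearMap.toMatrix' (p.2 i).toLinearMap)
      (fun i => of fun k j => p.1 i j k) ≠ 0 := by
  rw [condDet, ← isUnit_iff_ne_zero, ← isUnit_iff_isUnit_det, ← mulVec_surjective_iff_isUnit]
  intro t
  obtain ⟨Z, rfl⟩ := h t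
  refine ⟨(fun y => Z (EuclideanSpace.single y.2 1) y.1) ∘ e, ?_⟩
  rw [submatrix_mulVec_equiv, Function.comp_assoc, Equiv.self_comp_symm, Function.comp_id,
    Function.comp_id, condMatrix_mulVec_single]

end

end CondMatrix

section EuclideanCol

variable {n : ℕ}

/-- The columns of a complex matrix, as vectors of the Euclidean space. -/
noncomputable def euclideanCol (X : Matrix (Fin n) (Fin n) ℂ) (j : Fin n) :
    EuclideanSpace ℂ (Fin n) :=
  WithLp.toLp 2 (X.col j)

theorem linearIndependent_euclideanCol_iff {X : Matrix (Fin n) (Fin n) ℂ} :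
    LinearIndependent ℂ (euclideanCol X) ↔ X.det ≠ 0 := by
  rw [← isUnit_iff_ne_zero, ← isUnit_iff_isUnit_det, ← linearIndependent_cols_iff_isUnit]
  exact LinearMap.linearIndependent_iff (v := X.col)
    (WithLp.linearEquiv 2 ℂ (Fin n → ℂ)).symm.toLinearMap (LinearEquiv.ker _)

end EuclideanCol

section Reversal

variable (n : ℕ) (R : Type*) [CommRing R]

/-- The permutation matrix of the longest element of the symmetric group. -/
abbrev revMatrix : Matrix (Fin n) (Fin n) R := Fin.revPerm.permMatrix R

theorem revMatrix_mul_revMatrix : revMatrix n R * revMatrix n R = 1 := by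
  rw [← permMatrix_mul, show (Fin.revPerm : Equiv.Perm (Fin n)) * Fin.revPerm = 1 by ext; simp,
    permMatrix_one]

theorem det_revMatrix_mul_self : (revMatrix n R).det * (revMatrix n R).det = 1 := by
  rw [← det_mul, revMatrix_mul_revMatrix, det_one]

variable {n R}

theorem revMatrix_mul_mul_revMatrix (M : Matrix (Fin n) (Fin n) R) :
    revMatrix n R * M * revMatrix n R = M.submatrix Fin.rev Fin.rev := by
  rw [PEquiv.toMatrix_toPEquiv_mul, PEquiv.mul_toMatrix_toPEquiv]
  rfl

end Reversal

section TripleDet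

variable {n r : ℕ} {lam mu nu : Fin n → ℕ}

/-- The weights `(lam, mu, r - nu reversed)`, through which the coefficient of `nu` in the product
of `lam` and `mu` becomes a symmetric threefold intersection number; it is meant for `nu ≤ r`. -/
def tripleWeight (lam mu nu : Fin n → ℕ) (r : ℕ) : Fin 3 → Fin n → ℕ :=
  ![lam, mu, fun j => r - nu j.rev]

theorem antitone_tripleWeight (hlam : Antitone lam) (hmu : Antitone mu) (hnu : Antitone nu)
    (i : Fin 3) : Antitone (tripleWeight lam mu nu r i) := by
  fin_cases i
  · exact hlam
  · exact hmu
  · exact fun j k hjk => Nat.sub_le_sub_left (hnu (Fin.rev_le_rev.2 hjk)) r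

theorem tripleWeight_le (hlam : ∀ j, lam j ≤ r) (hmu : ∀ j, mu j ≤ r) (i : Fin 3) (j : Fin n) :
    tripleWeight lam mu nu r i j ≤ r := by
  fin_cases i
  · exact hlam j
  · exact hmu j
  · exact Nat.sub_le _ _

theorem sum_tripleWeight (hnu : ∀ j, nu j ≤ r) (hsize : ∑ j, lam j + ∑ j, mu j = ∑ j, nu j) :
    ∑ i, ∑ j, tripleWeight lam mu nu r i j = r * n := by
  have hrev : ∑ j : Fin n, (r - nu j.rev) = ∑ j, (r - nu j) :=
    Equiv.sum_comp Fin.revPerm fun j => r - nu j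
  have hcompl : ∑ j : Fin n, (r - nu j) + ∑ j, nu j = r * n := by
    simp [← Finset.sum_add_distrib, Nat.sub_add_cancel (hnu _), mul_comm]
  rw [Fin.sum_univ_three]
  simp only [tripleWeight, cons_val_zero, cons_val_one, cons_val, hrev]
  omega

variable {R : Type*} [CommRing R]

/-- The determinant `condDet` as a function of two matrices: the third frame is the reversed
standard one, so that lower triangular matrices preserve its flag. -/
noncomputable def tripleDet (a : Fin 3 → Fin n → ℕ) (e : ConditionIndex a r ≃ Fin r × Fin n)
    (A : Fin 3 → Matrix (Fin r) (Fin r) R) (X Y : Matrix (Fin n) (Fin n) R) : R :=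
  condDet a e A ![X, Y, revMatrix n R]

theorem map_tripleDet {S : Type*} [CommRing S] (φ : R →+* S) {a : Fin 3 → Fin n → ℕ}
    (e : ConditionIndex a r ≃ Fin r × Fin n) (A : Fin 3 → Matrix (Fin r) (Fin r) R)
    (X Y : Matrix (Fin n) (Fin n) R) :
    φ (tripleDet a e A X Y) = tripleDet a e (fun i => (A i).map φ) (X.map φ) (Y.map φ) := by
  rw [tripleDet, map_condDet, tripleDet]
  congr 1
  ext i : 1
  fin_cases i
  · rfl
  · rfl
  · exact PEquiv.map_toMatrix φ Fin.revPerm.toPEquiv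

variable (hlam : Antitone lam) (hmu : Antitone mu) (hnu : Antitone nu)
  (hlam_le : ∀ j, lam j ≤ r) (hmu_le : ∀ j, mu j ≤ r)
  (e : ConditionIndex (tripleWeight lam mu nu r) r ≃ Fin r × Fin n)
  (A : Fin 3 → Matrix (Fin r) (Fin r) R) (X Y : Matrix (Fin n) (Fin n) R)

include hlam hmu hnu hlam_le hmu_le

theorem condDet_cons_mul {Z b c d : Matrix (Fin n) (Fin n) R} (hb : b.IsUpperTriangular)
    (hc : c.IsUpperTriangular) (hd : d.IsUpperTriangular) :
    condDet (tripleWeight lam mu nu r) e A ![X * b, Y * c, Z * d] =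
      (∏ j, b j j ^ lam j) * (∏ j, c j j ^ mu j) * (∏ j, d j j ^ (r - nu j.rev)) *
        condDet _ e A ![X, Y, Z] := by
  have hmul : ![X * b, Y * c, Z * d] = fun i => ![X, Y, Z] i * ![b, c, d] i := by
    ext i : 1
    fin_cases i <;> rfl
  rw [hmul, condDet_mul_right e A _ (antitone_tripleWeight hlam hmu hnu)
    (tripleWeight_le hlam_le hmu_le) (by simp [Fin.forall_fin_succ, hb, hc, hd]),
    Fin.prod_univ_three]
  rfl

theorem tripleDet_mul_right {b c : Matrix (Fin n) (Fin n) R} (hb : b.IsUpperTriangular)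
    (hc : c.IsUpperTriangular) :
    tripleDet _ e A (X * b) (Y * c) =
      (∏ j, b j j ^ lam j) * (∏ j, c j j ^ mu j) * tripleDet _ e A X Y := by
  have h := condDet_cons_mul hlam hmu hnu hlam_le hmu_le e A X Y (Z := revMatrix n R) hb hc
    blockTriangular_one
  simpa only [tripleDet, mul_one, one_apply_eq, one_pow, Finset.prod_const_one] using h

theorem tripleDet_mul_left (hnu_le : ∀ j, nu j ≤ r) {h : Matrix (Fin n) (Fin n) R}
    (hh : h.IsLowerTriangular) (hdet : h.det = 1) :
    tripleDet _ e A (h * X) (h * Y) = (∏ j, h j j ^ nu j) * tripleDet _ e A X Y := by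
  have hrev : (revMatrix n R * h * revMatrix n R).IsUpperTriangular := by
    rw [revMatrix_mul_mul_revMatrix]
    exact fun i j hij => hh (Fin.rev_lt_rev.2 hij)
  have hcancel : revMatrix n R * (revMatrix n R * h * revMatrix n R) = h * revMatrix n R := by
    rw [← mul_assoc, ← mul_assoc, revMatrix_mul_revMatrix, one_mul]
  have hleft : ![h * X, h * Y, h * revMatrix n R] = fun i => h * ![X, Y, revMatrix n R] i := by
    ext i : 1
    fin_cases i <;> rfl
  have hprod : (∏ j, h j j ^ nu j) * ∏ j : Fin n, h j.rev j.rev ^ (r - nu j.rev) = 1 := by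
    have hreindex : ∏ j : Fin n, h j.rev j.rev ^ (r - nu j.rev) = ∏ j, h j j ^ (r - nu j) :=
      Equiv.prod_comp Fin.revPerm fun j => h j j ^ (r - nu j)
    rw [hreindex, ← Finset.prod_mul_distrib]
    simp only [← pow_add, Nat.add_sub_cancel' (hnu_le _)]
    rw [Finset.prod_pow, ← det_of_isLowerTriangular h hh, hdet, one_pow]
  have hequiv := condDet_cons_mul hlam hmu hnu hlam_le hmu_le e A (h * X) (h * Y)
    (Z := revMatrix n R) blockTriangular_one blockTriangular_one hrev
  rw [hcancel, mul_one, mul_one, hleft, condDet_mul_left, revMatrix_mul_mul_revMatrix] at hequiv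
  simp only [hdet, one_apply_eq, one_pow, Finset.prod_const_one, one_mul,
    submatrix_apply] at hequiv
  rw [tripleDet, tripleDet, hequiv, ← mul_assoc, hprod, one_mul]

end TripleDet

section Nonvanishing

variable {n r : ℕ}

theorem exists_tripleDet_ne_zero {a : Fin 3 → Fin n → ℕ} (ha : ∀ i, Antitone (a i))
    (har : ∀ i j, a i j ≤ r) (hsum : ∑ i, ∑ j, a i j = r * n)
    {u : Fin 3 → Fin n → EuclideanSpace ℂ (Fin n)} (hu : ∀ i, LinearIndependent ℂ (u i))
    (hss : IsSemistable a r u) :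
    ∃ (e : ConditionIndex a r ≃ Fin r × Fin n) (A : Fin 3 → Matrix (Fin r) (Fin r) ℂ)
      (X Y : Matrix (Fin n) (Fin n) ℂ), tripleDet a e A X Y ≠ 0 := by
  obtain ⟨p, hp, hsurj⟩ := exists_surjective_condMap_of_isSemistable r n ha hu hss
  let e : ConditionIndex a r ≃ Fin r × Fin n := Fintype.equivOfCardEq <| by
    simp only [card_conditionIndex, min_eq_left (har _ _), hsum, Fintype.card_prod,
      Fintype.card_fin]
  let g : Fin 3 → Matrix (Fin n) (Fin n) ℂ := fun i => of fun k j => p.1 i j k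
  have hg : IsUnit (g 2).det := isUnit_iff_ne_zero.2 (linearIndependent_euclideanCol_iff.1 (hp 2))
  let h := revMatrix n ℂ * (g 2)⁻¹
  have hdet : h.det ≠ 0 := by
    rw [det_mul, det_nonsing_inv]
    exact mul_ne_zero (left_ne_zero_of_mul_eq_one (det_revMatrix_mul_self n ℂ))
      hg.ringInverse.ne_zero
  have hframe : ![h * g 0, h * g 1, revMatrix n ℂ] = fun i => h * g i := by
    ext i : 1
    fin_cases i
    · rfl
    · rfl
    · exact (nonsing_inv_mul_cancel_right _ _ hg).symm
  refine ⟨e, fun i => LinearMap.toMatrix' (p.2 i).toLinearMap, h * g 0, h * g 1, ?_⟩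
  rw [tripleDet, hframe, condDet_mul_left]
  exact mul_ne_zero (pow_ne_zero _ hdet) (condDet_ne_zero_of_surjective e hsurj)

end Nonvanishing

/-! ### Representations of `SL(n)` -/

section CommonEigenvector

variable {K E ι : Type*} [Field K] [IsAlgClosed K] [AddCommGroup E] [Module K E]
  [FiniteDimensional K E] [Nontrivial E]

theorem exists_common_eigenvector {f : ι → End K E} (hf : ∀ i j, Commute (f i) (f j)) :
    ∃ v, v ≠ 0 ∧ ∀ i, ∃ c : K, f i v = c • v := by
  obtain ⟨p, ⟨hp, hinv⟩, hmin⟩ := (wellFounded_lt (α := Submodule K E)).has_min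
    {p | p ≠ ⊥ ∧ ∀ i, p ≤ p.comap (f i)} ⟨⊤, top_ne_bot, fun _ _ _ => trivial⟩
  have : Nontrivial p := Submodule.nontrivial_iff_ne_bot.2 hp
  have hscalar (i : ι) : ∃ c : K, ∀ v ∈ p, f i v = c • v := by
    obtain ⟨c, hc⟩ := Module.End.exists_eigenvalue ((f i).restrict (hinv i))
    obtain ⟨z, hz⟩ := hc.exists_hasEigenvector
    let q : Submodule K E := p ⊓ (f i).eigenspace c
    have hq : q ≠ ⊥ := (Submodule.ne_bot_iff _).2
      ⟨z, ⟨z.2, Module.End.mem_eigenspace_iff.2 (congrArg Subtype.val hz.apply_eq_smul)⟩,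
        fun h => hz.2 (Subtype.ext h)⟩
    have hqinv (j : ι) : q ≤ q.comap (f j) := fun v hv =>
      ⟨hinv j hv.1, Module.End.mem_eigenspace_iff.2 <| by
        rw [← Module.End.mul_apply, (hf i j).eq, Module.End.mul_apply,
          Module.End.mem_eigenspace_iff.1 hv.2, map_smul]⟩
    have hqp : q = p := inf_le_left.eq_of_not_lt (hmin q ⟨hq, hqinv⟩)
    exact ⟨c, fun v hv => Module.End.mem_eigenspace_iff.1 (hqp ▸ hv : v ∈ q).2⟩
  obtain ⟨v, hv, hv0⟩ := p.exists_mem_ne_zero_of_ne_bot hp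
  exact ⟨v, hv0, fun i => (hscalar i).imp fun c hc => hc v hv⟩

end CommonEigenvector

section PowEigenvalue

variable {K E : Type*} [Field K] [AddCommGroup E] [Module K E] [FiniteDimensional K E]

theorem pow_factorial_finrank_eq_one {f : End K E} {c : K} (hc : c ≠ 0)
    (hf : ∀ k : ℕ, 0 < k → f.HasEigenvalue (c ^ k)) : c ^ (finrank K E).factorial = 1 := by
  choose v hv using fun k : Fin (finrank K E + 1) => (hf (k + 1) k.succ_pos).exists_hasEigenvector
  have hinj : ¬ Function.Injective fun k : Fin (finrank K E + 1) => c ^ ((k : ℕ) + 1) := fun h => by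
    simpa using (Module.End.eigenvectors_linearIndependent' f _ h v hv).fintype_card_le_finrank
  simp only [Function.Injective, not_forall] at hinj
  obtain ⟨i, j, hij, hne⟩ := hinj
  wlog hlt : i < j generalizing i j
  · exact this j i hij.symm (Ne.symm hne) (lt_of_le_of_ne (not_lt.1 hlt) (Ne.symm hne))
  rw [Fin.lt_def] at hlt
  have hone : c ^ ((j : ℕ) - i) = 1 := by
    refine mul_left_cancel₀ (pow_ne_zero (i + 1) hc) ?_
    rw [mul_one, ← pow_add, hij]
    congr 1
    omega
  obtain ⟨q, hq⟩ := Nat.dvd_factorial (m := (j : ℕ) - i) (n := finrank K E) (by omega) (by omega)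
  rw [hq, pow_mul, hone, one_pow]

end PowEigenvalue

section UpperFiltration

variable {n : ℕ} {R : Type*} [CommRing R]

variable (n R) in
/-- The square matrices supported on the entries `(i, j)` with `i + d ≤ j`: the upper triangular
matrices for `d = 0`, the strictly upper triangular ones for `d = 1`. -/
def upperFiltration (d : ℕ) : Submodule R (Matrix (Fin n) (Fin n) R) where
  carrier := {M | ∀ ⦃i j : Fin n⦄, (j : ℕ) < i + d → M i j = 0}
  zero_mem' := fun _ _ _ => rfl
  add_mem' := fun hM hN i j hij => by rw [Matrix.add_apply, hM hij, hN hij, add_zero]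
  smul_mem' := fun c M hM i j hij => by rw [Matrix.smul_apply, hM hij, smul_zero]

variable {d e : ℕ} {M N : Matrix (Fin n) (Fin n) R}

theorem mem_upperFiltration_zero : M ∈ upperFiltration n R 0 ↔ M.IsUpperTriangular := Iff.rfl

theorem upperFiltration_antitone : Antitone (upperFiltration n R) :=
  fun d e hde M hM i j hij => hM (by omega)

theorem mul_mem_upperFiltration (hM : M ∈ upperFiltration n R d) (hN : N ∈ upperFiltration n R e) :
    M * N ∈ upperFiltration n R (d + e) := by
  intro i j hij
  rw [mul_apply]
  refine Finset.sum_eq_zero fun k _ => ?_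
  by_cases hk : (k : ℕ) < i + d
  · rw [hM hk, zero_mul]
  · rw [hN (show (j : ℕ) < k + e by omega), mul_zero]

theorem isUpperTriangular_of_sub_one_mem (hM : M - 1 ∈ upperFiltration n R d) :
    M.IsUpperTriangular := by
  simpa using (mem_upperFiltration_zero.1 (upperFiltration_antitone d.zero_le hM)).add
    blockTriangular_one

theorem pow_sub_one_add_smul_mem (hd : 0 < d) (hM : M - 1 ∈ upperFiltration n R d) (k : ℕ) :
    M ^ k - (1 + (k : R) • (M - 1)) ∈ upperFiltration n R (d + 1) := by
  induction k with
  | zero => simp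
  | succ k ih =>
    have hmul := mul_mem_upperFiltration ih
      (mem_upperFiltration_zero.2 (isUpperTriangular_of_sub_one_mem hM))
    have hsq := upperFiltration_antitone (show d + 1 ≤ d + d by omega)
      (mul_mem_upperFiltration (Submodule.smul_mem _ (k : R) hM) hM)
    convert add_mem hmul hsq using 1
    rw [pow_succ]
    push_cast
    simp only [add_smul, one_smul, smul_mul_assoc, sub_mul, add_mul, mul_sub, smul_sub, one_mul,
      mul_one]
    abel

theorem isUpperTriangular_val_inv {g : Matrix.SpecialLinearGroup (Fin n) R}
    (hg : g.val.IsUpperTriangular) : (g⁻¹).val.IsUpperTriangular := by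
  have hmul : (g⁻¹).val * g.val = 1 := by
    rw [← Matrix.SpecialLinearGroup.coe_mul, inv_mul_cancel, Matrix.SpecialLinearGroup.coe_one]
  have := invertibleOfLeftInverse _ _ hmul
  rw [← inv_eq_left_inv hmul]
  exact blockTriangular_inv_of_blockTriangular hg

end UpperFiltration

section DetNormalization

variable {K ι : Type*} [Field K] [IsAlgClosed K] [Fintype ι] [DecidableEq ι]

theorem exists_det_smul_eq_one {M : Matrix ι ι K} (hM : M.det ≠ 0) :
    ∃ c : K, c ≠ 0 ∧ (c • M).det = 1 := by
  cases isEmpty_or_nonempty ι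
  · exact ⟨1, one_ne_zero, det_isEmpty⟩
  · obtain ⟨c, hc⟩ := IsAlgClosed.exists_pow_nat_eq M.det⁻¹ (Fintype.card_pos (α := ι))
    refine ⟨c, ne_zero_pow Fintype.card_ne_zero (hc ▸ inv_ne_zero hM), ?_⟩
    rw [det_smul, hc, inv_mul_cancel₀ hM]

end DetNormalization

section Approximation

variable {n h k : ℕ}

-- Conjugation by a diagonal matrix with entries in geometric progression scales the `h`-th
-- superdiagonal uniformly; a ratio with `b ^ h = k` makes it imitate the `k`-th power map.
theorem exists_forall_pow_mul_sub_mul_mem (hh : 0 < h) (hk : k ≠ 0) :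
    ∃ t : SL n, t.val.IsUpperTriangular ∧ ∀ g : SL n, g.val - 1 ∈ upperFiltration n ℂ h →
      (g ^ k * t).val - (t * g).val ∈ upperFiltration n ℂ (h + 1) := by
  obtain ⟨b, hb⟩ := IsAlgClosed.exists_pow_nat_eq (k : ℂ) hh
  have hb0 : b ≠ 0 := ne_zero_pow hh.ne' (by rw [hb]; exact_mod_cast hk)
  obtain ⟨c, -, hc⟩ := exists_det_smul_eq_one
    (M := diagonal fun i : Fin n => (b ^ (i : ℕ))⁻¹)
    (by simpa [det_diagonal, Finset.prod_ne_zero_iff] using fun _ h => absurd h hb0)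
  rw [smul_eq_diagonal_mul, diagonal_mul_diagonal] at hc
  set d : Fin n → ℂ := fun i => c * (b ^ (i : ℕ))⁻¹ with hd
  have hupper : (diagonal d).IsUpperTriangular := blockTriangular_diagonal d
  obtain ⟨t, ht⟩ : ∃ t : SL n, t.val = diagonal d := ⟨⟨_, hc⟩, rfl⟩
  refine ⟨t, ht ▸ hupper, fun g hg => ?_⟩
  have hlin : (1 + (k : ℂ) • (g.val - 1)) * diagonal d - diagonal d * g.val ∈
      upperFiltration n ℂ (h + 1) := by
    intro i j hij
    obtain ⟨N, hN⟩ : ∃ N, N = g.val - 1 := ⟨_, rfl⟩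
    rw [← hN] at hg ⊢
    rw [← sub_add_cancel g.val 1, ← hN, Matrix.sub_apply, mul_diagonal, diagonal_mul,
      Matrix.add_apply, Matrix.add_apply, Matrix.smul_apply, smul_eq_mul, add_comm (N i j)]
    obtain hlt | heq : (j : ℕ) < i + h ∨ (j : ℕ) = i + h := by omega
    · obtain rfl | hne := eq_or_ne i j
      · rw [hg hlt]
        ring
      · rw [hg hlt, one_apply_ne hne]
        ring
    · have hne : i ≠ j := by
        rintro rfl
        omega
      have hdk : d i = k * d j := by
        simp only [hd, heq, pow_add, hb]
        field_simp
      rw [one_apply_ne hne, hdk]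
      ring
  have hpow := mul_mem_upperFiltration (pow_sub_one_add_smul_mem hh hg k)
    (mem_upperFiltration_zero.2 hupper)
  convert add_mem hpow hlin using 1
  rw [Matrix.SpecialLinearGroup.coe_mul, Matrix.SpecialLinearGroup.coe_pow,
    Matrix.SpecialLinearGroup.coe_mul, ht, sub_mul]
  abel

theorem exists_sub_pow_mem (hh : 0 < h) (hk : k ≠ 0) {g : SL n}
    (hg : g.val - 1 ∈ upperFiltration n ℂ h) :
    ∃ g' : SL n, g'.val - 1 ∈ upperFiltration n ℂ h ∧
      g.val - (g' ^ k).val ∈ upperFiltration n ℂ (h + 1) := by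
  have hk0 : (k : ℂ) ≠ 0 := by exact_mod_cast hk
  let M : Matrix (Fin n) (Fin n) ℂ := 1 + (k : ℂ)⁻¹ • (g.val - 1)
  have hM : M - 1 ∈ upperFiltration n ℂ h := by
    simpa only [M, add_sub_cancel_left] using Submodule.smul_mem _ _ hg
  have hdet : M.det = 1 := by
    rw [det_of_isUpperTriangular (isUpperTriangular_of_sub_one_mem hM)]
    refine Finset.prod_eq_one fun i _ => ?_
    rw [← sub_eq_zero, ← one_apply_eq i, ← Matrix.sub_apply]
    exact hM (by omega)
  obtain ⟨g', hg'⟩ : ∃ g' : SL n, g'.val = M := ⟨⟨_, hdet⟩, rfl⟩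
  refine ⟨g', hg' ▸ hM, ?_⟩
  convert neg_mem (pow_sub_one_add_smul_mem hh hM k) using 1
  rw [Matrix.SpecialLinearGroup.coe_pow, hg', neg_sub, add_sub_cancel_left, smul_smul,
    mul_inv_cancel₀ hk0, one_smul, add_sub_cancel]

end Approximation

section FixedVector

variable {n : ℕ} {X : Type*} [AddCommGroup X] [Module ℂ X] {ρ : Representation ℂ (SL n) X}
  {h : ℕ}

variable (ρ h) in
/-- The vectors fixed by the matrices `g` of `SL n` with `g - 1 ∈ upperFiltration n ℂ h`; for
`0 < h` these form a term of the lower central series of the unipotent upper triangular group. -/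
def unipotentInvariants : Submodule ℂ X where
  carrier := {x | ∀ g : SL n, g.val - 1 ∈ upperFiltration n ℂ h → ρ g x = x}
  zero_mem' := fun _ _ => map_zero _
  add_mem' := fun hx hy g hg => by rw [map_add, hx g hg, hy g hg]
  smul_mem' := fun c x hx g hg => by rw [map_smul, hx g hg]

theorem apply_eq_of_mem_unipotentInvariants {a b : SL n} (ha : a.val.IsUpperTriangular)
    (hab : b.val - a.val ∈ upperFiltration n ℂ h) {y : X} (hy : y ∈ unipotentInvariants ρ h) :
    ρ a y = ρ b y := by
  have hquot : (a⁻¹ * b).val - 1 ∈ upperFiltration n ℂ h := by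
    have hcalc : (a⁻¹ * b).val - 1 = (a⁻¹).val * (b.val - a.val) := by
      rw [mul_sub, ← Matrix.SpecialLinearGroup.coe_mul, ← Matrix.SpecialLinearGroup.coe_mul,
        inv_mul_cancel, Matrix.SpecialLinearGroup.coe_one]
    rw [hcalc, ← zero_add h]
    exact mul_mem_upperFiltration (isUpperTriangular_val_inv ha) hab
  calc ρ a y = ρ a (ρ (a⁻¹ * b) y) := by rw [hy _ hquot]
    _ = ρ b y := by rw [← Module.End.mul_apply, ← map_mul, mul_inv_cancel_left]

theorem apply_mem_unipotentInvariants {a : SL n} (ha : a.val.IsUpperTriangular) {y : X}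
    (hy : y ∈ unipotentInvariants ρ h) : ρ a y ∈ unipotentInvariants ρ h := by
  intro g hg
  rw [← Module.End.mul_apply, ← map_mul]
  refine (apply_eq_of_mem_unipotentInvariants ha ?_ hy).symm
  have hmul := mul_mem_upperFiltration hg (mem_upperFiltration_zero.2 ha)
  rwa [add_zero, sub_mul, one_mul, ← Matrix.SpecialLinearGroup.coe_mul] at hmul

theorem injective_apply (g : SL n) : Function.Injective (ρ g) :=
  Function.LeftInverse.injective (ρ.inv_self_apply g)

theorem hasEigenvalue_pow_of_mem_unipotentInvariants (hh : 0 < h) {g : SL n}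
    (hg : g.val - 1 ∈ upperFiltration n ℂ h) {y : X} (hy : y ∈ unipotentInvariants ρ (h + 1))
    (hy0 : y ≠ 0) {c : ℂ} (hgy : ρ g y = c • y) {k : ℕ} (hk : k ≠ 0) :
    Module.End.HasEigenvalue (ρ g) (c ^ k) := by
  obtain ⟨t, ht, htg⟩ := exists_forall_pow_mul_sub_mul_mem hh hk
  have hty := apply_mem_unipotentInvariants (isUpperTriangular_val_inv ht) hy
  have hne : ρ t⁻¹ y ≠ 0 := (map_ne_zero_iff _ (injective_apply _)).2 hy0
  refine Module.End.hasEigenvalue_of_hasEigenvector <| Module.End.hasEigenvector_iff.2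
    ⟨Module.End.mem_eigenspace_iff.2 (injective_apply (ρ := ρ) t ?_), hne⟩
  calc ρ t (ρ g (ρ t⁻¹ y)) = ρ (t * g) (ρ t⁻¹ y) := by rw [map_mul, Module.End.mul_apply]
    _ = ρ (g ^ k * t) (ρ t⁻¹ y) := apply_eq_of_mem_unipotentInvariants
        (ht.mul (isUpperTriangular_of_sub_one_mem hg)) (htg g hg) hty
    _ = c ^ k • y := by
      rw [map_mul, Module.End.mul_apply, ρ.self_inv_apply, map_pow]
      exact (Module.End.HasEigenvector.pow_apply (Module.End.hasEigenvector_iff.2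
        ⟨Module.End.mem_eigenspace_iff.2 hgy, hy0⟩) k)
    _ = ρ t (c ^ k • ρ t⁻¹ y) := by rw [map_smul, ρ.self_inv_apply]

variable [FiniteDimensional ℂ X]

theorem exists_common_eigenvector_unipotentInvariants (hh : 0 < h)
    (hbot : unipotentInvariants ρ (h + 1) ≠ ⊥) :
    ∃ y ∈ unipotentInvariants ρ (h + 1), y ≠ 0 ∧
      ∀ g : SL n, g.val - 1 ∈ upperFiltration n ℂ h → ∃ c : ℂ, ρ g y = c • y := by
  have := Submodule.nontrivial_iff_ne_bot.2 hbot
  let f (g : {g : SL n // g.val - 1 ∈ upperFiltration n ℂ h}) :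
      End ℂ (unipotentInvariants ρ (h + 1)) := (ρ g).restrict fun _ =>
    apply_mem_unipotentInvariants (isUpperTriangular_of_sub_one_mem g.2)
  have hf : ∀ g g', Commute (f g) (f g') := by
    rintro ⟨g, hg⟩ ⟨g', hg'⟩
    refine LinearMap.ext fun y => Subtype.ext ?_
    change ρ g (ρ g' y) = ρ g' (ρ g y)
    rw [← Module.End.mul_apply, ← map_mul, ← Module.End.mul_apply, ← map_mul]
    refine apply_eq_of_mem_unipotentInvariants ((isUpperTriangular_of_sub_one_mem hg).mul
      (isUpperTriangular_of_sub_one_mem hg')) ?_ y.2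
    convert upperFiltration_antitone (show h + 1 ≤ h + h by omega) <|
      sub_mem (mul_mem_upperFiltration hg' hg) (mul_mem_upperFiltration hg hg') using 1
    simp only [Matrix.SpecialLinearGroup.coe_mul]
    noncomm_ring
  obtain ⟨y, hy0, hy⟩ := exists_common_eigenvector hf
  exact ⟨y, y.2, fun h0 => hy0 (Subtype.ext h0),
    fun g hg => (hy ⟨g, hg⟩).imp fun c hc => congrArg Subtype.val hc⟩

theorem unipotentInvariants_ne_bot_of_succ (hh : 0 < h)
    (hbot : unipotentInvariants ρ (h + 1) ≠ ⊥) : unipotentInvariants ρ h ≠ ⊥ := by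
  obtain ⟨y, hy, hy0, heig⟩ := exists_common_eigenvector_unipotentInvariants hh hbot
  refine (Submodule.ne_bot_iff _).2 ⟨y, fun g hg => ?_, hy0⟩
  have hN : (finrank ℂ X).factorial ≠ 0 := Nat.factorial_ne_zero _
  obtain ⟨g', hg', hgg'⟩ := exists_sub_pow_mem hh hN hg
  obtain ⟨c, hc⟩ := heig g' hg'
  have hc0 : c ≠ 0 := by
    rintro rfl
    rw [zero_smul] at hc
    exact hy0 (injective_apply g' (hc.trans (map_zero _).symm))
  have hpow := (isUpperTriangular_of_sub_one_mem hg').pow (finrank ℂ X).factorial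
  rw [← Matrix.SpecialLinearGroup.coe_pow] at hpow
  rw [← apply_eq_of_mem_unipotentInvariants hpow hgg' hy, map_pow,
    Module.End.HasEigenvector.pow_apply (Module.End.hasEigenvector_iff.2
      ⟨Module.End.mem_eigenspace_iff.2 hc, hy0⟩),
    pow_factorial_finrank_eq_one hc0 fun k hk =>
      hasEigenvalue_pow_of_mem_unipotentInvariants hh hg' hy hy0 hc hk.ne', one_smul]

theorem unipotentInvariants_one_ne_bot [Nontrivial X] (ρ : Representation ℂ (SL n) X) :
    unipotentInvariants ρ 1 ≠ ⊥ := by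
  have hlarge : ∀ h, n ≤ h → unipotentInvariants ρ h ≠ ⊥ := by
    intro h hh
    obtain ⟨x, hx⟩ := exists_ne (0 : X)
    refine (Submodule.ne_bot_iff _).2 ⟨x, fun g hg => ?_, hx⟩
    have hg1 : g = 1 := Subtype.ext <| sub_eq_zero.1 <| Matrix.ext fun i j => hg (by omega)
    rw [hg1, map_one, Module.End.one_apply]
  exact Nat.decreasingInduction' (P := fun h => unipotentInvariants ρ h ≠ ⊥)
    (fun h _ hh => unipotentInvariants_ne_bot_of_succ hh) n.succ_pos (hlarge _ n.le_succ)

-- No continuity of `ρ` is assumed, so the theorem of Lie and Kolchin is not available.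
theorem exists_ne_zero_forall_apply_eq [Nontrivial X] (ρ : Representation ℂ (SL n) X) :
    ∃ x, x ≠ 0 ∧ ∀ g, SLIsUniUpper g → ρ g x = x := by
  obtain ⟨x, hx, hx0⟩ := (Submodule.ne_bot_iff _).1 (unipotentInvariants_one_ne_bot ρ)
  refine ⟨x, hx0, fun g ⟨hdiag, hupper⟩ => hx g fun i j hij => ?_⟩
  obtain hlt | rfl := (Fin.le_def.2 (Nat.lt_succ_iff.1 hij)).lt_or_eq
  · rw [Matrix.sub_apply, hupper i j hlt, one_apply_ne hlt.ne', sub_zero]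
  · rw [Matrix.sub_apply, hdiag, one_apply_eq, sub_self]

end FixedVector

section PowerFunction

variable {n : ℕ} {R S : Type*} [CommRing R] [CommRing S] {b y : Matrix (Fin n) (Fin n) R}
  {a : Fin n → ℕ}

/-- The leading principal minor on the rows and columns of index at most `k`. -/
def leadingMinor (k : Fin n) (X : Matrix (Fin n) (Fin n) R) : R :=
  (X.toSquareBlockProp (· ≤ k)).det

theorem map_leadingMinor (φ : R →+* S) (k : Fin n) (X : Matrix (Fin n) (Fin n) R) :
    φ (leadingMinor k X) = leadingMinor k (X.map φ) :=
  φ.map_det _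

theorem leadingMinor_transpose (k : Fin n) (X : Matrix (Fin n) (Fin n) R) :
    leadingMinor k Xᵀ = leadingMinor k X :=
  det_transpose (X.toSquareBlockProp (· ≤ k))

theorem leadingMinor_of_isUpperTriangular (k : Fin n) (hb : b.IsUpperTriangular) :
    leadingMinor k b = ∏ i ∈ Finset.Iic k, b i i := by
  have hblock : (b.toSquareBlockProp (· ≤ k)).IsUpperTriangular := fun _ _ hij => hb hij
  refine (det_of_isUpperTriangular hblock).trans ?_
  exact (Finset.prod_subtype _ (fun _ => Finset.mem_Iic) fun i => b i i).symm

theorem leadingMinor_one (k : Fin n) : leadingMinor k (1 : Matrix (Fin n) (Fin n) R) = 1 := by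
  rw [leadingMinor_of_isUpperTriangular k blockTriangular_one]
  simp only [one_apply_eq, Finset.prod_const_one]

theorem leadingMinor_mul_of_isUpperTriangular (k : Fin n) (X : Matrix (Fin n) (Fin n) R)
    (hb : b.IsUpperTriangular) : leadingMinor k (X * b) = leadingMinor k X * leadingMinor k b := by
  have hzero : b.toBlock (fun i => ¬ i ≤ k) (· ≤ k) = 0 := by
    ext i j
    exact hb (j.2.trans_lt (not_le.1 i.2))
  have hmul := toBlock_mul_eq_add (· ≤ k) (· ≤ k) (· ≤ k) X b
  rw [hzero, Matrix.mul_zero, add_zero] at hmul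
  exact (congrArg det hmul).trans (det_mul _ _)

/-- The coefficient of the `k`-th fundamental weight in the dominant weight `a`. -/
def gap (a : Fin n → ℕ) (k : Fin n) : ℕ := a k - if h : (k : ℕ) + 1 < n then a ⟨k + 1, h⟩ else 0

theorem sum_Ici_gap (ha : Antitone a) (j : Fin n) : ∑ k ∈ Finset.Ici j, gap a k = a j := by
  induction j using WellFoundedGT.induction with
  | ind j ih =>
    rw [← Finset.add_sum_Ioi_eq_sum_Ici, gap]
    split_ifs with hj
    · have hIoi : Finset.Ioi j = Finset.Ici ⟨j + 1, hj⟩ := by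
        ext k
        rw [Finset.mem_Ioi, Finset.mem_Ici, Fin.lt_def, Fin.le_def, Nat.succ_le_iff]
      have hlt : j < ⟨j + 1, hj⟩ := Fin.lt_def.2 (Nat.lt_succ_self _)
      rw [hIoi, ih _ hlt, Nat.sub_add_cancel (ha hlt.le)]
    · have hIoi : Finset.Ioi j = ∅ := by
        ext k
        simp only [Finset.mem_Ioi, Fin.lt_def, Finset.notMem_empty, iff_false]
        omega
      rw [hIoi, Finset.sum_empty, add_zero, Nat.sub_zero]

/-- The generalised power function of weight `a`: the product of powers of leading minors which
takes the value `∏ i, d i ^ a i` at the diagonal matrix with entries `d`. -/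
def powerFunction (a : Fin n → ℕ) (X : Matrix (Fin n) (Fin n) R) : R :=
  ∏ k, leadingMinor k X ^ gap a k

theorem map_powerFunction (φ : R →+* S) (a : Fin n → ℕ) (X : Matrix (Fin n) (Fin n) R) :
    φ (powerFunction a X) = powerFunction a (X.map φ) := by
  simp only [powerFunction, map_prod, map_pow, map_leadingMinor]

theorem powerFunction_transpose (a : Fin n → ℕ) (X : Matrix (Fin n) (Fin n) R) :
    powerFunction a Xᵀ = powerFunction a X := by
  simp only [powerFunction, leadingMinor_transpose]

theorem powerFunction_of_isUpperTriangular (ha : Antitone a) (hb : b.IsUpperTriangular) :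
    powerFunction a b = ∏ i, b i i ^ a i := by
  simp only [powerFunction, leadingMinor_of_isUpperTriangular _ hb, ← Finset.prod_pow]
  rw [Finset.prod_comm' (t' := Finset.univ) (s' := Finset.Ici) (by simp)]
  simp only [Finset.prod_pow_eq_pow_sum, sum_Ici_gap ha]

theorem powerFunction_one (ha : Antitone a) :
    powerFunction a (1 : Matrix (Fin n) (Fin n) R) = 1 := by
  simp only [powerFunction_of_isUpperTriangular ha blockTriangular_one, one_apply_eq, one_pow,
    Finset.prod_const_one]

theorem powerFunction_mul (ha : Antitone a) (X : Matrix (Fin n) (Fin n) R)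
    (hb : b.IsUpperTriangular) :
    powerFunction a (X * b) = (∏ i, b i i ^ a i) * powerFunction a X := by
  rw [← powerFunction_of_isUpperTriangular ha hb, mul_comm]
  simp only [powerFunction, leadingMinor_mul_of_isUpperTriangular _ _ hb, mul_pow,
    Finset.prod_mul_distrib]

theorem powerFunction_mul_left (ha : Antitone a) (X : Matrix (Fin n) (Fin n) R)
    (hy : y.IsLowerTriangular) :
    powerFunction a (y * X) = (∏ i, y i i ^ a i) * powerFunction a X := by
  rw [← powerFunction_transpose, transpose_mul, powerFunction_mul ha _ hy.transpose,
    powerFunction_transpose]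
  rfl

end PowerFunction

section LUDecomposition

variable {n : ℕ} {K : Type*} [Field K]

theorem exists_mulVec_eq_single {X : Matrix (Fin n) (Fin n) K} {j : Fin n}
    (hX : leadingMinor j X ≠ 0) :
    ∃ c : Fin n → K, (∀ k, j < k → c k = 0) ∧
      ∀ i ≤ j, (X *ᵥ c) i = (Pi.single j 1 : Fin n → K) i := by
  obtain ⟨y, hy⟩ := mulVec_surjective_iff_isUnit.2
    ((isUnit_iff_isUnit_det _).2 (isUnit_iff_ne_zero.2 hX)) (Pi.single ⟨j, le_rfl⟩ 1)
  have hzero (k : Fin n) (hk : k ∉ Set.range (Subtype.val : {i // i ≤ j} → Fin n)) :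
      Function.extend Subtype.val y 0 k = 0 := Function.extend_apply' _ _ _ hk
  refine ⟨Function.extend Subtype.val y 0, fun k hk => hzero k ?_, fun i hi => ?_⟩
  · rintro ⟨k, rfl⟩
    exact k.2.not_gt hk
  · have hyi : _ = (Pi.single j 1 : Fin n → K) i := (congrFun hy ⟨i, hi⟩).trans <| by
      simp only [Pi.single_apply, Subtype.mk.injEq]
    rw [← hyi]
    refine (Fintype.sum_of_injective Subtype.val Subtype.val_injective
      (fun k => X.toSquareBlockProp (· ≤ j) ⟨i, hi⟩ k * y k) (fun k => X i k * _)
      (fun k hk => ?_) fun k => ?_).symm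
    · rw [hzero k hk, mul_zero]
    · rw [Subtype.val_injective.extend_apply]
      rfl

theorem exists_isUpperTriangular_mul_isLowerTriangular {X : Matrix (Fin n) (Fin n) K}
    (hX : ∀ k, leadingMinor k X ≠ 0) :
    ∃ b : Matrix (Fin n) (Fin n) K, b.IsUpperTriangular ∧ (X * b).IsLowerTriangular ∧
      ∀ i, (X * b) i i = 1 := by
  choose c hc hXc using fun j => exists_mulVec_eq_single (hX j)
  refine ⟨of fun k j => c j k, fun k j hkj => hc j k hkj, fun i j hij => ?_, fun i => ?_⟩
  · exact (hXc j i (le_of_lt hij)).trans (Pi.single_eq_of_ne (Fin.ne_of_lt hij) _)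
  · exact (hXc i i le_rfl).trans (Pi.single_eq_same _ _)

end LUDecomposition

section HomogeneousPolynomial

variable {R σ : Type*} [CommRing R] {p : MvPolynomial σ R} {d : ℕ}

theorem eval_smul_of_isHomogeneous (hp : p.IsHomogeneous d) (c : R) (x : σ → R) :
    eval (c • x) p = c ^ d * eval x p := by
  rw [eval_eq, eval_eq, Finset.mul_sum]
  refine Finset.sum_congr rfl fun e he => ?_
  have hdeg : ∑ i ∈ e.support, e i = d := by
    simpa [Finsupp.weight_apply, Finsupp.sum] using hp (mem_support_iff.1 he)
  simp only [Pi.smul_apply, smul_eq_mul, mul_pow, Finset.prod_mul_distrib,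
    Finset.prod_pow_eq_pow_sum, hdeg]
  ring

end HomogeneousPolynomial

section LinearSubstitution

variable {R σ : Type*} [CommRing R] [Fintype σ]

/-- The substitution `X i ↦ ∑ j, L i j * X j` in polynomials. -/
noncomputable def linSubst (L : Matrix σ σ R) : MvPolynomial σ R →ₐ[R] MvPolynomial σ R :=
  bind₁ L.toMvPolynomial

theorem eval_linSubst (L : Matrix σ σ R) (p : MvPolynomial σ R) (x : σ → R) :
    eval x (linSubst L p) = eval (L *ᵥ x) p := by
  rw [linSubst, ← coe_aeval_eq_eval, RingHom.coe_coe, aeval_bind₁]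
  simp only [← coe_aeval_eq_eval, RingHom.coe_coe]
  simp only [aeval_eq_eval, toMvPolynomial_eval_eq_apply]

theorem linSubst_linSubst (L L' : Matrix σ σ R) (p : MvPolynomial σ R) :
    linSubst L (linSubst L' p) = linSubst (L' * L) p := by
  rw [linSubst, linSubst, linSubst, bind₁_bind₁]
  congr 2
  funext i
  exact (toMvPolynomial_mul L' L i).symm

theorem linSubst_one [DecidableEq σ] (p : MvPolynomial σ R) :
    linSubst (1 : Matrix σ σ R) p = p := by
  rw [linSubst, toMvPolynomial_one, bind₁_X_left, AlgHom.id_apply]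

theorem isHomogeneous_linSubst (L : Matrix σ σ R) {p : MvPolynomial σ R} {d : ℕ}
    (hp : p.IsHomogeneous d) : (linSubst L p).IsHomogeneous d := by
  rw [← one_mul d]
  exact hp.aeval _ L.toMvPolynomial_isHomogeneous

end LinearSubstitution

section MatrixPolynomial

variable {R ι κ : Type*} [CommRing R]

/-- The value of a polynomial in the matrix entries at the matrix `X`. -/
noncomputable def matrixEval (X : Matrix ι κ R) : MvPolynomial (ι × κ) R →ₐ[R] R :=
  aeval fun q => X q.1 q.2

theorem mvPolynomialX_map_matrixEval (X : Matrix ι κ R) :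
    (mvPolynomialX ι κ R).map (matrixEval X) = X := by
  ext i j
  exact aeval_X _ _

theorem matrixEval_smul {p : MvPolynomial (ι × κ) R} {d : ℕ} (hp : p.IsHomogeneous d)
    (c : R) (X : Matrix ι κ R) : matrixEval (c • X) p = c ^ d * matrixEval X p :=
  eval_smul_of_isHomogeneous hp c _

variable [Fintype ι]

theorem matrixEval_linSubst_kronecker [Fintype κ] (h : Matrix ι ι R) (k : Matrix κ κ R)
    (X : Matrix ι κ R) (p : MvPolynomial (ι × κ) R) :
    matrixEval X (linSubst (h ⊗ₖ k) p) = matrixEval (h * X * kᵀ) p := by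
  have hvec : (h ⊗ₖ k) *ᵥ vec Xᵀ = vec (h * X * kᵀ)ᵀ := by
    rw [kronecker_mulVec_vec, transpose_mul, transpose_mul, transpose_transpose, Matrix.mul_assoc]
  exact (eval_linSubst _ p (vec Xᵀ)).trans (congrArg (fun x => eval x p) hvec)

variable {K : Type*} [Field K] [IsAlgClosed K] [DecidableEq ι] {d : ℕ}

theorem isHomogeneous_ext_specialLinearGroup {p q : MvPolynomial (ι × ι) K}
    (hp : p.IsHomogeneous d) (hq : q.IsHomogeneous d)
    (hpq : ∀ g : Matrix.SpecialLinearGroup ι K, matrixEval g.val p = matrixEval g.val q) :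
    p = q := by
  suffices hmul : (p - q) * (mvPolynomialX ι ι K).det = 0 from
    sub_eq_zero.1 ((mul_eq_zero.1 hmul).resolve_right (det_mvPolynomialX_ne_zero ι K))
  refine MvPolynomial.funext fun x => ?_
  let X : Matrix ι ι K := of fun i j => x (i, j)
  rw [map_mul, map_zero, eval_det_mvPolynomialX]
  by_cases hX : X.det = 0
  · exact mul_eq_zero_of_right _ hX
  · obtain ⟨c, hc, hdet⟩ := exists_det_smul_eq_one hX
    have hzero : c ^ d * matrixEval X (p - q) = 0 := by
      rw [← matrixEval_smul (hp.sub hq), map_sub, sub_eq_zero]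
      exact hpq ⟨c • X, hdet⟩
    exact mul_eq_zero_of_left ((mul_eq_zero.1 hzero).resolve_left (pow_ne_zero _ hc)) _

end MatrixPolynomial

section BigCell

variable {n : ℕ} {R : Type*} [CommRing R]

theorem isHomogeneous_leadingMinor (k : Fin n) :
    (leadingMinor k (mvPolynomialX (Fin n) (Fin n) R)).IsHomogeneous (k + 1) := by
  rw [leadingMinor, det_apply]
  refine IsHomogeneous.sum _ _ _ fun π _ => ?_
  have hcard : ∑ _ : {i : Fin n // i ≤ k}, 1 = (k : ℕ) + 1 := by
    rw [Finset.sum_const, smul_eq_mul, mul_one, Finset.card_univ, Fintype.card_subtype,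
      Finset.filter_ge_eq_Iic, Fin.card_Iic]
  rw [Units.smul_def, zsmul_eq_mul, ← map_intCast (C (σ := Fin n × Fin n) (R := R)), ← hcard]
  exact (IsHomogeneous.prod _ _ _ fun i _ => isHomogeneous_X R _).C_mul _

theorem exists_isHomogeneous_powerFunction (a : Fin n → ℕ) :
    ∃ d, (powerFunction a (mvPolynomialX (Fin n) (Fin n) R)).IsHomogeneous d :=
  ⟨_, IsHomogeneous.prod _ _ _ fun k _ => (isHomogeneous_leadingMinor k).pow _⟩

theorem matrixEval_leadingMinor (k : Fin n) (X : Matrix (Fin n) (Fin n) R) :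
    matrixEval X (leadingMinor k (mvPolynomialX (Fin n) (Fin n) R)) = leadingMinor k X :=
  (map_leadingMinor (matrixEval X).toRingHom k _).trans
    (congrArg _ (mvPolynomialX_map_matrixEval X))

theorem matrixEval_powerFunction (a : Fin n → ℕ) (X : Matrix (Fin n) (Fin n) R) :
    matrixEval X (powerFunction a (mvPolynomialX (Fin n) (Fin n) R)) = powerFunction a X :=
  (map_powerFunction (matrixEval X).toRingHom a _).trans
    (congrArg _ (mvPolynomialX_map_matrixEval X))

theorem exists_forall_leadingMinor_mul_ne_zero (s : Finset (SL n)) :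
    ∃ h : SL n, ∀ g ∈ s, ∀ k, leadingMinor k (g * h).val ≠ 0 := by
  let P (g : SL n) (k : Fin n) : MvPolynomial (Fin n × Fin n) ℂ :=
    linSubst (g.val ⊗ₖ 1) (leadingMinor k (mvPolynomialX (Fin n) (Fin n) ℂ))
  have hP (g h : SL n) (k : Fin n) : matrixEval h.val (P g k) = leadingMinor k (g * h).val := by
    rw [matrixEval_linSubst_kronecker, matrixEval_leadingMinor, transpose_one, Matrix.mul_one,
      Matrix.SpecialLinearGroup.coe_mul]
  have hhom : (∏ g ∈ s, ∏ k, P g k).IsHomogeneous (∑ _ ∈ s, ∑ k : Fin n, ((k : ℕ) + 1)) :=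
    IsHomogeneous.prod _ _ _ fun g _ => IsHomogeneous.prod _ _ _ fun k _ =>
      isHomogeneous_linSubst _ (isHomogeneous_leadingMinor k)
  have hne : ∏ g ∈ s, ∏ k, P g k ≠ 0 :=
    Finset.prod_ne_zero_iff.2 fun g _ => Finset.prod_ne_zero_iff.2 fun k _ h0 => by
      have := hP g g⁻¹ k
      rw [h0, map_zero, mul_inv_cancel, Matrix.SpecialLinearGroup.coe_one, leadingMinor_one] at this
      exact zero_ne_one this
  obtain ⟨h, hh⟩ : ∃ h : SL n, matrixEval h.val (∏ g ∈ s, ∏ k, P g k) ≠ 0 := by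
    by_contra! hzero
    exact hne (isHomogeneous_ext_specialLinearGroup hhom (isHomogeneous_zero _ _ _)
      fun h => (hzero h).trans (map_zero _).symm)
  simp only [map_prod, Finset.prod_ne_zero_iff, hP, Finset.mem_univ, true_imp_iff] at hh
  exact ⟨h, hh⟩

theorem exists_finset_forall_eq_zero_imp_eq_zero {K T : Type*} [Field K] (S : Submodule K (T → K))
    [FiniteDimensional K S] : ∃ s : Finset T, ∀ f ∈ S, (∀ x ∈ s, f x = 0) → f = 0 := by
  classical
  let N (s : Finset T) : Submodule K S := ⨅ x ∈ s, LinearMap.ker (LinearMap.proj x ∘ₗ S.subtype)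
  have hN {s : Finset T} {f : S} : f ∈ N s ↔ ∀ x ∈ s, f.1 x = 0 := by
    simp [N]
  obtain ⟨_, ⟨s, rfl⟩, hmin⟩ :=
    (wellFounded_lt (α := Submodule K S)).has_min (Set.range N) ⟨_, ∅, rfl⟩
  refine ⟨s, fun f hf hfs => funext fun x => ?_⟩
  have hle : N (insert x s) ≤ N s := fun g hg =>
    hN.2 fun y hy => hN.1 hg y (Finset.mem_insert_of_mem hy)
  have hmem : (⟨f, hf⟩ : S) ∈ N (insert x s) :=
    (hle.eq_of_not_lt (hmin _ ⟨_, rfl⟩)).symm ▸ hN.2 hfs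
  exact hN.1 hmem x (Finset.mem_insert_self _ _)

theorem eq_zero_of_forall_leadingMinor_ne_zero {S : Submodule ℂ (SL n → ℂ)}
    [FiniteDimensional ℂ S] (hS : ∀ h, ∀ f ∈ S, (fun g => f (g * h)) ∈ S) {f : SL n → ℂ}
    (hfS : f ∈ S) (hf : ∀ g : SL n, (∀ k, leadingMinor k g.val ≠ 0) → f g = 0) : f = 0 := by
  obtain ⟨s, hs⟩ := exists_finset_forall_eq_zero_imp_eq_zero S
  obtain ⟨h, hh⟩ := exists_forall_leadingMinor_mul_ne_zero s
  have hzero := hs _ (hS h f hfS) fun g hg => hf _ (hh g hg)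
  funext g
  simpa using congrFun hzero (g * h⁻¹)

end BigCell

section HighestWeight

variable {n : ℕ} {X : Type*} [AddCommGroup X] [Module ℂ X] {ρ : Representation ℂ (SL n) X} {v : X}

theorem val_diag_ne_zero {b : SL n} (hb : b.val.IsUpperTriangular) (i : Fin n) : b.val i i ≠ 0 := by
  have hdet : ∏ i, b.val i i = 1 := (det_of_isUpperTriangular hb).symm.trans b.2
  exact Finset.prod_ne_zero_iff.1 (hdet.trans_ne one_ne_zero) i (Finset.mem_univ i)

theorem apply_hwVector_of_isUpperTriangular {a : Fin n → ℤ} (hv : IsHWVector ρ a v) {b : SL n}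
    (hb : b.val.IsUpperTriangular) : ρ b v = (∏ i, b.val i i ^ a i) • v := by
  obtain ⟨-, hunipotent, htorus⟩ := hv
  have hdet : (diagonal fun i => b.val i i).det = 1 := by
    rw [det_diagonal, ← det_of_isUpperTriangular hb, b.2]
  obtain ⟨t, ht⟩ : ∃ t : SL n, t.val = diagonal fun i => b.val i i := ⟨⟨_, hdet⟩, rfl⟩
  have htdiag (i : Fin n) : t.val i i = b.val i i := by rw [ht, diagonal_apply_eq]
  have hentry (i j : Fin n) : b.val i j = b.val i i * (t⁻¹ * b).val i j := by
    have hmul : b.val = t.val * (t⁻¹ * b).val := by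
      rw [← Matrix.SpecialLinearGroup.coe_mul, mul_inv_cancel_left]
    rw [ht] at hmul
    simpa only [diagonal_mul] using congrFun₂ hmul i j
  have hu : SLIsUniUpper (t⁻¹ * b) := by
    refine ⟨fun i => ?_, fun i j hji => ?_⟩
    · exact (mul_eq_left₀ (val_diag_ne_zero hb i)).1 (hentry i i).symm
    · exact (mul_eq_zero_iff_left (val_diag_ne_zero hb i)).1 ((hentry i j).symm.trans (hb hji))
  calc ρ b v = ρ t (ρ (t⁻¹ * b) v) := by
        rw [← Module.End.mul_apply, ← map_mul, mul_inv_cancel_left]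
    _ = (∏ i, t.val i i ^ a i) • v := by
        rw [hunipotent _ hu, htorus t fun i j hij => ht ▸ diagonal_apply_ne _ hij]
    _ = (∏ i, b.val i i ^ a i) • v := by simp only [htdiag]

theorem span_orbit_eq_top (hρ : RepIsIrreducible ρ) (hv : v ≠ 0) :
    Submodule.span ℂ (Set.range fun g => ρ g v) = ⊤ := by
  refine (hρ.2 _ fun g => ?_).resolve_left fun hbot => hv ?_
  · change Submodule.span ℂ _ ≤ (Submodule.span ℂ _).comap (ρ g)
    refine Submodule.span_le.2 ?_
    rintro _ ⟨h, rfl⟩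
    exact Submodule.subset_span ⟨g * h, by simp only [map_mul, Module.End.mul_apply]⟩
  · rw [← Submodule.mem_bot ℂ, ← hbot]
    exact Submodule.subset_span ⟨1, by simp only [map_one, Module.End.one_apply]⟩

theorem span_dual_orbit_eq_top [FiniteDimensional ℂ X] (hρ : RepIsIrreducible ρ) {ξ : Dual ℂ X}
    (hξ : ξ ≠ 0) : Submodule.span ℂ (Set.range fun g => ξ ∘ₗ ρ g) = ⊤ := by
  have mem_coann (x : X) : x ∈ (Submodule.span ℂ (Set.range fun g => ξ ∘ₗ ρ g)).dualCoannihilator ↔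
      ∀ g, ξ (ρ g x) = 0 := by
    rw [← SetLike.mem_coe, Submodule.coe_dualCoannihilator_span]
    exact Set.forall_mem_range
  have hbot : (Submodule.span ℂ (Set.range fun g => ξ ∘ₗ ρ g)).dualCoannihilator = ⊥ := by
    refine (hρ.2 _ fun g x hx => ?_).resolve_right fun htop => hξ (LinearMap.ext fun x => ?_)
    · rw [mem_coann] at hx ⊢
      intro h
      rw [← Module.End.mul_apply, ← map_mul, hx]
    · simpa only [map_one, Module.End.one_apply, LinearMap.zero_apply] using
        (mem_coann x).1 (htop.ge Submodule.mem_top) 1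
  rw [← Subspace.dualCoannihilator_dualAnnihilator_eq
    (W := Submodule.span ℂ (Set.range fun g => ξ ∘ₗ ρ g)), hbot, Submodule.dualAnnihilator_bot]

theorem transpose_mul_specialLinearGroup (g h : SL n) :
    (g * h).transpose = h.transpose * g.transpose :=
  Subtype.ext (transpose_mul g.val h.val)

variable (ρ) in
/-- The action of `g` on the dual space by precomposition with the action of `gᵀ`: an honest left
action, in which upper unipotent matrices act through the lower unipotent ones. -/
def dualTranspose : Representation ℂ (SL n) (Dual ℂ X) where
  toFun g := Module.Dual.transpose (R := ℂ) (ρ g.transpose)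
  map_one' := by
    rw [show (1 : SL n).transpose = 1 from Subtype.ext transpose_one, map_one]
    rfl
  map_mul' g h := by
    rw [transpose_mul_specialLinearGroup, map_mul]
    rfl

variable (ρ) in
theorem exists_ne_zero_forall_comp_apply_eq [FiniteDimensional ℂ X] [Nontrivial X] :
    ∃ ξ : Dual ℂ X, ξ ≠ 0 ∧
      ∀ y : SL n, y.val.IsLowerTriangular → (∀ i, y.val i i = 1) → ξ ∘ₗ ρ y = ξ := by
  obtain ⟨ξ, hξ0, hξ⟩ := exists_ne_zero_forall_apply_eq (dualTranspose ρ)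
  exact ⟨ξ, hξ0, fun y hy hy1 => hξ y.transpose ⟨hy1, fun i j hji => hy hji⟩⟩

end HighestWeight

section MatrixCoefficients

variable {n d : ℕ}

variable (n d) in
/-- Restriction of homogeneous polynomials of degree `d` in the matrix entries to functions on
`SL n`. -/
noncomputable def homogeneousRestrict : homogeneousSubmodule (Fin n × Fin n) ℂ d →ₗ[ℂ] (SL n → ℂ) :=
  LinearMap.pi fun g => (matrixEval g.val).toLinearMap ∘ₗ Submodule.subtype _

variable (n d) in
theorem injective_homogeneousRestrict : Function.Injective (homogeneousRestrict n d) :=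
  fun p q hpq => Subtype.ext (isHomogeneous_ext_specialLinearGroup p.2 q.2 (congrFun hpq))

variable (n d) in
/-- The functions on `SL n` given by a homogeneous polynomial of degree `d` in the entries. -/
noncomputable def homogeneousFunctions : Submodule ℂ (SL n → ℂ) :=
  LinearMap.range (homogeneousRestrict n d)

theorem mem_homogeneousFunctions {f : SL n → ℂ} : f ∈ homogeneousFunctions n d ↔
    ∃ p : MvPolynomial (Fin n × Fin n) ℂ, p.IsHomogeneous d ∧ ∀ g, matrixEval g.val p = f g :=
  ⟨fun ⟨p, hp⟩ => ⟨p, p.2, congrFun hp⟩, fun ⟨p, hp, hpf⟩ => ⟨⟨p, hp⟩, funext hpf⟩⟩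

theorem comp_mul_right_mem_homogeneousFunctions {f : SL n → ℂ} (hf : f ∈ homogeneousFunctions n d)
    (h : SL n) : (fun g => f (g * h)) ∈ homogeneousFunctions n d := by
  obtain ⟨p, hp, hpf⟩ := mem_homogeneousFunctions.1 hf
  refine mem_homogeneousFunctions.2 ⟨linSubst (1 ⊗ₖ h.valᵀ) p, isHomogeneous_linSubst _ hp, ?_⟩
  intro g
  rw [matrixEval_linSubst_kronecker, one_mul, transpose_transpose, ← hpf,
    Matrix.SpecialLinearGroup.coe_mul]

theorem comp_mul_left_mem_homogeneousFunctions {f : SL n → ℂ} (hf : f ∈ homogeneousFunctions n d)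
    (h : SL n) : (fun g => f (h * g)) ∈ homogeneousFunctions n d := by
  obtain ⟨p, hp, hpf⟩ := mem_homogeneousFunctions.1 hf
  refine mem_homogeneousFunctions.2 ⟨linSubst (h.val ⊗ₖ 1) p, isHomogeneous_linSubst _ hp, ?_⟩
  intro g
  rw [matrixEval_linSubst_kronecker, transpose_one, mul_one, ← hpf,
    Matrix.SpecialLinearGroup.coe_mul]

instance : FiniteDimensional ℂ (homogeneousFunctions n d) := by
  have : FiniteDimensional ℂ (homogeneousSubmodule (Fin n × Fin n) ℂ d) :=
    Module.Finite.iff_fg.2 (homogeneousSubmodule_fg _ _ d)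
  exact LinearMap.finiteDimensional_range (homogeneousRestrict n d)

variable {X : Type*} [AddCommGroup X] [Module ℂ X] {ρ : Representation ℂ (SL n) X}
  {a : Fin n → ℕ} {v : X} {ξ : Dual ℂ X}

variable (ρ) in
/-- The matrix coefficient `g ↦ ξ (ρ g x)`, as a bilinear map of `ξ` and `x`. -/
def matrixCoeff : Dual ℂ X →ₗ[ℂ] X →ₗ[ℂ] (SL n → ℂ) :=
  LinearMap.mk₂ ℂ (fun ξ x g => ξ (ρ g x)) (fun _ _ _ => rfl) (fun _ _ _ => rfl)
    (fun ξ x y => funext fun g => by simp only [map_add, Pi.add_apply])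
    (fun c ξ x => funext fun g => by simp only [map_smul, Pi.smul_apply])

theorem comp_mul_right_matrixCoeff (h : SL n) (x : X) :
    (fun g => matrixCoeff ρ ξ x (g * h)) = matrixCoeff ρ ξ (ρ h x) :=
  funext fun g => congrArg ξ (LinearMap.congr_fun (map_mul ρ g h) x)

theorem comp_mul_left_matrixCoeff (h : SL n) (x : X) :
    (fun g => matrixCoeff ρ ξ x (h * g)) = matrixCoeff ρ (ξ ∘ₗ ρ h) x :=
  funext fun g => congrArg ξ (LinearMap.congr_fun (map_mul ρ h g) x)

theorem apply_hwVector_of_leadingMinor_ne_zero (ha : Antitone a)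
    (hv : IsHWVector ρ (fun i => (a i : ℤ)) v)
    (hξ : ∀ y : SL n, y.val.IsLowerTriangular → (∀ i, y.val i i = 1) → ξ ∘ₗ ρ y = ξ) {g : SL n}
    (hg : ∀ k, leadingMinor k g.val ≠ 0) : ξ (ρ g v) = ξ v * powerFunction a g.val := by
  obtain ⟨M, hM, hgM, hgM1⟩ := exists_isUpperTriangular_mul_isLowerTriangular hg
  have hdet : M.det = 1 := by
    have h1 := det_of_isLowerTriangular _ hgM
    simpa only [det_mul, g.2, one_mul, hgM1, Finset.prod_const_one] using h1
  obtain ⟨b, rfl⟩ : ∃ b : SL n, b.val = M := ⟨⟨_, hdet⟩, rfl⟩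
  have hξv : (∏ i, b.val i i ^ a i) * ξ (ρ g v) = ξ v := by
    have hgb := LinearMap.congr_fun (hξ (g * b) hgM hgM1) v
    rwa [LinearMap.comp_apply, map_mul, Module.End.mul_apply,
      apply_hwVector_of_isUpperTriangular hv hM, map_smul, map_smul, smul_eq_mul,
      Finset.prod_congr rfl fun i _ => zpow_natCast _ _] at hgb
  have hpow : (∏ i, b.val i i ^ a i) * powerFunction a g.val = 1 := by
    rw [← powerFunction_mul ha _ hM, ← mul_one (g.val * b.val), powerFunction_mul_left ha _ hgM,
      powerFunction_one ha, mul_one]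
    exact Finset.prod_eq_one fun i _ => by rw [hgM1, one_pow]
  linear_combination (powerFunction a g.val) * hξv - ξ (ρ g v) * hpow

variable [FiniteDimensional ℂ X]

theorem matrixCoeff_eq_smul_powerFunction (ha : Antitone a)
    (hv : IsHWVector ρ (fun i => (a i : ℤ)) v)
    (hξ : ∀ y : SL n, y.val.IsLowerTriangular → (∀ i, y.val i i = 1) → ξ ∘ₗ ρ y = ξ) :
    matrixCoeff ρ ξ v = ξ v • fun g => powerFunction a g.val := by
  obtain ⟨d, hd⟩ := exists_isHomogeneous_powerFunction (R := ℂ) a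
  have hpow : (fun g : SL n => powerFunction a g.val) ∈ homogeneousFunctions n d :=
    mem_homogeneousFunctions.2 ⟨_, hd, fun g => matrixEval_powerFunction a g.val⟩
  let S : Submodule ℂ (SL n → ℂ) := LinearMap.range (matrixCoeff ρ ξ) ⊔ homogeneousFunctions n d
  have hS (h : SL n) : S ≤ S.comap (LinearMap.funLeft ℂ ℂ (· * h)) := by
    refine sup_le ?_ fun f hf => Submodule.mem_sup_right ?_
    · rintro _ ⟨x, rfl⟩
      exact Submodule.mem_sup_left ⟨ρ h x, (comp_mul_right_matrixCoeff h x).symm⟩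
    · exact comp_mul_right_mem_homogeneousFunctions hf h
  refine sub_eq_zero.1 (eq_zero_of_forall_leadingMinor_ne_zero (S := S) (fun h f hf => hS h hf)
    (sub_mem ?_ (Submodule.smul_mem _ _ ?_)) fun g hg => sub_eq_zero.2 ?_)
  · exact Submodule.mem_sup_left ⟨v, rfl⟩
  · exact Submodule.mem_sup_right hpow
  · exact apply_hwVector_of_leadingMinor_ne_zero ha hv hξ hg

theorem exists_matrixCoeff_eq_powerFunction (hρ : RepIsIrreducible ρ) (ha : Antitone a)
    (hv : IsHWVector ρ (fun i => (a i : ℤ)) v) :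
    ∃ ξ : Dual ℂ X, ξ ≠ 0 ∧ ∀ g, ξ (ρ g v) = powerFunction a g.val := by
  have : Nontrivial X := ⟨⟨v, 0, hv.1⟩⟩
  obtain ⟨ξ, hξ0, hξ⟩ := exists_ne_zero_forall_comp_apply_eq ρ
  have hcoeff (g : SL n) : ξ (ρ g v) = ξ v * powerFunction a g.val :=
    congrFun (matrixCoeff_eq_smul_powerFunction ha hv hξ) g
  have hξv : ξ v ≠ 0 := fun hzero => hξ0 <| LinearMap.ext_on (span_orbit_eq_top hρ hv.1) <| by
    rintro _ ⟨g, rfl⟩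
    exact (hcoeff g).trans (by rw [hzero, zero_mul, LinearMap.zero_apply])
  refine ⟨(ξ v)⁻¹ • ξ, smul_ne_zero (inv_ne_zero hξv) hξ0, fun g => ?_⟩
  rw [LinearMap.smul_apply, hcoeff, smul_eq_mul, inv_mul_cancel_left₀ hξv]

theorem matrixCoeff_mem_homogeneousFunctions (hρ : RepIsIrreducible ρ) (hv : v ≠ 0) (hξ : ξ ≠ 0)
    (hcoeff : matrixCoeff ρ ξ v ∈ homogeneousFunctions n d) (η : Dual ℂ X) (x : X) :
    matrixCoeff ρ η x ∈ homogeneousFunctions n d := by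
  have hvec : ⊤ ≤ (homogeneousFunctions n d).comap (matrixCoeff ρ ξ) := by
    rw [← span_orbit_eq_top hρ hv, Submodule.span_le]
    rintro _ ⟨h, rfl⟩
    change matrixCoeff ρ ξ (ρ h v) ∈ homogeneousFunctions n d
    rw [← comp_mul_right_matrixCoeff]
    exact comp_mul_right_mem_homogeneousFunctions hcoeff h
  have hdual : ⊤ ≤ (homogeneousFunctions n d).comap ((matrixCoeff ρ).flip x) := by
    rw [← span_dual_orbit_eq_top hρ hξ, Submodule.span_le]
    rintro _ ⟨h, rfl⟩
    change matrixCoeff ρ (ξ ∘ₗ ρ h) x ∈ homogeneousFunctions n d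
    rw [← comp_mul_left_matrixCoeff]
    exact comp_mul_left_mem_homogeneousFunctions (hvec Submodule.mem_top) h
  exact hdual Submodule.mem_top

theorem exists_polynomialMap (hρ : RepIsIrreducible ρ) (ha : Antitone a)
    (hv : IsHWVector ρ (fun i => (a i : ℤ)) v) :
    ∃ P : Dual ℂ X →ₗ[ℂ] MvPolynomial (Fin n × Fin n) ℂ,
      (∀ (ξ : Dual ℂ X) (h : SL n), P (ξ ∘ₗ ρ h) = linSubst (h.val ⊗ₖ 1) (P ξ)) ∧
      ∃ ξ, P ξ = powerFunction a (mvPolynomialX (Fin n) (Fin n) ℂ) := by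
  obtain ⟨d, hd⟩ := exists_isHomogeneous_powerFunction (R := ℂ) a
  obtain ⟨ξ₀, hξ₀, hcoeff⟩ := exists_matrixCoeff_eq_powerFunction hρ ha hv
  have hmem := matrixCoeff_mem_homogeneousFunctions (d := d) hρ hv.1 hξ₀ <|
    mem_homogeneousFunctions.2 ⟨_, hd, fun g => (matrixEval_powerFunction a g.val).trans
      (hcoeff g).symm⟩
  let P : Dual ℂ X →ₗ[ℂ] homogeneousSubmodule (Fin n × Fin n) ℂ d :=
    (LinearEquiv.ofInjective _ (injective_homogeneousRestrict n d)).symm.toLinearMap ∘ₗ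
      ((matrixCoeff ρ).flip v).codRestrict _ fun ξ => hmem ξ v
  have eval_P (ξ : Dual ℂ X) (g : SL n) : matrixEval g.val (P ξ).val = ξ (ρ g v) :=
    congrFun (congrArg Subtype.val ((LinearEquiv.ofInjective _
      (injective_homogeneousRestrict n d)).apply_symm_apply ⟨matrixCoeff ρ ξ v, hmem ξ v⟩)) g
  refine ⟨Submodule.subtype _ ∘ₗ P, fun ξ h => ?_, ξ₀, ?_⟩
  · refine isHomogeneous_ext_specialLinearGroup (P _).2 (isHomogeneous_linSubst _ (P ξ).2) ?_
    intro g
    rw [matrixEval_linSubst_kronecker, transpose_one, mul_one,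
      ← Matrix.SpecialLinearGroup.coe_mul]
    exact (eval_P _ g).trans ((congrFun (comp_mul_left_matrixCoeff h v) g).symm.trans
      (eval_P ξ (h * g)).symm)
  · exact isHomogeneous_ext_specialLinearGroup (P ξ₀).2 hd fun g =>
      (eval_P ξ₀ g).trans ((hcoeff g).trans (matrixEval_powerFunction a g.val).symm)

end MatrixCoefficients

/-! ### Covariant functions of two matrices -/

section DualPairing

variable {K V W : Type*} [Field K] [AddCommGroup V] [Module K V] [FiniteDimensional K V]
  [AddCommGroup W] [Module K W] [FiniteDimensional K W]

/-- A tensor in `V ⊗ W` viewed as a bilinear form on `V* × W*`. -/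
noncomputable def dualPairing : V ⊗[K] W ≃ₗ[K] (Dual K V →ₗ[K] Dual K W →ₗ[K] K) :=
  Module.evalEquiv K (V ⊗[K] W) ≪≫ₗ (TensorProduct.dualDistribEquiv K V W).dualMap ≪≫ₗ
    (TensorProduct.lift.equiv (.id K) (Dual K V) (Dual K W) K).symm

@[simp]
theorem dualPairing_tmul (v : V) (w : W) (ξ : Dual K V) (η : Dual K W) :
    dualPairing (v ⊗ₜ[K] w) ξ η = ξ v * η w :=
  TensorProduct.dualDistrib_apply ξ η v w

theorem dualPairing_map (f : End K V) (g : End K W) (x : V ⊗[K] W) (ξ : Dual K V) (η : Dual K W) :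
    dualPairing (TensorProduct.map f g x) ξ η = dualPairing x (ξ ∘ₗ f) (η ∘ₗ g) := by
  induction x with
  | zero => simp only [map_zero, LinearMap.zero_apply]
  | tmul v w => simp only [TensorProduct.map_tmul, dualPairing_tmul, LinearMap.comp_apply]
  | add x y hx hy => simp only [map_add, LinearMap.add_apply, hx, hy]

end DualPairing

section TriangularCovariant

variable {n : ℕ}

/-- A function `F` on pairs of matrices which on `SL n × SL n` transforms under the right action of
pairs of upper triangular matrices by the weights `a` and `b`, and under the diagonal left action of
lower triangular matrices by the weight `c`. -/
structure IsTriangularCovariant (a b c : Fin n → ℕ)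
    (F : Matrix (Fin n) (Fin n) ℂ × Matrix (Fin n) (Fin n) ℂ → ℂ) : Prop where
  mul_left : ∀ {y : SL n}, y.val.IsLowerTriangular → ∀ g h : SL n,
    F ((y * g).val, (y * h).val) = (∏ i, y.val i i ^ c i) * F (g.val, h.val)
  mul_right : ∀ {y z : SL n}, y.val.IsUpperTriangular → z.val.IsUpperTriangular → ∀ g h : SL n,
    F ((g * y).val, (h * z).val) =
      (∏ i, y.val i i ^ a i) * (∏ i, z.val i i ^ b i) * F (g.val, h.val)

variable {V W : Type*} [AddCommGroup V] [Module ℂ V] [AddCommGroup W] [Module ℂ W]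
  {ρ : Representation ℂ (SL n) V} {σ : Representation ℂ (SL n) W} {a b c : Fin n → ℕ}
  {v : V} {w : W} {ξ : Dual ℂ V} {η : Dual ℂ W}

theorem comp_apply_of_isLowerTriangular (hρ : RepIsIrreducible ρ) (ha : Antitone a) (hv : v ≠ 0)
    (hξ : ∀ g, ξ (ρ g v) = powerFunction a g.val) {y : SL n} (hy : y.val.IsLowerTriangular) :
    ξ ∘ₗ ρ y = (∏ i, y.val i i ^ a i) • ξ := by
  refine LinearMap.ext_on (span_orbit_eq_top hρ hv) ?_
  rintro _ ⟨g, rfl⟩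
  calc ξ (ρ y (ρ g v)) = ξ (ρ (y * g) v) := by rw [map_mul, Module.End.mul_apply]
    _ = (∏ i, y.val i i ^ a i) * ξ (ρ g v) := by
      rw [hξ, hξ, Matrix.SpecialLinearGroup.coe_mul, powerFunction_mul_left ha _ hy]

variable [FiniteDimensional ℂ V] [FiniteDimensional ℂ W]

theorem exists_dualPairing_ne_zero (hρ : RepIsIrreducible ρ) (hσ : RepIsIrreducible σ)
    (hξ : ξ ≠ 0) (hη : η ≠ 0) {x : V ⊗[ℂ] W} (hx : x ≠ 0) :
    ∃ g h, dualPairing x (ξ ∘ₗ ρ g) (η ∘ₗ σ h) ≠ 0 := by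
  by_contra! hzero
  refine hx (dualPairing.map_eq_zero_iff.1 (LinearMap.ext_on (span_dual_orbit_eq_top hρ hξ) ?_))
  rintro _ ⟨g, rfl⟩
  refine LinearMap.ext_on (span_dual_orbit_eq_top hσ hη) ?_
  rintro _ ⟨h, rfl⟩
  exact hzero g h

theorem exists_continuous_eq_dualPairing {d e : ℕ}
    (hξ : ∀ v, matrixCoeff ρ ξ v ∈ homogeneousFunctions n d)
    (hη : ∀ w, matrixCoeff σ η w ∈ homogeneousFunctions n e) (x : V ⊗[ℂ] W) :
    ∃ F : Matrix (Fin n) (Fin n) ℂ × Matrix (Fin n) (Fin n) ℂ → ℂ, Continuous F ∧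
      ∀ g h : SL n, F (g.val, h.val) =
        dualPairing x (ξ ∘ₗ ρ g.transpose) (η ∘ₗ σ h.transpose) := by
  induction x with
  | zero => exact ⟨0, continuous_const, fun g h => by
      simp only [map_zero, LinearMap.zero_apply, Pi.zero_apply]⟩
  | add x y hx hy =>
    obtain ⟨F, hF, hFx⟩ := hx
    obtain ⟨G, hG, hGy⟩ := hy
    exact ⟨F + G, hF.add hG, fun g h => by
      simp only [map_add, LinearMap.add_apply, Pi.add_apply, hFx, hGy]⟩
  | tmul v w =>
    obtain ⟨p, -, hp⟩ := mem_homogeneousFunctions.1 (hξ v)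
    obtain ⟨q, -, hq⟩ := mem_homogeneousFunctions.1 (hη w)
    refine ⟨fun X => matrixEval X.1ᵀ p * matrixEval X.2ᵀ q, ?_, fun g h => ?_⟩
    · exact ((MvPolynomial.continuous_eval p).comp (by fun_prop)).mul
        ((MvPolynomial.continuous_eval q).comp (by fun_prop))
    · rw [dualPairing_tmul]
      exact congrArg₂ (· * ·) (hp g.transpose) (hq h.transpose)

theorem isTriangularCovariant_of_eq_dualPairing
    (hξ : ∀ {y : SL n}, y.val.IsLowerTriangular → ξ ∘ₗ ρ y = (∏ i, y.val i i ^ a i) • ξ)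
    (hη : ∀ {y : SL n}, y.val.IsLowerTriangular → η ∘ₗ σ y = (∏ i, y.val i i ^ b i) • η)
    {x : V ⊗[ℂ] W} (hx : IsHWVector (tensorRep2 ρ σ) (fun i => (c i : ℤ)) x)
    {F : Matrix (Fin n) (Fin n) ℂ × Matrix (Fin n) (Fin n) ℂ → ℂ}
    (hF : ∀ g h : SL n, F (g.val, h.val) =
      dualPairing x (ξ ∘ₗ ρ g.transpose) (η ∘ₗ σ h.transpose)) :
    IsTriangularCovariant a b c F where
  mul_left {y} hy g h := by
    have hweight : TensorProduct.map (ρ y.transpose) (σ y.transpose) x =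
        (∏ i, y.val i i ^ c i) • x := by
      refine (apply_hwVector_of_isUpperTriangular hx hy.transpose).trans ?_
      simp only [zpow_natCast, Matrix.SpecialLinearGroup.coe_transpose, transpose_apply]
    rw [hF, hF, transpose_mul_specialLinearGroup, transpose_mul_specialLinearGroup, map_mul,
      map_mul, Module.End.mul_eq_comp, Module.End.mul_eq_comp, ← LinearMap.comp_assoc,
      ← LinearMap.comp_assoc, ← dualPairing_map, hweight, map_smul, LinearMap.smul_apply,
      LinearMap.smul_apply, smul_eq_mul]
  mul_right {y z} hy hz g h := by
    have hξy := hξ (y := y.transpose) hy.transpose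
    have hηz := hη (y := z.transpose) hz.transpose
    simp only [Matrix.SpecialLinearGroup.coe_transpose, transpose_apply] at hξy hηz
    rw [hF, hF, transpose_mul_specialLinearGroup, transpose_mul_specialLinearGroup, map_mul,
      map_mul, Module.End.mul_eq_comp, Module.End.mul_eq_comp, ← LinearMap.comp_assoc,
      ← LinearMap.comp_assoc, hξy, hηz, LinearMap.smul_comp, LinearMap.smul_comp, map_smul,
      map_smul, LinearMap.smul_apply, smul_eq_mul, smul_eq_mul, mul_assoc, mul_left_comm]

theorem exists_isTriangularCovariant (hρ : RepIsIrreducible ρ) (hσ : RepIsIrreducible σ)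
    (ha : Antitone a) (hb : Antitone b) (hρa : Occurs ρ fun i => (a i : ℤ))
    (hσb : Occurs σ fun i => (b i : ℤ)) (hc : Occurs (tensorRep2 ρ σ) fun i => (c i : ℤ)) :
    ∃ F, Continuous F ∧ IsTriangularCovariant a b c F ∧ ∃ g h : SL n, F (g.val, h.val) ≠ 0 := by
  obtain ⟨v, hv⟩ := hρa
  obtain ⟨w, hw⟩ := hσb
  obtain ⟨x, hx⟩ := hc
  obtain ⟨ξ, hξ0, hξ⟩ := exists_matrixCoeff_eq_powerFunction hρ ha hv
  obtain ⟨η, hη0, hη⟩ := exists_matrixCoeff_eq_powerFunction hσ hb hw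
  obtain ⟨d, hd⟩ := exists_isHomogeneous_powerFunction (R := ℂ) a
  obtain ⟨e, he⟩ := exists_isHomogeneous_powerFunction (R := ℂ) b
  obtain ⟨F, hF, hFx⟩ := exists_continuous_eq_dualPairing
    (matrixCoeff_mem_homogeneousFunctions hρ hv.1 hξ0 (mem_homogeneousFunctions.2 ⟨_, hd,
      fun g => (matrixEval_powerFunction a g.val).trans (hξ g).symm⟩) ξ)
    (matrixCoeff_mem_homogeneousFunctions hσ hw.1 hη0 (mem_homogeneousFunctions.2 ⟨_, he,
      fun g => (matrixEval_powerFunction b g.val).trans (hη g).symm⟩) η) x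
  obtain ⟨g, h, hgh⟩ := exists_dualPairing_ne_zero hρ hσ hξ0 hη0 hx.1
  refine ⟨F, hF, isTriangularCovariant_of_eq_dualPairing
    (comp_apply_of_isLowerTriangular hρ ha hv.1 hξ)
    (comp_apply_of_isLowerTriangular hσ hb hw.1 hη) hx hFx, g.transpose, h.transpose, ?_⟩
  rwa [hFx]

end TriangularCovariant

section Degeneration

variable {n : ℕ}

/-- The exponents of the one-parameter subgroup of the diagonal torus of `SL n` attached to a
subset `I`, which contracts the coordinates outside `I` relative to those in `I`. -/
def subsetWeight (I : Finset (Fin n)) (i : Fin n) : ℤ := I.card - if i ∈ I then (n : ℤ) else 0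

theorem prod_zpow_subsetWeight (I : Finset (Fin n)) {t : ℂ} (ht : t ≠ 0) (a : Fin n → ℕ) :
    ∏ i, (t ^ subsetWeight I i) ^ a i =
      t ^ ((I.card * ∑ i, a i : ℕ) - (n * ∑ i ∈ I, a i : ℕ) : ℤ) := by
  have hprod (i : Fin n) : (t ^ subsetWeight I i) ^ a i =
      t ^ (I.card * a i) / (if i ∈ I then t ^ (n * a i) else 1) := by
    rw [subsetWeight, zpow_sub₀ ht, div_pow, zpow_natCast, pow_mul]
    split_ifs
    · rw [zpow_natCast, pow_mul]
    · rw [zpow_zero, one_pow]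
  rw [Finset.prod_congr rfl fun i _ => hprod i, Finset.prod_div_distrib, Finset.prod_ite_mem,
    Finset.univ_inter, Finset.prod_pow_eq_pow_sum, Finset.prod_pow_eq_pow_sum, ← Finset.mul_sum,
    ← Finset.mul_sum, zpow_sub₀ ht, zpow_natCast, zpow_natCast]

theorem exists_val_eq_diagonal_subsetWeight (I : Finset (Fin n)) {t : ℂ} (ht : t ≠ 0) :
    ∃ y : SL n, y.val = diagonal fun i => t ^ subsetWeight I i := by
  suffices hdet : (diagonal fun i => t ^ subsetWeight I i).det = 1 from ⟨⟨_, hdet⟩, rfl⟩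
  have hprod := prod_zpow_subsetWeight I ht fun _ => 1
  simp only [pow_one, Finset.sum_const, Finset.card_univ, Fintype.card_fin, smul_eq_mul,
    mul_one] at hprod
  rw [det_diagonal, hprod, mul_comm n, sub_self, zpow_zero]

/-- The family of matrices which is `G` at `z = 1` and whose limit at `z = 0` keeps only the blocks
`I × J` and `Iᶜ × Jᶜ` of `G`, for `G` vanishing on the block `Iᶜ × J`. -/
def degeneration (I J : Finset (Fin n)) (z : ℂ) (G : Matrix (Fin n) (Fin n) ℂ) :
    Matrix (Fin n) (Fin n) ℂ :=
  of fun i j => if i ∈ I ∧ j ∉ J then z * G i j else G i j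

theorem diagonal_mul_mul_diagonal {I J : Finset (Fin n)} (hIJ : I.card = J.card) {t : ℂ}
    (ht : t ≠ 0) {G : Matrix (Fin n) (Fin n) ℂ} (hG : ∀ i ∉ I, ∀ j ∈ J, G i j = 0) :
    diagonal (fun i => t⁻¹ ^ subsetWeight I i) * (G * diagonal fun j => t ^ subsetWeight J j) =
      degeneration I J (t ^ n) G := by
  ext i j
  rw [diagonal_mul, mul_diagonal, degeneration, of_apply, _root_.inv_zpow', mul_left_comm,
    mul_comm (G i j), ← zpow_add₀ ht, subsetWeight, subsetWeight, hIJ]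
  by_cases hi : i ∈ I <;> by_cases hj : j ∈ J
  · simp [hi, hj]
  · simp [hi, hj]
  · simp [hi, hj, hG i hi j hj]
  · simp [hi, hj]

theorem continuous_degeneration (I J : Finset (Fin n)) (G : Matrix (Fin n) (Fin n) ℂ) :
    Continuous fun z => degeneration I J z G := by
  refine continuous_matrix fun i j => ?_
  simp only [degeneration, of_apply]
  split_ifs <;> fun_prop

variable {F : Matrix (Fin n) (Fin n) ℂ × Matrix (Fin n) (Fin n) ℂ → ℂ} {a b c : Fin n → ℕ}
  {I J K : Finset (Fin n)} {g h : SL n}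

theorem IsTriangularCovariant.pow_mul_degeneration (hF : IsTriangularCovariant a b c F)
    (hsum : ∑ i, a i + ∑ i, b i = ∑ i, c i) (hIJ : I.card = J.card) (hIK : I.card = K.card)
    (hg : ∀ i ∉ I, ∀ j ∈ J, g.val i j = 0) (hh : ∀ i ∉ I, ∀ j ∈ K, h.val i j = 0) {e : ℕ}
    (he : ∑ i ∈ I, c i + e = ∑ j ∈ J, a j + ∑ j ∈ K, b j) {t : ℂ} (ht : t ≠ 0) :
    t ^ (n * e) * F (degeneration I J (t ^ n) g.val, degeneration I K (t ^ n) h.val) =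
      F (g.val, h.val) := by
  obtain ⟨y, hy⟩ := exists_val_eq_diagonal_subsetWeight I (inv_ne_zero ht)
  obtain ⟨z, hz⟩ := exists_val_eq_diagonal_subsetWeight J ht
  obtain ⟨w, hw⟩ := exists_val_eq_diagonal_subsetWeight K ht
  have hyg : (y * (g * z)).val = degeneration I J (t ^ n) g.val := by
    rw [Matrix.SpecialLinearGroup.coe_mul, Matrix.SpecialLinearGroup.coe_mul, hy, hz,
      diagonal_mul_mul_diagonal hIJ ht hg]
  have hyh : (y * (h * w)).val = degeneration I K (t ^ n) h.val := by
    rw [Matrix.SpecialLinearGroup.coe_mul, Matrix.SpecialLinearGroup.coe_mul, hy, hw,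
      diagonal_mul_mul_diagonal hIK ht hh]
  rw [← hyg, ← hyh, hF.mul_left (hy ▸ blockTriangular_diagonal _),
    hF.mul_right (hz ▸ blockTriangular_diagonal _) (hw ▸ blockTriangular_diagonal _), hy, hz, hw]
  simp only [diagonal_apply_eq, prod_zpow_subsetWeight _ ht,
    prod_zpow_subsetWeight _ (inv_ne_zero ht)]
  rw [← mul_assoc, ← mul_assoc, ← zpow_natCast, _root_.inv_zpow', ← zpow_add₀ ht, ← zpow_add₀ ht,
    ← zpow_add₀ ht, ← hIJ, ← hIK, ← hsum]
  convert one_mul _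
  convert zpow_zero t
  zify at he
  push_cast
  linear_combination (n : ℤ) * he

theorem IsTriangularCovariant.sum_add_sum_le (hF : IsTriangularCovariant a b c F)
    (hcont : Continuous F) (hsum : ∑ i, a i + ∑ i, b i = ∑ i, c i) (hIJ : I.card = J.card)
    (hIK : I.card = K.card) (hg : ∀ i ∉ I, ∀ j ∈ J, g.val i j = 0)
    (hh : ∀ i ∉ I, ∀ j ∈ K, h.val i j = 0) (hgh : F (g.val, h.val) ≠ 0) :
    ∑ j ∈ J, a j + ∑ j ∈ K, b j ≤ ∑ i ∈ I, c i := by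
  by_contra! hlt
  have hn : n ≠ 0 := by
    rintro rfl
    simp only [Finset.eq_empty_of_isEmpty, Finset.sum_empty] at hlt
    exact absurd hlt (lt_irrefl 0)
  obtain ⟨e, he, hsum_lt⟩ := exists_pos_add_of_lt hlt
  have hcont' : Continuous fun t : ℂ =>
      t ^ (n * e) * F (degeneration I J (t ^ n) g.val, degeneration I K (t ^ n) h.val) :=
    (continuous_pow (n * e)).mul (hcont.comp
      (((continuous_degeneration I J g.val).comp (continuous_pow n)).prodMk
        ((continuous_degeneration I K h.val).comp (continuous_pow n))))
  have hconst := Continuous.ext_on (dense_compl_singleton (0 : ℂ)) hcont'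
    (continuous_const (y := F (g.val, h.val)))
    fun t ht => hF.pow_mul_degeneration hsum hIJ hIK hg hh hsum_lt ht
  refine hgh ((congrFun hconst 0).symm.trans ?_)
  simp only [zero_pow (mul_ne_zero hn he.ne'), zero_mul]

end Degeneration

section Positions

open Submodule

variable {K W : Type*} [Field K] [AddCommGroup W] [Module K W]

theorem span_image_inter {α : Type*} {b : α → W} (hb : LinearIndependent K b) (S T : Set α) :
    span K (b '' (S ∩ T)) = span K (b '' S) ⊓ span K (b '' T) := by
  simp only [Finsupp.span_image_eq_map_linearCombination, Finsupp.supported_inter,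
    Submodule.map_inf _ hb]

theorem le_of_mem_span_image_Iic {n d : ℕ} {b : Fin n → W} (hb : LinearIndependent K b)
    {J J' : Fin d ↪o Fin n} {s : Fin d → W} (hs : LinearIndependent K s)
    (hJ : ∀ k, s k ∈ span K (b '' Set.Iic (J k)))
    (hJ' : ∀ k, s k ∈ span K (Set.range (b ∘ J'))) (k : Fin d) : J' k ≤ J k := by
  classical
  by_contra! hlt
  have hinter : Set.Iic (J k) ∩ Set.range J' ⊆ J' '' Set.Iio k := by
    rintro _ ⟨hle, l, rfl⟩
    exact ⟨l, J'.lt_iff_lt.1 (lt_of_le_of_lt hle hlt), rfl⟩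
  have hspan : Set.range (fun l : Set.Iic k => s l) ⊆
      span K ((Finset.Iio k).image (b ∘ J') : Set W) := by
    rintro _ ⟨l, rfl⟩
    rw [Finset.coe_image, Finset.coe_Iio, Set.image_comp]
    refine span_mono (Set.image_mono hinter) ?_
    rw [span_image_inter hb, ← Set.range_comp]
    exact ⟨span_image_Iic_mono b (J.monotone l.2) (hJ l), hJ' l⟩
  have hcard := linearIndependent_le_span' _ (hs.comp _ Subtype.val_injective) _ hspan
  rw [Cardinal.mk_fintype, Nat.cast_le] at hcard
  have hcard_le : Fintype.card (Set.Iic k) ≤ k := hcard.trans <| by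
    simpa [Function.comp_def] using Finset.card_image_le (s := Finset.Iio k) (f := b ∘ J')
  simp at hcard_le

end Positions

section TriangularFrames

open Submodule

variable {n : ℕ}

theorem euclideanCol_mul (X B : Matrix (Fin n) (Fin n) ℂ) (j : Fin n) :
    euclideanCol (X * B) j = ∑ l, B l j • euclideanCol X l := by
  ext i
  simp [euclideanCol, mul_apply, mul_comm]

theorem exists_isUpperTriangular_euclideanCol_mul_eq {X : Matrix (Fin n) (Fin n) ℂ}
    {b : Fin n → EuclideanSpace ℂ (Fin n)}
    (hb : ∀ j, b j ∈ span ℂ (euclideanCol X '' Set.Iic j)) :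
    ∃ B : Matrix (Fin n) (Fin n) ℂ, B.IsUpperTriangular ∧ euclideanCol (X * B) = b := by
  choose c hc hcb using fun j => (Finsupp.mem_span_image_iff_linearCombination ℂ).1 (hb j)
  refine ⟨of fun l j => c j l, fun l j hlj => (Finsupp.mem_supported' _ _).1 (hc j) l hlj.not_ge,
    funext fun j => ?_⟩
  rw [euclideanCol_mul, ← hcb]
  exact (Finsupp.sum_fintype (c j) (fun l x => x • euclideanCol X l) fun _ => zero_smul ℂ _).symm

theorem exists_isUpperTriangular_span_euclideanCol {X : Matrix (Fin n) (Fin n) ℂ}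
    (hX : X.det ≠ 0) {d : ℕ} {s : Fin d → EuclideanSpace ℂ (Fin n)} (hs : LinearIndependent ℂ s)
    {J : Fin d ↪o Fin n} (hJ : ∀ k, s k ∈ span ℂ (euclideanCol X '' Set.Iic (J k))) :
    ∃ b : SL n, b.val.IsUpperTriangular ∧ ∃ J' : Fin d ↪o Fin n, (∀ k, J' k ≤ J k) ∧
      span ℂ (euclideanCol (X * b.val) '' Set.range J') = span ℂ (Set.range s) := by
  obtain ⟨S, hS⟩ : ∃ S, span ℂ (Set.range s) = S := ⟨_, rfl⟩
  obtain rfl : finrank ℂ S = d := by rw [← hS, finrank_span_eq_card hs, Fintype.card_fin]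
  obtain ⟨v, J', hv, hvX, hvS⟩ :=
    exists_adapted_basis (linearIndependent_euclideanCol_iff.2 hX) finrank_euclideanSpace_fin S
  obtain ⟨B, hB, hXB⟩ := exists_isUpperTriangular_euclideanCol_mul_eq (X := X) (b := v) fun j =>
    hvX j ▸ apply_mem_span_image_Iic v le_rfl
  have hBdet : B.det ≠ 0 := by
    rw [← hXB, linearIndependent_euclideanCol_iff, det_mul] at hv
    exact right_ne_zero_of_mul hv
  obtain ⟨c, hc, hdet⟩ := exists_det_smul_eq_one hBdet
  obtain ⟨t, ht⟩ : ∃ t : SL n, t.val = c • B := ⟨⟨_, hdet⟩, rfl⟩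
  have hcol : euclideanCol (X * t.val) = fun j => c • v j := by
    ext j : 1
    rw [ht, ← hXB, Matrix.mul_smul]
    rfl
  refine ⟨t, fun i j hij => ?_, J', le_of_mem_span_image_Iic hv hs (fun k => ?_) fun k => ?_, ?_⟩
  · rw [ht, Matrix.smul_apply, hB hij, smul_zero]
  · rw [hvX]
    exact hJ k
  · rw [hvS, ← hS]
    exact subset_span ⟨k, rfl⟩
  · rw [hS]
    refine Eq.trans ?_ hvS
    rw [hcol, Set.range_comp, ← Set.image_image (c • ·) v]
    exact span_smul_eq_of_isUnit _ c hc.isUnit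

theorem exists_isLowerTriangular_mul_revMatrix_mul {b : SL n} (hb : b.val.IsUpperTriangular) :
    ∃ y : SL n, y.val.IsLowerTriangular ∧ y.val * (revMatrix n ℂ * b.val) = revMatrix n ℂ := by
  have hdet : (revMatrix n ℂ * (b⁻¹).val * revMatrix n ℂ).det = 1 := by
    rw [det_mul_right_comm, det_mul, revMatrix_mul_revMatrix, det_one, one_mul, (b⁻¹).2]
  obtain ⟨y, hy⟩ : ∃ y : SL n, y.val = revMatrix n ℂ * (b⁻¹).val * revMatrix n ℂ :=
    ⟨⟨_, hdet⟩, rfl⟩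
  refine ⟨y, ?_, ?_⟩
  · rw [hy, revMatrix_mul_mul_revMatrix]
    exact fun i j hij => isUpperTriangular_val_inv hb (Fin.rev_lt_rev.2 hij)
  · rw [hy, mul_assoc, ← mul_assoc (revMatrix n ℂ) (revMatrix n ℂ), revMatrix_mul_revMatrix,
      one_mul, mul_assoc, ← Matrix.SpecialLinearGroup.coe_mul, inv_mul_cancel,
      Matrix.SpecialLinearGroup.coe_one, mul_one]

theorem mul_apply_eq_zero_of_mem_span {M P G : Matrix (Fin n) (Fin n) ℂ} {S : Set (Fin n)}
    {i j : Fin n} (hP : ∀ l ∈ S, (M * P) i l = 0)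
    (hG : euclideanCol G j ∈ span ℂ (euclideanCol P '' S)) : (M * G) i j = 0 := by
  have hle : span ℂ (euclideanCol P '' S) ≤
      LinearMap.ker ((LinearMap.proj i ∘ₗ M.mulVecLin) ∘ₗ
        (WithLp.linearEquiv 2 ℂ (Fin n → ℂ)).toLinearMap) :=
    span_le.2 (Set.image_subset_iff.2 hP)
  exact hle hG

end TriangularFrames

section Semistability

open Submodule

variable {n : ℕ} {F : Matrix (Fin n) (Fin n) ℂ × Matrix (Fin n) (Fin n) ℂ → ℂ}
  {a b c : Fin n → ℕ} {g h : SL n}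

theorem IsTriangularCovariant.apply_ne_zero (hF : IsTriangularCovariant a b c F) {y z w : SL n}
    (hy : y.val.IsLowerTriangular) (hz : z.val.IsUpperTriangular) (hw : w.val.IsUpperTriangular)
    (hgh : F (g.val, h.val) ≠ 0) : F ((y * (g * z)).val, (y * (h * w)).val) ≠ 0 := by
  have hprod {x : SL n} (hx : x.val.IsUpperTriangular) (a : Fin n → ℕ) :
      ∏ i, x.val i i ^ a i ≠ 0 :=
    Finset.prod_ne_zero_iff.2 fun i _ => pow_ne_zero _ (val_diag_ne_zero hx i)
  rw [hF.mul_left hy, hF.mul_right hz hw]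
  exact mul_ne_zero (hprod (x := y.transpose) hy.transpose c)
    (mul_ne_zero (mul_ne_zero (hprod hz a) (hprod hw b)) hgh)

theorem IsTriangularCovariant.sum_comp_add_sum_comp_le (hF : IsTriangularCovariant a b c F)
    (hcont : Continuous F) (hsum : ∑ i, a i + ∑ i, b i = ∑ i, c i) (hgh : F (g.val, h.val) ≠ 0)
    {x z w : SL n} (hx : x.val.IsUpperTriangular) (hz : z.val.IsUpperTriangular)
    (hw : w.val.IsUpperTriangular) {d : ℕ} {I J K : Fin d ↪o Fin n}
    (hJ : span ℂ (euclideanCol (g.val * z.val) '' Set.range J) =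
      span ℂ (euclideanCol (revMatrix n ℂ * x.val) '' Set.range I))
    (hK : span ℂ (euclideanCol (h.val * w.val) '' Set.range K) =
      span ℂ (euclideanCol (revMatrix n ℂ * x.val) '' Set.range I)) :
    ∑ k, a (J k) + ∑ k, b (K k) ≤ ∑ k, c (I k).rev := by
  obtain ⟨y, hy, hyx⟩ := exists_isLowerTriangular_mul_revMatrix_mul hx
  let I' : Finset (Fin n) := Finset.univ.map (I.toEmbedding.trans Fin.revPerm.toEmbedding)
  have hrev : ∀ i ∉ I', ∀ l ∈ Set.range I, (y.val * (revMatrix n ℂ * x.val)) i l = 0 := by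
    rintro i hi _ ⟨k, rfl⟩
    have hne : i.rev ≠ I k := fun h => hi <|
      Finset.mem_map.2 ⟨k, Finset.mem_univ k, by simp [← h]⟩
    rw [hyx]
    exact (congrFun (PEquiv.toMatrix_toPEquiv_apply Fin.revPerm i) _).trans
      (Pi.single_eq_of_ne' hne _)
  have hzero {p q : SL n} {L : Fin d ↪o Fin n}
      (hL : span ℂ (euclideanCol (p.val * q.val) '' Set.range L) =
        span ℂ (euclideanCol (revMatrix n ℂ * x.val) '' Set.range I)) :
      ∀ i ∉ I', ∀ j ∈ Finset.univ.map L.toEmbedding, (y * (p * q)).val i j = 0 := by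
    intro i hi j hj
    obtain ⟨k, -, rfl⟩ := Finset.mem_map.1 hj
    rw [Matrix.SpecialLinearGroup.coe_mul, Matrix.SpecialLinearGroup.coe_mul]
    exact mul_apply_eq_zero_of_mem_span (hrev i hi)
      (hL ▸ subset_span (Set.mem_image_of_mem _ ⟨k, rfl⟩))
  have hle := hF.sum_add_sum_le hcont hsum (by simp [I']) (by simp [I']) (hzero hJ) (hzero hK)
    (hF.apply_ne_zero hy hz hw hgh)
  rwa [Finset.sum_map, Finset.sum_map, Finset.sum_map] at hle

theorem IsTriangularCovariant.isSemistable {m r : ℕ} (hm : 0 < m)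
    (hF : IsTriangularCovariant (m • a) (m • b) (m • c) F) (hcont : Continuous F)
    (ha : Antitone a) (hb : Antitone b) (hc : Antitone c) (hcr : ∀ j, c j ≤ r)
    (hsum : ∑ i, a i + ∑ i, b i = ∑ i, c i) (hgh : F (g.val, h.val) ≠ 0) :
    IsSemistable (tripleWeight a b c r) r
      fun i => euclideanCol ((![g.val, h.val, revMatrix n ℂ] : Fin 3 → Matrix _ _ ℂ) i) := by
  intro d J s hs
  have hspan (i : Fin 3) : span ℂ (Set.range (s i)) = span ℂ (Set.range (s 2)) :=
    le_antisymm (span_le.2 (Set.range_subset_iff.2 (hs.mem_span_range i 2)))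
      (span_le.2 (Set.range_subset_iff.2 (hs.mem_span_range 2 i)))
  obtain ⟨z, hz, J₀, hJ₀, hspan₀⟩ := exists_isUpperTriangular_span_euclideanCol
    (g.2.trans_ne one_ne_zero) (hs.linearIndependent 0) (hs.mem_flag 0)
  obtain ⟨w, hw, J₁, hJ₁, hspan₁⟩ := exists_isUpperTriangular_span_euclideanCol
    (h.2.trans_ne one_ne_zero) (hs.linearIndependent 1) (hs.mem_flag 1)
  obtain ⟨x, hx, J₂, hJ₂, hspan₂⟩ := exists_isUpperTriangular_span_euclideanCol
    (left_ne_zero_of_mul_eq_one (det_revMatrix_mul_self n ℂ)) (hs.linearIndependent 2)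
    (hs.mem_flag 2)
  have hhorn : ∑ k, a (J₀ k) + ∑ k, b (J₁ k) ≤ ∑ k, c (J₂ k).rev := by
    have hscaled := hF.sum_comp_add_sum_comp_le hcont
      (by simp only [Pi.smul_apply, ← Finset.smul_sum, ← smul_add, hsum]) hgh hx hz hw
      (hspan₀.trans ((hspan 0).trans hspan₂.symm)) (hspan₁.trans ((hspan 1).trans hspan₂.symm))
    simp only [Pi.smul_apply, smul_eq_mul, ← Finset.mul_sum, ← mul_add] at hscaled
    exact Nat.le_of_mul_le_mul_left hscaled hm
  calc ∑ i, ∑ k, tripleWeight a b c r i (J i k)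
      ≤ ∑ k, a (J₀ k) + ∑ k, b (J₁ k) + ∑ k, (r - c (J₂ k).rev) := by
        rw [Fin.sum_univ_three]
        exact add_le_add_three
          (Finset.sum_le_sum fun k _ => antitone_tripleWeight ha hb hc 0 (hJ₀ k))
          (Finset.sum_le_sum fun k _ => antitone_tripleWeight ha hb hc 1 (hJ₁ k))
          (Finset.sum_le_sum fun k _ => antitone_tripleWeight ha hb hc 2 (hJ₂ k))
    _ ≤ ∑ k, c (J₂ k).rev + ∑ k, (r - c (J₂ k).rev) := Nat.add_le_add_right hhorn _
    _ = d * r := by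
        rw [← Finset.sum_add_distrib]
        simp [Nat.add_sub_cancel' (hcr _)]

end Semistability

/-! ### The apolar form -/

section Apolar

variable {R S σ : Type*} [CommRing R] [CommRing S] [Fintype σ]

/-- The product of the factorials of the exponents. -/
def multifactorial (α : σ →₀ ℕ) : ℕ := ∏ i, (α i).factorial

theorem multifactorial_pos (α : σ →₀ ℕ) : 0 < multifactorial α :=
  Finset.prod_pos fun _ _ => Nat.factorial_pos _

theorem multifactorial_add_single (α : σ →₀ ℕ) (i : σ) :
    multifactorial (α + Finsupp.single i 1) = (α i + 1) * multifactorial α := by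
  classical
  have hne : ∀ j ∈ Finset.univ.erase i,
      ((α + Finsupp.single i 1 : σ →₀ ℕ) j).factorial = (α j).factorial := fun j hj => by
    rw [Finsupp.add_apply, Finsupp.single_eq_of_ne (Finset.ne_of_mem_erase hj), add_zero]
  rw [multifactorial, multifactorial, ← Finset.mul_prod_erase _ _ (Finset.mem_univ i),
    ← Finset.mul_prod_erase _ (fun j => (α j).factorial) (Finset.mem_univ i),
    Finset.prod_congr rfl hne, Finsupp.add_apply, Finsupp.single_eq_same, Nat.factorial_succ,
    mul_assoc]

/-- The apolar bilinear form, which applies the differential operator with symbol the first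
polynomial to the second one and evaluates the result at `0`. -/
noncomputable def apolar : MvPolynomial σ R →ₗ[R] MvPolynomial σ R →ₗ[R] R :=
  (basisMonomials σ R).constr R fun α => (multifactorial α : R) • lcoeff R α

theorem apolar_monomial (α : σ →₀ ℕ) (c : R) (q : MvPolynomial σ R) :
    apolar (monomial α c) q = c * (multifactorial α * coeff α q) := by
  have hbasis : apolar (basisMonomials σ R α) = (multifactorial α : R) • lcoeff R α :=
    (basisMonomials σ R).constr_basis R _ α
  rw [coe_basisMonomials] at hbasis
  have hmonomial : monomial α c = c • monomial α (1 : R) := by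
    rw [smul_monomial, smul_eq_mul, mul_one]
  rw [hmonomial, map_smul, hbasis]
  rfl

theorem apolar_eq_sum (p q : MvPolynomial σ R) :
    apolar p q = ∑ α ∈ p.support, coeff α p * (multifactorial α * coeff α q) := by
  conv_lhs => rw [p.as_sum]
  simp only [map_sum, LinearMap.sum_apply, apolar_monomial]

theorem map_apolar (φ : R →+* S) (p q : MvPolynomial σ R) :
    φ (apolar p q) = apolar (p.map φ) (q.map φ) := by
  induction p using MvPolynomial.induction_on' with
  | monomial α c =>
    rw [map_monomial, apolar_monomial, apolar_monomial, coeff_map, map_mul, map_mul, map_natCast]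
  | add p p' hp hp' => simp only [map_add, LinearMap.add_apply, hp, hp']

theorem apolar_self_pos {R : Type*} [CommRing R] [LinearOrder R] [IsStrictOrderedRing R]
    {p : MvPolynomial σ R} (hp : p ≠ 0) : 0 < apolar p p := by
  rw [apolar_eq_sum]
  refine Finset.sum_pos (fun α hα => ?_) (support_nonempty.2 hp)
  rw [mul_left_comm]
  exact mul_pos (Nat.cast_pos.2 (multifactorial_pos α))
    (mul_self_pos.2 (MvPolynomial.mem_support_iff.1 hα))

theorem apolar_mul_X (p q : MvPolynomial σ R) (i : σ) :
    apolar (p * X i) q = apolar p (pderiv i q) := by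
  induction p using MvPolynomial.induction_on' with
  | monomial α c =>
    rw [X, monomial_mul, mul_one, apolar_monomial, apolar_monomial, coeff_pderiv,
      multifactorial_add_single]
    push_cast
    ring
  | add p p' h h' => rw [add_mul, map_add, map_add, LinearMap.add_apply, LinearMap.add_apply, h, h']

theorem linSubst_X (L : Matrix σ σ R) (i : σ) : linSubst L (X i) = ∑ j, C (L i j) * X j := by
  rw [linSubst, bind₁_X_right, toMvPolynomial]
  simp only [C_mul_X_eq_monomial]

theorem pderiv_linSubst_X (L : Matrix σ σ R) (i k : σ) :
    pderiv i (linSubst L (X k)) = C (L k i) := by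
  classical
  simp only [linSubst_X, map_sum, pderiv_C_mul, pderiv_X, Pi.single_apply, mul_ite, mul_one,
    mul_zero, Finset.sum_ite_eq', Finset.mem_univ, if_true]

theorem pderiv_linSubst (L : Matrix σ σ R) (q : MvPolynomial σ R) (i : σ) :
    pderiv i (linSubst L q) = ∑ j, C (L j i) * linSubst L (pderiv j q) := by
  classical
  induction q using MvPolynomial.induction_on with
  | C c => simp only [algHom_C, algebraMap_eq, pderiv_C, map_zero, mul_zero, Finset.sum_const_zero]
  | add p q hp hq => simp only [map_add, hp, hq, mul_add, Finset.sum_add_distrib]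
  | mul_X p k hp =>
    have hX : ∑ j, C (L j i) * (linSubst L p * linSubst L (pderiv j (X k))) =
        linSubst L p * C (L k i) := by
      rw [Finset.sum_eq_single k, pderiv_X_self, map_one, mul_one, mul_comm]
      · intro j _ hj
        rw [pderiv_X_of_ne hj.symm, map_zero, mul_zero, mul_zero]
      · exact fun h => absurd (Finset.mem_univ k) h
    simp only [map_mul, pderiv_mul, map_add, mul_add, Finset.sum_add_distrib, hX, hp,
      pderiv_linSubst_X, Finset.sum_mul, mul_assoc]

theorem apolar_linSubst (L : Matrix σ σ R) (p q : MvPolynomial σ R) :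
    apolar (linSubst L p) q = apolar p (linSubst Lᵀ q) := by
  induction p using MvPolynomial.induction_on generalizing q with
  | C c =>
    have hzero : coeff 0 (linSubst Lᵀ q) = coeff 0 q := by
      rw [← constantCoeff_eq, ← eval_zero, eval_linSubst, mulVec_zero]
    rw [algHom_C, algebraMap_eq, C_apply, apolar_monomial, apolar_monomial, hzero]
  | add p p' h h' => simp only [map_add, LinearMap.add_apply, h, h']
  | mul_X p i hp =>
    simp only [apolar_mul_X, pderiv_linSubst, map_mul, linSubst_X, Finset.mul_sum, map_sum,
      LinearMap.sum_apply]
    refine Finset.sum_congr rfl fun j _ => ?_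
    rw [mul_left_comm, ← smul_eq_C_mul, map_smul, LinearMap.smul_apply, apolar_mul_X, hp,
      ← smul_eq_C_mul, map_smul, transpose_apply]

theorem totalDegree_linSubst_le (L : Matrix σ σ R) (p : MvPolynomial σ R) :
    (linSubst L p).totalDegree ≤ p.totalDegree := by
  conv_lhs => rw [← sum_homogeneousComponent p, map_sum]
  refine totalDegree_finsetSum_le fun i hi => ?_
  exact (isHomogeneous_linSubst L (homogeneousComponent_isHomogeneous i p)).totalDegree_le.trans
    (Nat.lt_succ_iff.1 (Finset.mem_range.1 hi))

end Apolar

section PairPolynomial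

variable {n : ℕ} {R S : Type*} [CommRing R] [CommRing S]

/-- Polynomials in the entries of two `n × n` matrices, which are stacked on top of each other. -/
abbrev PairPolynomial (n : ℕ) (R : Type*) [CommRing R] : Type _ :=
  MvPolynomial ((Fin n ⊕ Fin n) × Fin n) R

theorem pairPolynomial_ext {p q : PairPolynomial n ℂ}
    (h : ∀ X Y, matrixEval (fromRows X Y) p = matrixEval (fromRows X Y) q) : p = q := by
  refine MvPolynomial.funext fun x => ?_
  have hx := h (of fun i j => x (.inl i, j)) (of fun i j => x (.inr i, j))
  have hrows : (fun k : (Fin n ⊕ Fin n) × Fin n => fromRows (of fun i j => x (.inl i, j))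
      (of fun i j => x (.inr i, j)) k.1 k.2) = x := by
    ext ⟨i | i, j⟩ <;> rfl
  rw [← hrows]
  exact hx

/-- The product of a polynomial in the first matrix and a polynomial in the second one. -/
noncomputable def pairProduct (p q : MvPolynomial (Fin n × Fin n) R) : PairPolynomial n R :=
  rename (Prod.map .inl id) p * rename (Prod.map .inr id) q

theorem matrixEval_pairProduct (X Y : Matrix (Fin n) (Fin n) R)
    (p q : MvPolynomial (Fin n × Fin n) R) :
    matrixEval (fromRows X Y) (pairProduct p q) = matrixEval X p * matrixEval Y q := by
  rw [pairProduct, map_mul, matrixEval, aeval_rename, aeval_rename]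
  rfl

theorem map_pairProduct (φ : R →+* S) (p q : MvPolynomial (Fin n × Fin n) R) :
    (pairProduct p q).map φ = pairProduct (p.map φ) (q.map φ) := by
  rw [pairProduct, map_mul, map_rename, map_rename, pairProduct]

/-- The action of pairs of matrices on polynomials by left translation, transposed so as to be
covariant: `(g, h)` takes `f` to `(X, Y) ↦ f (gᵀ * X, hᵀ * Y)`. -/
noncomputable def pairTranslation (n : ℕ) :
    Representation ℂ (SL n × SL n) (PairPolynomial n ℂ) where
  toFun g := (linSubst (fromBlocks g.1.valᵀ 0 0 g.2.valᵀ ⊗ₖ 1)).toLinearMap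
  map_one' := by
    refine LinearMap.ext fun p => ?_
    simp only [Prod.fst_one, Prod.snd_one, Matrix.SpecialLinearGroup.coe_one, transpose_one,
      fromBlocks_one, one_kronecker_one, AlgHom.toLinearMap_apply, linSubst_one,
      Module.End.one_apply]
  map_mul' g h := by
    refine LinearMap.ext fun p => ?_
    simp only [Prod.fst_mul, Prod.snd_mul, Matrix.SpecialLinearGroup.coe_mul, transpose_mul,
      AlgHom.toLinearMap_apply, Module.End.mul_apply, linSubst_linSubst, ← mul_kronecker_mul,
      fromBlocks_multiply, mul_one, mul_zero, zero_mul, add_zero, zero_add]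

theorem matrixEval_pairTranslation (g : SL n × SL n) (X Y : Matrix (Fin n) (Fin n) ℂ)
    (p : PairPolynomial n ℂ) :
    matrixEval (fromRows X Y) (pairTranslation n g p) =
      matrixEval (fromRows (g.1.valᵀ * X) (g.2.valᵀ * Y)) p := by
  refine (matrixEval_linSubst_kronecker _ _ _ _).trans ?_
  rw [transpose_one, Matrix.mul_one, fromBlocks_mul_fromRows]
  simp only [Matrix.zero_mul, add_zero, zero_add]

theorem pairTranslation_pairProduct (g : SL n × SL n) (p q : MvPolynomial (Fin n × Fin n) ℂ) :
    pairTranslation n g (pairProduct p q) =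
      pairProduct (linSubst (g.1.valᵀ ⊗ₖ 1) p) (linSubst (g.2.valᵀ ⊗ₖ 1) q) := by
  refine pairPolynomial_ext fun X Y => ?_
  simp only [matrixEval_pairTranslation, matrixEval_pairProduct, matrixEval_linSubst_kronecker,
    transpose_one, mul_one]

theorem apolar_pairTranslation (g : SL n × SL n) (p q : PairPolynomial n ℂ) :
    apolar (pairTranslation n g p) q =
      apolar p (pairTranslation n (g.1.transpose, g.2.transpose) q) := by
  refine (apolar_linSubst _ p q).trans ?_
  rw [← kroneckerMap_transpose, fromBlocks_transpose, transpose_one, transpose_zero]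
  rfl

theorem apolar_pairProduct_linSubst (D : PairPolynomial n ℂ) (g h : SL n)
    (p q : MvPolynomial (Fin n × Fin n) ℂ) :
    apolar D (pairProduct (linSubst (g.val ⊗ₖ 1) p) (linSubst (h.val ⊗ₖ 1) q)) =
      apolar (pairTranslation n (g, h) D) (pairProduct p q) := by
  rw [apolar_pairTranslation, pairTranslation_pairProduct]
  rfl

theorem totalDegree_pairTranslation_le (g : SL n × SL n) (p : PairPolynomial n ℂ) :
    (pairTranslation n g p).totalDegree ≤ p.totalDegree :=
  totalDegree_linSubst_le _ p

end PairPolynomial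

section HighestWeightPolynomial

variable {n : ℕ} {a b : Fin n → ℕ}

/-- The product of the power functions of weights `a` and `b` of two generic matrices. -/
noncomputable def powerPair (a b : Fin n → ℕ) (R : Type*) [CommRing R] : PairPolynomial n R :=
  pairProduct (powerFunction a (mvPolynomialX (Fin n) (Fin n) R))
    (powerFunction b (mvPolynomialX (Fin n) (Fin n) R))

theorem matrixEval_powerPair (a b : Fin n → ℕ) {R : Type*} [CommRing R]
    (X Y : Matrix (Fin n) (Fin n) R) :
    matrixEval (fromRows X Y) (powerPair a b R) = powerFunction a X * powerFunction b Y := by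
  rw [powerPair, matrixEval_pairProduct, matrixEval_powerFunction, matrixEval_powerFunction]

theorem map_powerPair (a b : Fin n → ℕ) {R S : Type*} [CommRing R] [CommRing S] (φ : R →+* S) :
    (powerPair a b R).map φ = powerPair a b S := by
  have hgeneric : (mvPolynomialX (Fin n) (Fin n) R).map (MvPolynomial.map φ) =
      mvPolynomialX (Fin n) (Fin n) S := by
    ext1 i j
    exact map_X φ (i, j)
  rw [powerPair, map_pairProduct, map_powerFunction, map_powerFunction, hgeneric, powerPair]

theorem powerPair_ne_zero (ha : Antitone a) (hb : Antitone b) {R : Type*} [CommRing R]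
    [Nontrivial R] : powerPair a b R ≠ 0 := by
  intro hzero
  have hone := matrixEval_powerPair a b (1 : Matrix (Fin n) (Fin n) R) 1
  rw [hzero, map_zero, powerFunction_one ha, powerFunction_one hb, mul_one] at hone
  exact zero_ne_one hone

-- The apolar form is definite on integral polynomials.
theorem apolar_powerPair_ne_zero (ha : Antitone a) (hb : Antitone b) :
    apolar (powerPair a b ℂ) (powerPair a b ℂ) ≠ 0 := by
  rw [← map_powerPair a b (Int.castRingHom ℂ), ← map_apolar]
  exact Int.cast_ne_zero.2 (apolar_self_pos (powerPair_ne_zero ha hb)).ne'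

/-- The polynomials which transform under right multiplication by pairs of upper triangular
matrices by the weights `a` and `b`. -/
def covariantPolynomials (a b : Fin n → ℕ) : Submodule ℂ (PairPolynomial n ℂ) where
  carrier := {f | ∀ X Y y z : Matrix (Fin n) (Fin n) ℂ, y.IsUpperTriangular →
    z.IsUpperTriangular → matrixEval (fromRows (X * y) (Y * z)) f =
      (∏ i, y i i ^ a i) * (∏ i, z i i ^ b i) * matrixEval (fromRows X Y) f}
  zero_mem' X Y y z _ _ := by simp only [map_zero, mul_zero]
  add_mem' hf hg X Y y z hy hz := by
    rw [map_add, map_add, hf X Y y z hy hz, hg X Y y z hy hz, mul_add]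
  smul_mem' c f hf X Y y z hy hz := by
    rw [map_smul, map_smul, hf X Y y z hy hz, smul_eq_mul, smul_eq_mul, mul_left_comm]

theorem pairTranslation_mem_covariantPolynomials {f : PairPolynomial n ℂ}
    (hf : f ∈ covariantPolynomials a b) (g : SL n × SL n) :
    pairTranslation n g f ∈ covariantPolynomials a b := fun X Y y z hy hz => by
  rw [matrixEval_pairTranslation, matrixEval_pairTranslation, ← mul_assoc, ← mul_assoc,
    hf _ _ y z hy hz]

theorem eq_zero_of_forall_matrixEval_eq_zero {f : PairPolynomial n ℂ}
    (hf : ∀ X Y, (∀ k, leadingMinor k X ≠ 0) → (∀ k, leadingMinor k Y ≠ 0) →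
      matrixEval (fromRows X Y) f = 0) : f = 0 := by
  let minors : MvPolynomial (Fin n × Fin n) ℂ :=
    ∏ k, leadingMinor k (mvPolynomialX (Fin n) (Fin n) ℂ)
  have hminors (X : Matrix (Fin n) (Fin n) ℂ) :
      matrixEval X minors = ∏ k, leadingMinor k X := by
    simp only [minors, map_prod, matrixEval_leadingMinor]
  have hne : pairProduct minors minors ≠ 0 := by
    intro hzero
    have hone := matrixEval_pairProduct (1 : Matrix (Fin n) (Fin n) ℂ) 1 minors minors
    simp only [hzero, map_zero, hminors, leadingMinor_one, Finset.prod_const_one, mul_one] at hone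
    exact zero_ne_one hone
  refine (mul_eq_zero.1 (pairPolynomial_ext fun X Y => ?_)).resolve_left hne
  rw [map_mul, matrixEval_pairProduct, hminors, hminors, map_zero]
  by_cases hX : ∏ k, leadingMinor k X = 0
  · rw [hX, zero_mul, zero_mul]
  by_cases hY : ∏ k, leadingMinor k Y = 0
  · rw [hY, mul_zero, zero_mul]
  rw [hf X Y (fun k => Finset.prod_ne_zero_iff.1 hX k (Finset.mem_univ k))
    fun k => Finset.prod_ne_zero_iff.1 hY k (Finset.mem_univ k), mul_zero]

theorem prod_mul_powerFunction_eq_one (ha : Antitone a) {X y : Matrix (Fin n) (Fin n) ℂ}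
    (hy : y.IsUpperTriangular) (hXy : (X * y).IsLowerTriangular) (hdiag : ∀ i, (X * y) i i = 1) :
    (∏ i, y i i ^ a i) * powerFunction a X = 1 := by
  rw [← powerFunction_mul ha X hy, ← mul_one (X * y), powerFunction_mul_left ha 1 hXy,
    powerFunction_one ha]
  simp only [hdiag, one_pow, Finset.prod_const_one, mul_one]

theorem exists_slIsUniUpper_transpose_eq {y : Matrix (Fin n) (Fin n) ℂ}
    (hy : y.IsLowerTriangular) (hdiag : ∀ i, y i i = 1) :
    ∃ g : SL n, SLIsUniUpper g ∧ g.valᵀ = y := by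
  have hdet : yᵀ.det = 1 := by
    rw [det_transpose, det_of_isLowerTriangular y hy]
    exact Finset.prod_eq_one fun i _ => hdiag i
  exact ⟨⟨yᵀ, hdet⟩, ⟨hdiag, fun i j hij => hy hij⟩, rfl⟩

theorem eq_smul_powerPair_of_forall_pairTranslation_eq (ha : Antitone a) (hb : Antitone b)
    {f : PairPolynomial n ℂ} (hf : f ∈ covariantPolynomials a b)
    (hfix : ∀ g h, SLIsUniUpper g → SLIsUniUpper h → pairTranslation n (g, h) f = f) :
    f = matrixEval (fromRows 1 1) f • powerPair a b ℂ := by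
  refine sub_eq_zero.1 (eq_zero_of_forall_matrixEval_eq_zero fun X Y hX hY => ?_)
  obtain ⟨y, hy, hXy, hXy1⟩ := exists_isUpperTriangular_mul_isLowerTriangular hX
  obtain ⟨z, hz, hYz, hYz1⟩ := exists_isUpperTriangular_mul_isLowerTriangular hY
  obtain ⟨g, hg, hgX⟩ := exists_slIsUniUpper_transpose_eq hXy hXy1
  obtain ⟨h, hh, hhY⟩ := exists_slIsUniUpper_transpose_eq hYz hYz1
  have hval : matrixEval (fromRows 1 1) f =
      (∏ i, y i i ^ a i) * (∏ i, z i i ^ b i) * matrixEval (fromRows X Y) f := by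
    rw [← hf X Y y z hy hz, ← hgX, ← hhY]
    conv_lhs => rw [← hfix g h hg hh, matrixEval_pairTranslation, mul_one, mul_one]
  rw [map_sub, map_smul, matrixEval_powerPair, hval, smul_eq_mul, sub_eq_zero]
  calc matrixEval (fromRows X Y) f
      = (∏ i, y i i ^ a i) * powerFunction a X * ((∏ i, z i i ^ b i) * powerFunction b Y) *
          matrixEval (fromRows X Y) f := by
        rw [prod_mul_powerFunction_eq_one ha hy hXy hXy1,
          prod_mul_powerFunction_eq_one hb hz hYz hYz1, one_mul, one_mul]
    _ = _ := by ring

end HighestWeightPolynomial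

section Reproducing

variable {n : ℕ} {a b : Fin n → ℕ}

theorem exists_ne_zero_forall_apply_prod_eq {X : Type*} [AddCommGroup X] [Module ℂ X]
    [FiniteDimensional ℂ X] [Nontrivial X] (τ : Representation ℂ (SL n × SL n) X) :
    ∃ x, x ≠ 0 ∧ ∀ g h, SLIsUniUpper g → SLIsUniUpper h → τ (g, h) x = x := by
  have hcomm (g h : SL n) : τ (g, h) = τ (g, 1) ∘ₗ τ (1, h) := by
    rw [← Module.End.mul_eq_comp, ← map_mul, Prod.mk_mul_mk, mul_one, one_mul]
  have hcomm' (g h : SL n) : τ (g, h) = τ (1, h) ∘ₗ τ (g, 1) := by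
    rw [← Module.End.mul_eq_comp, ← map_mul, Prod.mk_mul_mk, mul_one, one_mul]
  let I : Submodule ℂ X := ⨅ g : {g : SL n // SLIsUniUpper g}, LinearMap.eqLocus (τ (g, 1)) .id
  have hI {x : X} : x ∈ I ↔ ∀ g, SLIsUniUpper g → τ (g, 1) x = x := by
    simp [I]
  obtain ⟨x, hx0, hx⟩ := exists_ne_zero_forall_apply_eq (τ.comp (MonoidHom.inl (SL n) (SL n)))
  have : Nontrivial I := (Submodule.nontrivial_iff_ne_bot).2
    ((Submodule.ne_bot_iff I).2 ⟨x, hI.2 hx, hx0⟩)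
  let R : Representation ℂ (SL n) X := τ.comp (MonoidHom.inr (SL n) (SL n))
  have hRI (h : SL n) (x : X) (hx : x ∈ I) : R h x ∈ I := hI.2 fun g hg => by
    change τ (g, 1) (τ (1, h) x) = τ (1, h) x
    rw [← LinearMap.comp_apply, ← hcomm, hcomm', LinearMap.comp_apply, hI.1 hx g hg]
  obtain ⟨y, hy0, hy⟩ := exists_ne_zero_forall_apply_eq (R.subrepresentation I hRI)
  refine ⟨y, fun h => hy0 (Subtype.ext h), fun g h hg hh => ?_⟩
  have hyh : τ (1, h) y = y := congrArg Subtype.val (hy h hh)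
  rw [hcomm, LinearMap.comp_apply, hyh, hI.1 y.2 g hg]

theorem eq_zero_of_forall_apolar_powerPair_eq_zero (ha : Antitone a) (hb : Antitone b)
    {f : PairPolynomial n ℂ} (hf : f ∈ covariantPolynomials a b)
    (hzero : ∀ g, apolar (pairTranslation n g f) (powerPair a b ℂ) = 0) : f = 0 := by
  by_contra hf0
  let M : Submodule ℂ (PairPolynomial n ℂ) := restrictTotalDegree _ ℂ f.totalDegree ⊓
    covariantPolynomials a b ⊓
      ⨅ g, LinearMap.ker (apolar.flip (powerPair a b ℂ) ∘ₗ pairTranslation n g)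
  have hM {p : PairPolynomial n ℂ} : p ∈ M ↔
      (p.totalDegree ≤ f.totalDegree ∧ p ∈ covariantPolynomials a b) ∧
        ∀ g, apolar (pairTranslation n g p) (powerPair a b ℂ) = 0 := by
    simp [M, mem_restrictTotalDegree]
  have hfin : FiniteDimensional ℂ M :=
    Submodule.finiteDimensional_of_le (inf_le_left.trans inf_le_left)
  have hnontrivial : Nontrivial M := (Submodule.nontrivial_iff_ne_bot).2
    ((Submodule.ne_bot_iff M).2 ⟨f, hM.2 ⟨⟨le_rfl, hf⟩, hzero⟩, hf0⟩)
  obtain ⟨x, hx0, hx⟩ := exists_ne_zero_forall_apply_prod_eq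
    ((pairTranslation n).subrepresentation M fun g p hp => hM.2 ⟨⟨
      (totalDegree_pairTranslation_le g p).trans (hM.1 hp).1.1,
      pairTranslation_mem_covariantPolynomials (hM.1 hp).1.2 g⟩, fun g' => by
        rw [← Module.End.mul_apply, ← map_mul]
        exact (hM.1 hp).2 _⟩)
  obtain ⟨⟨-, hxcov⟩, hxzero⟩ := hM.1 x.2
  have hxpow := eq_smul_powerPair_of_forall_pairTranslation_eq ha hb hxcov fun g h hg hh =>
    congrArg Subtype.val (hx g h hg hh)
  have hapolar := hxzero 1
  rw [map_one, Module.End.one_apply, hxpow, map_smul, LinearMap.smul_apply, smul_eq_zero,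
    or_iff_left (apolar_powerPair_ne_zero ha hb)] at hapolar
  rw [hapolar, zero_smul] at hxpow
  exact hx0 (Subtype.ext hxpow)

end Reproducing

section Occurs

variable {n : ℕ} {V W : Type*} [AddCommGroup V] [Module ℂ V] [AddCommGroup W] [Module ℂ W]
  {ρ : Representation ℂ (SL n) V} {σ : Representation ℂ (SL n) W} {a b c : Fin n → ℕ}

theorem occurs_of_forall_isUpperTriangular {x : V} (hx : x ≠ 0)
    (hupper : ∀ y : SL n, y.val.IsUpperTriangular → ρ y x = (∏ i, y.val i i ^ c i) • x) :
    Occurs ρ fun i => (c i : ℤ) := by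
  refine ⟨x, hx, fun g hg => ?_, fun g hg => ?_⟩
  · rw [hupper g fun i j hij => hg.2 i j hij]
    simp only [hg.1, one_pow, Finset.prod_const_one, one_smul]
  · rw [hupper g fun i j hij => hg i j (ne_of_gt hij)]
    simp only [zpow_natCast]

variable [FiniteDimensional ℂ V] [FiniteDimensional ℂ W]

theorem occurs_of_mem_covariantPolynomials (hρ : RepIsIrreducible ρ) (hσ : RepIsIrreducible σ)
    (ha : Antitone a) (hb : Antitone b) (hρa : Occurs ρ fun i => (a i : ℤ))
    (hσb : Occurs σ fun i => (b i : ℤ)) {D : PairPolynomial n ℂ}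
    (hD : D ∈ covariantPolynomials a b) (hD0 : D ≠ 0)
    (hleft : ∀ y : SL n, y.val.IsUpperTriangular →
      pairTranslation n (y, y) D = (∏ i, y.val i i ^ c i) • D) :
    Occurs (tensorRep2 ρ σ) fun i => (c i : ℤ) := by
  obtain ⟨v, hv⟩ := hρa
  obtain ⟨w, hw⟩ := hσb
  obtain ⟨P, hP, ξ₀, hξ₀⟩ := exists_polynomialMap hρ ha hv
  obtain ⟨Q, hQ, η₀, hη₀⟩ := exists_polynomialMap hσ hb hw
  let B : Dual ℂ V →ₗ[ℂ] Dual ℂ W →ₗ[ℂ] ℂ :=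
    ((LinearMap.mul ℂ (PairPolynomial n ℂ)).compl₁₂ ((rename (Prod.map .inl id)).toLinearMap ∘ₗ P)
      ((rename (Prod.map .inr id)).toLinearMap ∘ₗ Q)).compr₂ (apolar D)
  have hx (ξ : Dual ℂ V) (η : Dual ℂ W) :
      dualPairing (dualPairing.symm B) ξ η = apolar D (pairProduct (P ξ) (Q η)) := by
    rw [LinearEquiv.apply_symm_apply]
    rfl
  have htranslate (ξ : Dual ℂ V) (η : Dual ℂ W) (g h : SL n) :
      dualPairing (dualPairing.symm B) (ξ ∘ₗ ρ g) (η ∘ₗ σ h) =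
        apolar (pairTranslation n (g, h) D) (pairProduct (P ξ) (Q η)) := by
    rw [hx, hP, hQ, apolar_pairProduct_linSubst]
  refine occurs_of_forall_isUpperTriangular (x := dualPairing.symm B) (fun hzero => hD0 ?_)
    fun y hy => dualPairing.injective (LinearMap.ext₂ fun ξ η => ?_)
  · refine eq_zero_of_forall_apolar_powerPair_eq_zero ha hb hD fun g => ?_
    rw [powerPair, ← hξ₀, ← hη₀, ← htranslate, hzero, map_zero, LinearMap.zero_apply,
      LinearMap.zero_apply]
  · calc dualPairing (TensorProduct.map (ρ y) (σ y) (dualPairing.symm B)) ξ η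
        = apolar (pairTranslation n (y, y) D) (pairProduct (P ξ) (Q η)) := by
          rw [dualPairing_map, htranslate]
      _ = _ := by
          rw [hleft y hy, map_smul, map_smul, LinearMap.smul_apply, LinearMap.smul_apply,
            LinearMap.smul_apply, hx]

theorem occurs_of_tripleDet_ne_zero (hρ : RepIsIrreducible ρ) (hσ : RepIsIrreducible σ)
    (ha : Antitone a) (hb : Antitone b) (hc : Antitone c) (hρa : Occurs ρ fun i => (a i : ℤ))
    (hσb : Occurs σ fun i => (b i : ℤ)) {r : ℕ} (har : ∀ i, a i ≤ r) (hbr : ∀ i, b i ≤ r)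
    (hcr : ∀ i, c i ≤ r) {e : ConditionIndex (tripleWeight a b c r) r ≃ Fin r × Fin n}
    {A : Fin 3 → Matrix (Fin r) (Fin r) ℂ} {X Y : Matrix (Fin n) (Fin n) ℂ}
    (hXY : tripleDet _ e A X Y ≠ 0) : Occurs (tensorRep2 ρ σ) fun i => (c i : ℤ) := by
  let D : PairPolynomial n ℂ := tripleDet _ e (fun i => (A i).map C)
    (mvPolynomialX (Fin n ⊕ Fin n) (Fin n) ℂ).toRows₁
    (mvPolynomialX (Fin n ⊕ Fin n) (Fin n) ℂ).toRows₂
  have hD (X Y : Matrix (Fin n) (Fin n) ℂ) :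
      matrixEval (fromRows X Y) D = tripleDet _ e A X Y := by
    have hgeneric := mvPolynomialX_map_matrixEval (fromRows X Y)
    refine (map_tripleDet (matrixEval (fromRows X Y)).toRingHom e _ _ _).trans ?_
    congr 1
    · ext i k l
      exact aeval_C _ _
    · exact congrArg toRows₁ hgeneric
    · exact congrArg toRows₂ hgeneric
  refine occurs_of_mem_covariantPolynomials hρ hσ ha hb hρa hσb (D := D) (fun X Y y z hy hz => ?_)
    (fun hzero => hXY ?_) fun y hy => pairPolynomial_ext fun X Y => ?_
  · rw [hD, hD, tripleDet_mul_right ha hb hc har hbr e A X Y hy hz]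
  · rw [← hD, hzero, map_zero]
  · rw [matrixEval_pairTranslation, map_smul, hD, hD, tripleDet_mul_left ha hb hc har hbr e A X Y
      hcr hy.transpose (y.val.det_transpose.trans y.2)]
    rfl

end Occurs

theorem IsTriangularCovariant.exists_tripleDet_ne_zero {n m r : ℕ} {a b c : Fin n → ℕ}
    {F : Matrix (Fin n) (Fin n) ℂ × Matrix (Fin n) (Fin n) ℂ → ℂ}
    (hF : IsTriangularCovariant (m • a) (m • b) (m • c) F) (hcont : Continuous F) (hm : 0 < m)
    (ha : Antitone a) (hb : Antitone b) (hc : Antitone c) (har : ∀ i, a i ≤ r)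
    (hbr : ∀ i, b i ≤ r) (hcr : ∀ i, c i ≤ r) (hsum : ∑ i, a i + ∑ i, b i = ∑ i, c i)
    {g h : SL n} (hgh : F (g.val, h.val) ≠ 0) :
    ∃ (e : ConditionIndex (tripleWeight a b c r) r ≃ Fin r × Fin n)
      (A : Fin 3 → Matrix (Fin r) (Fin r) ℂ) (X Y : Matrix (Fin n) (Fin n) ℂ),
      tripleDet _ e A X Y ≠ 0 := by
  refine LittlewoodRichardson.exists_tripleDet_ne_zero (antitone_tripleWeight ha hb hc)
    (tripleWeight_le har hbr) (sum_tripleWeight hcr hsum)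
    (fun i => linearIndependent_euclideanCol_iff.2 ?_)
    (hF.isSemistable hm hcont ha hb hc hcr hsum hgh)
  fin_cases i
  · exact g.2.trans_ne one_ne_zero
  · exact h.2.trans_ne one_ne_zero
  · exact left_ne_zero_of_mul ((det_revMatrix_mul_self n ℂ).trans_ne one_ne_zero)

end LittlewoodRichardson

theorem IsPartition.antitone {n : ℕ} {a : Fin n → ℕ} (ha : IsPartition a) : Antitone a :=
  fun i j => ha i j

open LittlewoodRichardson

theorem saturation_LR (n : ℕ) (lam mu nu : Fin n → ℕ)
    (hlam : IsPartition lam) (hmu : IsPartition mu) (hnu : IsPartition nu)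
    (hsize : ∑ j, lam j + ∑ j, mu j = ∑ j, nu j)
    (m : ℕ) (hm : 0 < m)
    -- `c^{mν}_{mλ,mμ} ≠ 0`: `V(mν)` occurs in `V(mλ) ⊗ V(mμ)`
    (V W : Type*) [AddCommGroup V] [Module ℂ V] [FiniteDimensional ℂ V]
    [AddCommGroup W] [Module ℂ W] [FiniteDimensional ℂ W]
    (ρ : Representation ℂ (SL n) V) (σ : Representation ℂ (SL n) W)
    (hρ : RepIsIrreducible ρ) (hσ : RepIsIrreducible σ)
    (hρw : Occurs ρ (fun j => (m * lam j : ℤ))) (hσw : Occurs σ (fun j => (m * mu j : ℤ)))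
    (hocc : Occurs (tensorRep2 ρ σ) (fun j => (m * nu j : ℤ))) :
    -- `c^ν_{λμ} ≠ 0`: `V(ν)` occurs in `V(λ) ⊗ V(μ)`
    ∀ (V' W' : Type*) [AddCommGroup V'] [Module ℂ V'] [FiniteDimensional ℂ V']
      [AddCommGroup W'] [Module ℂ W'] [FiniteDimensional ℂ W']
      (ρ' : Representation ℂ (SL n) V') (σ' : Representation ℂ (SL n) W'),
      RepIsIrreducible ρ' → RepIsIrreducible σ' →
      Occurs ρ' (fun j => (lam j : ℤ)) → Occurs σ' (fun j => (mu j : ℤ)) →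
      Occurs (tensorRep2 ρ' σ') (fun j => (nu j : ℤ)) := by
  intro V' W' _ _ _ _ _ _ ρ' σ' hρ' hσ' hρ'w hσ'w
  have hbound (a : Fin n → ℕ) (j : Fin n) : a j ≤ ∑ j, a j :=
    Finset.single_le_sum (fun _ _ => Nat.zero_le _) (Finset.mem_univ j)
  have hlam_le (j : Fin n) : lam j ≤ ∑ j, nu j := (hbound lam j).trans (by lia)
  have hmu_le (j : Fin n) : mu j ≤ ∑ j, nu j := (hbound mu j).trans (by lia)
  have hcast (a : Fin n → ℕ) : (fun j => (m * a j : ℤ)) = fun j => ((m • a) j : ℤ) :=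
    funext fun j => (Nat.cast_mul m (a j)).symm
  rw [hcast] at hρw hσw hocc
  obtain ⟨F, hcont, hF, g, h, hgh⟩ := exists_isTriangularCovariant hρ hσ
    (hlam.antitone.const_smul m.zero_le) (hmu.antitone.const_smul m.zero_le) hρw hσw hocc
  obtain ⟨e, A, X, Y, hXY⟩ := hF.exists_tripleDet_ne_zero hcont hm hlam.antitone hmu.antitone
    hnu.antitone hlam_le hmu_le (hbound nu) hsize hgh
  exact occurs_of_tripleDet_ne_zero hρ' hσ' hlam.antitone hmu.antitone hnu.antitone hρ'w hσ'w
    hlam_le hmu_le (hbound nu) hXY
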